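/- Let f:ℂ→Ĉ be a transcendental meromorphic function and suppose W is a Baker domain of f such that f^{nk}|_W → ∞ locally uniformly as n → ∞, for some k ≥ 1. Then there exists a sequence (p_n) of points of the postsingular set P(f), with all p_n ∈ ℂ, such that |p_n| → ∞, sup_n |p_{n+1}|/|p_n| < ∞, and dist(p_n, W)/|p_n| → 0 as n → ∞. -/

import Mathlib

open Set Metric Filter Topology OnePoint

open scoped ENNReal

/-- The finite part of a point of the Riemann sphere `Ĉ = OnePoint ℂ` (junk value `0` at `∞`). -/
noncomputable def finPart (u : OnePoint ℂ) : ℂ := Option.getD u 0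

/-- The inversion `u ↦ 1/u` of the Riemann sphere, exchanging `0` and `∞`. -/
noncomputable def sphereInv : OnePoint ℂ → OnePoint ℂ := fun u =>
  Option.casesOn u ((0 : ℂ) : OnePoint ℂ)
    (fun z => if z = 0 then (∞ : OnePoint ℂ) else ((z⁻¹ : ℂ) : OnePoint ℂ))

/-- The coordinate chart of `Ĉ` adapted to the point `v`: the identity chart if `v` is finite,
and the chart `u ↦ 1/u` at `∞`. -/
noncomputable def sphereChart (v : OnePoint ℂ) : OnePoint ℂ → ℂ :=
  Option.casesOn v (fun u => finPart (sphereInv u)) (fun _ => fun u => finPart u)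

/-- The local parametrization of `Ĉ` near the point `u`: `x ↦ x` near a finite point and
`x ↦ 1/x` near `∞`. -/
noncomputable def sphereParam (u : OnePoint ℂ) : ℂ → OnePoint ℂ :=
  Option.casesOn u (fun x => sphereInv ((x : OnePoint ℂ))) (fun _ => fun x => (x : OnePoint ℂ))

/-- The chart coordinate of the point `u` of `Ĉ` (`0` for `u = ∞`). -/
noncomputable def sphereCoord (u : OnePoint ℂ) : ℂ :=
  Option.casesOn u (0 : ℂ) (fun z => z)

/-- The chordal (spherical) metric on the Riemann sphere `Ĉ = OnePoint ℂ`. -/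
noncomputable def chordalDist (u v : OnePoint ℂ) : ℝ :=
  Option.casesOn u
    (Option.casesOn v (0 : ℝ) fun w => 2 / Real.sqrt (1 + ‖w‖ ^ 2))
    (fun z => Option.casesOn v (2 / Real.sqrt (1 + ‖z‖ ^ 2))
      (fun w => 2 * dist z w / (Real.sqrt (1 + ‖z‖ ^ 2) * Real.sqrt (1 + ‖w‖ ^ 2))))

/-- A map `F : Ĉ → Ĉ` is holomorphic (meromorphic) at `u`: it is continuous at `u` and its
representative in the standard charts is analytic at the coordinate of `u`. -/
def SphereAnalyticAt (F : OnePoint ℂ → OnePoint ℂ) (u : OnePoint ℂ) : Prop :=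
  ContinuousAt F u ∧
    AnalyticAt ℂ (fun x : ℂ => sphereChart (F u) (F (sphereParam u x))) (sphereCoord u)

/-- A map `F : ℂ → Ĉ` is meromorphic at a point `z ∈ ℂ`: it is continuous at `z` and its
representative in the chart adapted to `F z` is analytic at `z`. -/
def SphereMeroAt (F : ℂ → OnePoint ℂ) (z : ℂ) : Prop :=
  ContinuousAt F z ∧ AnalyticAt ℂ (fun x : ℂ => sphereChart (F z) (F x)) z

/-- The family of iterates of `F` is equicontinuous on `N ⊆ Ĉ` w.r.t. the chordal metric. -/
def SphereEquicontOn (F : OnePoint ℂ → OnePoint ℂ) (N : Set (OnePoint ℂ)) : Prop :=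
  ∀ u ∈ N, ∀ ε > (0 : ℝ), ∃ δ > (0 : ℝ), ∀ v ∈ N, chordalDist u v < δ →
    ∀ n : ℕ, chordalDist (F^[n] u) (F^[n] v) < ε

/-- The Fatou set of a map `F` holomorphic on `V ⊆ Ĉ`: points having an open neighborhood `N`
such that either all iterates are defined on `N` (i.e. the orbit of `N` stays in `V`) and form
a normal (equicontinuous) family, or some iterated image of `N` avoids the closure of `V`. -/
def SphereFatou (F : OnePoint ℂ → OnePoint ℂ) (V : Set (OnePoint ℂ)) : Set (OnePoint ℂ) :=
  {u : OnePoint ℂ | ∃ N : Set (OnePoint ℂ), IsOpen N ∧ u ∈ N ∧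
    (((∀ n : ℕ, F^[n] '' N ⊆ V) ∧ SphereEquicontOn F N) ∨
      (∃ n : ℕ, (∀ k < n, F^[k] '' N ⊆ V) ∧ F^[n] '' N ⊆ (closure V)ᶜ))}

/-- `S` is the set of singular values of `F : V → Ĉ`: the smallest compact set `S` such that
`F : V ∩ F⁻¹(Ĉ∖S) → Ĉ∖S` is a covering map. -/
def SphereSingularSet (F : OnePoint ℂ → OnePoint ℂ) (V S : Set (OnePoint ℂ)) : Prop :=
  IsCompact S ∧
    (∃ h : MapsTo F (V ∩ F ⁻¹' Sᶜ) Sᶜ,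
      IsCoveringMap (MapsTo.restrict F (V ∩ F ⁻¹' Sᶜ) Sᶜ h)) ∧
    ∀ T : Set (OnePoint ℂ), IsCompact T →
      (∃ h : MapsTo F (V ∩ F ⁻¹' Tᶜ) Tᶜ,
        IsCoveringMap (MapsTo.restrict F (V ∩ F ⁻¹' Tᶜ) Tᶜ h)) → S ⊆ T

/-- The postsingular set of `F : V → Ĉ`: the closure of the forward orbit of the singular
values (iterated images taken where the iterates are defined). -/
def SpherePostsingular (F : OnePoint ℂ → OnePoint ℂ) (V S : Set (OnePoint ℂ)) :
    Set (OnePoint ℂ) :=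
  closure (⋃ n : ℕ, F^[n] '' {u : OnePoint ℂ | u ∈ S ∧ ∀ k < n, F^[k] u ∈ V})

/-- Extend a map `F : ℂ → Ĉ` to the sphere by the convention `∞ ↦ ∞` (so that iteration makes
sense; orbits that leave the domain of definition are sent to `∞`). -/
def totalize (F : ℂ → OnePoint ℂ) : OnePoint ℂ → OnePoint ℂ := fun u =>
  Option.casesOn u (∞ : OnePoint ℂ) F

/-- The Fatou set of a meromorphic function `F` on `V ⊆ ℂ`: points with an open neighborhood
`N` such that either all iterates are defined on `N` and form a normal (equicontinuous w.r.t.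
the chordal metric) family, or some iterated image of `N` avoids the closure of `V` in `Ĉ`. -/
def MeroFatou (F : ℂ → OnePoint ℂ) (V : Set ℂ) : Set ℂ :=
  {z : ℂ | ∃ N : Set ℂ, IsOpen N ∧ z ∈ N ∧
    (((∀ n : ℕ, (totalize F)^[n] '' ((fun t : ℂ => (t : OnePoint ℂ)) '' N) ⊆
          (fun t : ℂ => (t : OnePoint ℂ)) '' V) ∧
        SphereEquicontOn (totalize F) ((fun t : ℂ => (t : OnePoint ℂ)) '' N)) ∨
      (∃ n : ℕ, (∀ k < n, (totalize F)^[k] '' ((fun t : ℂ => (t : OnePoint ℂ)) '' N) ⊆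
          (fun t : ℂ => (t : OnePoint ℂ)) '' V) ∧
        (totalize F)^[n] '' ((fun t : ℂ => (t : OnePoint ℂ)) '' N) ⊆
          (closure ((fun t : ℂ => (t : OnePoint ℂ)) '' V))ᶜ))}

/-- `S` is the set of singular values of the meromorphic function `F : V → Ĉ`: the smallest
compact `S ⊆ Ĉ` such that `F : V ∩ F⁻¹(Ĉ∖S) → Ĉ∖S` is a covering map. -/
def MeroSingularSet (F : ℂ → OnePoint ℂ) (V : Set ℂ) (S : Set (OnePoint ℂ)) : Prop :=
  IsCompact S ∧
    (∃ h : MapsTo F (V ∩ F ⁻¹' Sᶜ) Sᶜ,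
      IsCoveringMap (MapsTo.restrict F (V ∩ F ⁻¹' Sᶜ) Sᶜ h)) ∧
    ∀ T : Set (OnePoint ℂ), IsCompact T →
      (∃ h : MapsTo F (V ∩ F ⁻¹' Tᶜ) Tᶜ,
        IsCoveringMap (MapsTo.restrict F (V ∩ F ⁻¹' Tᶜ) Tᶜ h)) → S ⊆ T

/-- The postsingular set of `F : V → Ĉ`: the closure of `⋃ₙ Fⁿ(S ∩ ℂ)`, the iterated images
being taken at the points where the iterates are defined. -/
def MeroPostsingular (F : ℂ → OnePoint ℂ) (V : Set ℂ) (S : Set (OnePoint ℂ)) :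
    Set (OnePoint ℂ) :=
  closure (⋃ n : ℕ, (totalize F)^[n] ''
    {u : OnePoint ℂ | u ∈ S ∧ u ≠ (∞ : OnePoint ℂ) ∧
      ∀ k < n, (totalize F)^[k] u ∈ (fun t : ℂ => (t : OnePoint ℂ)) '' V})

theorem Convex.isSimplyConnected' {Y : Set ℂ} (hY : Convex ℝ Y) (hne : Y.Nonempty) :
    IsSimplyConnected Y := by
  have := hY.contractibleSpace hne
  exact (inferInstance : SimplyConnectedSpace Y)

/-- A continuous logarithm of a holomorphic function is holomorphic. -/
theorem differentiableOn_of_exp_eq {Y : Set ℂ} (hYo : IsOpen Y) {h L : ℂ → ℂ}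
    (hh : DifferentiableOn ℂ h Y) (hL : ContinuousOn L Y)
    (hexp : ∀ z ∈ Y, Complex.exp (L z) = h z) : DifferentiableOn ℂ L Y := by
  intro z hz
  have hYz : Y ∈ 𝓝 z := hYo.mem_nhds hz
  have hLz : ContinuousAt L z := hL.continuousAt hYz
  have hhz : DifferentiableAt ℂ h z := hh.differentiableAt hYz
  have hne : h z ≠ 0 := hexp z hz ▸ Complex.exp_ne_zero _
  have hev : L =ᶠ[𝓝 z] fun x => L z + Complex.log (h x / h z) := by
    have h1 : ∀ᶠ x in 𝓝 z, L x ∈ ball (L z) 1 := hLz.eventually (ball_mem_nhds _ one_pos)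
    filter_upwards [h1, hYz] with x hx hxY
    have e : h x / h z = Complex.exp (L x - L z) := by
      rw [Complex.exp_sub, hexp x hxY, hexp z hz]
    have him : |(L x - L z).im| < 1 :=
      lt_of_le_of_lt (Complex.abs_im_le_norm _) (by rwa [mem_ball, dist_eq_norm] at hx)
    have hpi := Real.pi_gt_three
    rw [e, Complex.log_exp (by linarith [(abs_lt.1 him).1]) (by linarith [(abs_lt.1 him).2])]
    ring
  have : DifferentiableAt ℂ (fun x => L z + Complex.log (h x / h z)) z := by
    refine (DifferentiableAt.clog (hhz.div_const _) ?_).const_add _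
    rw [div_self hne]
    exact Complex.one_mem_slitPlane
  exact (this.congr_of_eventuallyEq hev).differentiableWithinAt

/-- Holomorphic logarithms on convex open sets, with prescribed value at a point. -/
theorem exists_holomorphic_log {Y : Set ℂ} (hY : Convex ℝ Y) (hYo : IsOpen Y) {h : ℂ → ℂ}
    (hh : DifferentiableOn ℂ h Y) (h0 : ∀ z ∈ Y, h z ≠ 0) {z₀ : ℂ} (hz₀ : z₀ ∈ Y) {w₀ : ℂ}
    (hw₀ : Complex.exp w₀ = h z₀) :
    ∃ L : ℂ → ℂ, DifferentiableOn ℂ L Y ∧ L z₀ = w₀ ∧ ∀ z ∈ Y, Complex.exp (L z) = h z := by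
  obtain ⟨L, hLc, hL⟩ := Complex.exists_continuousOn_eqOn_exp_comp
    (Convex.isSimplyConnected' hY ⟨z₀, hz₀⟩) hYo hh.continuousOn
    (by rintro ⟨z, hz, e⟩; exact h0 z hz e)
  have hL' : ∀ z ∈ Y, Complex.exp (L z) = h z := fun z hz => hL hz
  have hd := differentiableOn_of_exp_eq hYo hh hLc hL'
  refine ⟨fun z => L z + (w₀ - L z₀), hd.add_const _, by ring, fun z hz => ?_⟩
  rw [Complex.exp_add, Complex.exp_sub, hL' z hz, hL' z₀ hz₀, hw₀, div_self (h0 _ hz₀), mul_one]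

theorem exists_holomorphic_sqrt {Y : Set ℂ} (hY : Convex ℝ Y) (hYo : IsOpen Y) {h : ℂ → ℂ}
    (hh : DifferentiableOn ℂ h Y) (h0 : ∀ z ∈ Y, h z ≠ 0) {z₀ : ℂ} (hz₀ : z₀ ∈ Y) :
    ∃ s : ℂ → ℂ, DifferentiableOn ℂ s Y ∧ ∀ z ∈ Y, s z ^ 2 = h z := by
  obtain ⟨L, hd, -, hL⟩ := exists_holomorphic_log hY hYo hh h0 hz₀ (Complex.exp_log (h0 _ hz₀))
  refine ⟨fun z => Complex.exp (L z / 2), (hd.div_const 2).cexp, fun z hz => ?_⟩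
  rw [← Complex.exp_nat_mul, ← hL z hz]
  congr 1
  push_cast
  ring

/-- A holomorphic function omitting `±1` is the cosine of a holomorphic function. -/
theorem exists_holomorphic_arccos {Y : Set ℂ} (hY : Convex ℝ Y) (hYo : IsOpen Y) {h : ℂ → ℂ}
    (hh : DifferentiableOn ℂ h Y) (h1 : ∀ z ∈ Y, h z ≠ 1) (h2 : ∀ z ∈ Y, h z ≠ -1) {c : ℂ}
    (hc : c ∈ Y) :
    ∃ φ : ℂ → ℂ, DifferentiableOn ℂ φ Y ∧ ‖φ c‖ ≤ ‖h c‖ + 1 ∧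
      ∀ z ∈ Y, Complex.cos (Real.pi * φ z) = h z := by
  obtain ⟨s, hs, hsq⟩ := exists_holomorphic_sqrt (h := fun z => h z ^ 2 - 1) hY hYo
    ((hh.pow 2).sub_const 1) (fun z hz e => by
      have : (h z - 1) * (h z + 1) = 0 := by linear_combination e
      rcases mul_eq_zero.1 this with e | e
      · exact h1 z hz (by linear_combination e)
      · exact h2 z hz (by linear_combination e)) hc
  have hprod : ∀ z ∈ Y, (h z + s z) * (h z - s z) = 1 := fun z hz => by
    linear_combination - hsq z hz
  have hne : ∀ z ∈ Y, h z + s z ≠ 0 := fun z hz e => by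
    have := hprod z hz
    rw [e, zero_mul] at this
    exact zero_ne_one this
  obtain ⟨L, hd, hLc, hL⟩ := exists_holomorphic_log hY hYo (hh.add hs) hne hc
    (Complex.exp_log (hne c hc))
  have hpi : (Real.pi : ℂ) ≠ 0 := by exact_mod_cast Real.pi_ne_zero
  have hpiI : (Real.pi * Complex.I : ℂ) ≠ 0 := mul_ne_zero hpi Complex.I_ne_zero
  refine ⟨fun z => L z / (Real.pi * Complex.I), hd.div_const _, ?_, fun z hz => ?_⟩
  · have hs1 : ‖s c‖ ≤ ‖h c‖ + 1 := by
      have e : ‖s c‖ ^ 2 = ‖h c ^ 2 - 1‖ := by rw [← norm_pow, hsq c hc]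
      have e2 : ‖h c ^ 2 - 1‖ ≤ ‖h c‖ ^ 2 + 1 := by
        refine (norm_sub_le _ _).trans ?_
        simp
      nlinarith [norm_nonneg (s c), norm_nonneg (h c)]
    set w := h c + s c with hw
    have hw0 : w ≠ 0 := hne c hc
    have hwinv : w⁻¹ = h c - s c := inv_eq_of_mul_eq_one_right (hprod c hc)
    have hb1 : ‖w‖ ≤ 2 * ‖h c‖ + 1 := (norm_add_le _ _).trans (by linarith)
    have hb2 : ‖w‖⁻¹ ≤ 2 * ‖h c‖ + 1 := by
      rw [← norm_inv, hwinv]; exact (norm_sub_le _ _).trans (by linarith)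
    have hwpos : 0 < ‖w‖ := norm_pos_iff.2 hw0
    have hlog : |Real.log ‖w‖| ≤ 2 * ‖h c‖ := by
      rw [abs_le]
      constructor
      · have := Real.log_le_sub_one_of_pos (inv_pos.2 hwpos)
        rw [Real.log_inv] at this
        linarith
      · have := Real.log_le_sub_one_of_pos hwpos
        linarith
    have hLc' : ‖L c‖ ≤ 2 * ‖h c‖ + Real.pi := by
      rw [hLc]
      refine (Complex.norm_le_abs_re_add_abs_im _).trans ?_
      rw [Complex.log_re, Complex.log_im]
      exact add_le_add hlog (Complex.abs_arg_le_pi _)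
    rw [norm_div, norm_mul, Complex.norm_I, mul_one, Complex.norm_real, Real.norm_eq_abs,
      abs_of_pos Real.pi_pos, div_le_iff₀ Real.pi_pos]
    nlinarith [Real.pi_gt_three, norm_nonneg (h c)]
  · have e : (Real.pi : ℂ) * (L z / (Real.pi * Complex.I)) * Complex.I = L z := by
      field_simp
    rw [Complex.cos, neg_mul, e, Complex.exp_neg, hL z hz]
    have h3 : (h z + s z)⁻¹ = h z - s z := inv_eq_of_mul_eq_one_right (hprod z hz)
    simp only [Pi.add_apply] at *
    rw [h3]
    ring

/-- A weak form of Bloch's theorem. -/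
theorem norm_deriv_le_of_not_closedBall_subset {G : ℂ → ℂ} {c : ℂ} {R : ℝ}
    (hG : DifferentiableOn ℂ G (ball c R)) (hball : ∀ w, ¬ ball w 2 ⊆ G '' ball c R)
    {z : ℂ} (hz : z ∈ ball c R) : ‖deriv G z‖ * (R - dist z c) ≤ 120 := by
  have hdG : DifferentiableOn ℂ (deriv G) (ball c R) := hG.deriv isOpen_ball
  have key : ∀ r', 0 ≤ r' → r' < R → ∀ z ∈ closedBall c r', ‖deriv G z‖ * (r' - dist z c) ≤ 120 := by
    intro r' hr0 hr' z hz
    have hsub : closedBall c r' ⊆ ball c R := closedBall_subset_ball hr'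
    obtain ⟨ζ, hζ, hmax⟩ := (isCompact_closedBall c r').exists_isMaxOn ⟨z, hz⟩
      (f := fun z => ‖deriv G z‖ * (r' - dist z c))
      ((hdG.continuousOn.mono hsub).norm.mul (by fun_prop))
    refine (hmax hz).trans ?_
    show ‖deriv G ζ‖ * (r' - dist ζ c) ≤ 120
    by_contra! hcon
    set D := ‖deriv G ζ‖
    set δ := (r' - dist ζ c) / 2 with hδ
    have hDδ : 60 < D * δ := by rw [hδ]; linarith
    have hζ' : dist ζ c ≤ r' := hζ
    have hD0 : 0 ≤ D := norm_nonneg _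
    have hδ0 : 0 < δ := by
      by_contra! h
      nlinarith
    have hD : 0 < D := by
      by_contra! h
      nlinarith
    have hsubδ : closedBall ζ δ ⊆ closedBall c r' := by
      intro x hx
      have : dist x c ≤ dist x ζ + dist ζ c := dist_triangle _ _ _
      have hx' : dist x ζ ≤ δ := hx
      show dist x c ≤ r'
      linarith
    have hbound : ∀ x ∈ closedBall ζ δ, ‖deriv G x‖ ≤ 2 * D := by
      intro x hx
      have h1 := hmax (hsubδ hx)
      have h1' : ‖deriv G x‖ * (r' - dist x c) ≤ D * (r' - dist ζ c) := h1
      have h2 : δ ≤ r' - dist x c := by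
        have : dist x c ≤ dist x ζ + dist ζ c := dist_triangle _ _ _
        have hx' : dist x ζ ≤ δ := hx
        linarith
      have h3 : ‖deriv G x‖ * δ ≤ ‖deriv G x‖ * (r' - dist x c) :=
        mul_le_mul_of_nonneg_left h2 (norm_nonneg _)
      have h4 : ‖deriv G x‖ * δ ≤ (2 * D) * δ := by
        have : r' - dist ζ c = 2 * δ := by rw [hδ]; ring
        rw [this] at h1'
        linarith
      exact le_of_mul_le_mul_right h4 hδ0
    have hballR : closedBall ζ δ ⊆ ball c R := hsubδ.trans hsub
    have hder : ∀ x ∈ closedBall ζ (δ / 6), ‖deriv G x - deriv G ζ‖ ≤ D / 2 := by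
      intro x hx
      have hx' : dist x ζ ≤ δ / 6 := hx
      have h1 := Complex.dist_le_div_mul_dist_of_mapsTo_ball (f := deriv G) (c := ζ) (R₁ := δ)
        (R₂ := 3 * D) (z := x) (hdG.mono (ball_subset_closedBall.trans hballR))
        (fun y hy => by
          have := hbound y (ball_subset_closedBall hy)
          rw [mem_closedBall, dist_eq_norm]
          refine (norm_sub_le _ _).trans ?_
          linarith) (by rw [mem_ball]; linarith)
      rw [dist_eq_norm] at h1
      refine h1.trans ?_
      rw [div_mul_eq_mul_div, div_le_iff₀ hδ0]
      nlinarith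
    have hsm : closedBall ζ (δ / 6) ⊆ closedBall ζ δ := closedBall_subset_closedBall (by linarith)
    have hlow : ∀ x ∈ closedBall ζ (δ / 6), D / 2 * dist x ζ ≤ ‖G x - G ζ‖ := by
      intro x hx
      have h1 := (convex_closedBall ζ (δ / 6)).norm_image_sub_le_of_norm_hasDerivWithin_le
        (f := fun y => G y - deriv G ζ * y) (f' := fun y => deriv G y - deriv G ζ) (C := D / 2)
        (x := ζ) (y := x)
        (fun y hy => by
          have hGy : HasDerivAt G (deriv G y) y :=
            ((hG.differentiableAt (isOpen_ball.mem_nhds (hballR (hsm hy))))).hasDerivAt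
          exact (hGy.sub (by simpa using (hasDerivAt_id y).const_mul (deriv G ζ))).hasDerivWithinAt)
        hder (mem_closedBall_self (by linarith)) hx
      have h2 : ‖deriv G ζ * (x - ζ)‖ = D * dist x ζ := by rw [norm_mul, dist_eq_norm]
      have h3 : ‖deriv G ζ * (x - ζ)‖ ≤ ‖G x - G ζ‖ +
          ‖(G x - deriv G ζ * x) - (G ζ - deriv G ζ * ζ)‖ := by
        have : deriv G ζ * (x - ζ) = (G x - G ζ) -
          ((G x - deriv G ζ * x) - (G ζ - deriv G ζ * ζ)) := by ring
        rw [this]; exact norm_sub_le _ _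
      rw [← dist_eq_norm x ζ] at h1
      linarith
    have hsub6 : closedBall ζ (δ / 6) ⊆ ball c R := hsm.trans hballR
    have hfin := DiffContOnCl.ball_subset_image_closedBall (f := G) (z₀ := ζ) (r := δ / 6)
      (ε := D / 2 * (δ / 6))
      ((hG.mono hsub6).diffContOnCl_ball subset_rfl) (by linarith)
      (fun x hx => by
        have := hlow x (sphere_subset_closedBall hx)
        rwa [mem_sphere.1 hx] at this)
      (by
        refine Filter.Eventually.frequently (f := 𝓝[≠] ζ) ?_ |>.filter_mono nhdsWithin_le_nhds
        have h6 : closedBall ζ (δ / 6) ∈ 𝓝[≠] ζ :=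
          nhdsWithin_le_nhds (closedBall_mem_nhds _ (by linarith))
        filter_upwards [h6, self_mem_nhdsWithin] with x hx hne e
        have h7 := hlow x hx
        rw [e, sub_self, norm_zero] at h7
        have h8 : 0 < dist x ζ := dist_pos.2 hne
        nlinarith [mul_pos hD h8])
    refine hball (G ζ) ((ball_subset_ball ?_).trans (hfin.trans (image_mono hsub6)))
    nlinarith
  have hlim : Tendsto (fun r' => ‖deriv G z‖ * (r' - dist z c)) (𝓝[<] R)
      (𝓝 (‖deriv G z‖ * (R - dist z c))) := by
    refine Tendsto.mono_left ?_ nhdsWithin_le_nhds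
    exact Continuous.tendsto (by fun_prop) R
  refine le_of_tendsto hlim ?_
  have hzR : dist z c < R := hz
  filter_upwards [Ioo_mem_nhdsLT hzR] with r' hr'
  exact key r' (dist_nonneg.trans hr'.1.le) hr'.2 z hr'.1.le

theorem exists_cos_eq_int (w : ℂ) : ∃ v ∈ ball w 2, ∃ n : ℤ, Complex.cos (Real.pi * v) = n := by
  have key : ∀ y : ℝ, ∃ x, |x - y| ≤ 1 ∧ ∃ n : ℤ, Real.cosh (Real.pi * x) = n := by
    have pos : ∀ y : ℝ, 0 ≤ y → ∃ x, |x - y| ≤ 1 ∧ ∃ n : ℤ, Real.cosh (Real.pi * x) = n := by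
      intro y hy
      have hc : ContinuousOn (fun x => Real.cosh (Real.pi * x)) (Icc y (y + 1)) := by fun_prop
      have h2 : 2 ≤ Real.cosh Real.pi := by
        rw [Real.cosh_eq]
        have h3 := Real.add_one_le_exp Real.pi
        have h4 := Real.pi_gt_three
        have h5 := Real.exp_pos (-Real.pi)
        linarith
      have h1 := Real.one_le_cosh (Real.pi * y)
      have h6 : Real.cosh (Real.pi * y) + 1 ≤ Real.cosh (Real.pi * (y + 1)) := by
        rw [mul_add, mul_one, Real.cosh_add]
        have s1 : 0 ≤ Real.sinh (Real.pi * y) :=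
          Real.sinh_nonneg_iff.2 (mul_nonneg Real.pi_pos.le hy)
        have s2 : 0 ≤ Real.sinh Real.pi := Real.sinh_nonneg_iff.2 Real.pi_pos.le
        nlinarith [mul_nonneg s1 s2]
      have hmem : ((⌈Real.cosh (Real.pi * y)⌉ : ℤ) : ℝ) ∈
          Icc (Real.cosh (Real.pi * y)) (Real.cosh (Real.pi * (y + 1))) :=
        ⟨Int.le_ceil _, (Int.ceil_lt_add_one _).le.trans h6⟩
      obtain ⟨x, hx, e⟩ := intermediate_value_Icc (by linarith) hc hmem
      exact ⟨x, abs_le.2 ⟨by linarith [hx.1], by linarith [hx.2]⟩, _, e⟩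
    intro y
    rcases le_total 0 y with hy | hy
    · exact pos y hy
    · obtain ⟨x, hx, n, hn⟩ := pos (-y) (by linarith)
      refine ⟨-x, ?_, n, by rw [mul_neg, Real.cosh_neg, hn]⟩
      rw [← abs_neg]; convert hx using 2; ring
  obtain ⟨y, hy, n, hn⟩ := key w.im
  refine ⟨(round w.re : ℂ) + y * Complex.I, ?_, (-1) ^ (round w.re).natAbs * n, ?_⟩
  · rw [mem_ball, dist_eq_norm]
    refine lt_of_le_of_lt (Complex.norm_le_abs_re_add_abs_im _) ?_
    have h1 : ((round w.re : ℂ) + y * Complex.I - w).re = round w.re - w.re := by simp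
    have h2 : ((round w.re : ℂ) + y * Complex.I - w).im = y - w.im := by simp
    rw [h1, h2, abs_sub_comm]
    linarith [abs_sub_round w.re]
  · have h1 : Complex.cos ((round w.re : ℂ) * Real.pi) = (-1) ^ (round w.re).natAbs := by
      have h := Real.cos_int_mul_pi (round w.re)
      have h' : Complex.cos ((round w.re : ℂ) * Real.pi) =
        ((Real.cos ((round w.re : ℝ) * Real.pi) : ℝ) : ℂ) := by push_cast; rfl
      rw [h', h]
      rcases Int.even_or_odd (round w.re) with he | ho
      · rw [he.neg_one_zpow, (Int.natAbs_even.2 he).neg_one_pow]; simp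
      · rw [ho.neg_one_zpow, (Int.natAbs_odd.2 ho).neg_one_pow]; simp
    have h2 : Complex.sin ((round w.re : ℂ) * Real.pi) = 0 := Complex.sin_int_mul_pi _
    have h3 : (Real.pi : ℂ) * ((round w.re : ℂ) + y * Complex.I) =
      (round w.re : ℂ) * Real.pi + ((Real.pi * y : ℝ) : ℂ) * Complex.I := by push_cast; ring
    rw [h3, Complex.cos_add, h1, h2, Complex.cos_mul_I, ← Complex.ofReal_cosh, hn]
    push_cast
    ring

/-- Schottky's theorem. -/
theorem exists_schottky (A : ℝ) : ∃ B : ℝ, 0 < B ∧ ∀ (c : ℂ) (R : ℝ) (h : ℂ → ℂ),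
    DifferentiableOn ℂ h (ball c R) → (∀ z ∈ ball c R, h z ≠ 0) → (∀ z ∈ ball c R, h z ≠ 1) →
    ‖h c‖ ≤ A → ∀ z ∈ ball c (R / 2), ‖h z‖ ≤ B := by
  have cosb : ∀ (v : ℂ) (r : ℝ), ‖v‖ ≤ r → ‖Complex.cos (Real.pi * v)‖ ≤ Real.exp (Real.pi * r) := by
    intro v r hv
    have hn : ‖(Real.pi : ℂ) * v * Complex.I‖ ≤ Real.pi * r := by
      rw [norm_mul, norm_mul, Complex.norm_I, mul_one, Complex.norm_real, Real.norm_eq_abs,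
        abs_of_pos Real.pi_pos]
      exact mul_le_mul_of_nonneg_left hv Real.pi_pos.le
    rw [Complex.cos, norm_div, neg_mul]
    have h1 : ‖Complex.exp (Real.pi * v * Complex.I)‖ ≤ Real.exp (Real.pi * r) := by
      refine (Complex.norm_exp_le_exp_norm _).trans (Real.exp_le_exp.2 hn)
    have h2 : ‖Complex.exp (-(Real.pi * v * Complex.I))‖ ≤ Real.exp (Real.pi * r) := by
      refine (Complex.norm_exp_le_exp_norm _).trans (Real.exp_le_exp.2 (by rwa [norm_neg]))
    rw [div_le_iff₀ (by simp)]
    refine (norm_add_le _ _).trans ?_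
    simp only [Complex.norm_ofNat]
    linarith
  refine ⟨(1 + Real.exp (Real.pi * Real.exp (Real.pi * (2 * A + 123)))) / 2, by positivity,
    fun c R h hh h0 h1 hA z hz => ?_⟩
  have hR : 0 < R := by
    by_contra! hR
    rw [ball_eq_empty.2 (by linarith)] at hz
    exact hz
  have hcR : c ∈ ball c R := mem_ball_self hR
  obtain ⟨φ, hφ, hφc, hcosφ⟩ := exists_holomorphic_arccos (convex_ball c R) isOpen_ball
    (h := fun z => 2 * h z - 1) ((hh.const_mul 2).sub_const 1)
    (fun z hz e => h1 z hz (by linear_combination e / 2))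
    (fun z hz e => h0 z hz (by linear_combination e / 2)) hcR
  have hφint : ∀ z ∈ ball c R, ∀ n : ℤ, φ z ≠ n := by
    intro z hz n e
    have h2 := hcosφ z hz
    have h3 : Complex.cos (Real.pi * (n : ℂ)) = 1 ∨ Complex.cos (Real.pi * (n : ℂ)) = -1 := by
      have : Complex.cos (Real.pi * (n : ℂ)) = ((Real.cos (n * Real.pi) : ℝ) : ℂ) := by
        push_cast; rw [mul_comm]
      rw [this, Real.cos_int_mul_pi]
      rcases Int.even_or_odd n with he | ho
      · left; rw [he.neg_one_zpow]; simp
      · right; rw [ho.neg_one_zpow]; simp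
    rw [e] at h2
    rcases h3 with h3 | h3
    · exact h1 z hz (by linear_combination (h3 - h2) / 2)
    · exact h0 z hz (by linear_combination (h3 - h2) / 2)
  obtain ⟨G, hG, hGc, hcosG⟩ := exists_holomorphic_arccos (convex_ball c R) isOpen_ball hφ
    (fun z hz e => hφint z hz 1 (by simpa using e))
    (fun z hz e => hφint z hz (-1) (by simpa using e)) hcR
  have hnb : ∀ w, ¬ ball w 2 ⊆ G '' ball c R := by
    intro w hw
    obtain ⟨v, hv, n, hn⟩ := exists_cos_eq_int w
    obtain ⟨x, hx, rfl⟩ := hw hv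
    exact hφint x hx n (by rw [← hcosG x hx, hn])
  have hGz : ‖G z‖ ≤ 2 * A + 123 := by
    have hcz : ∀ x ∈ ball c (R / 2), ‖deriv G x‖ ≤ 240 / R := by
      intro x hx
      have hx' : dist x c < R / 2 := hx
      have := norm_deriv_le_of_not_closedBall_subset hG hnb (z := x) (by rw [mem_ball]; linarith)
      rw [le_div_iff₀ hR]
      nlinarith [norm_nonneg (deriv G x)]
    have h1 := (convex_ball c (R / 2)).norm_image_sub_le_of_norm_deriv_le (f := G) (C := 240 / R)
      (x := c) (y := z)
      (fun x hx => hG.differentiableAt (isOpen_ball.mem_nhds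
        (ball_subset_ball (by linarith) hx))) hcz (mem_ball_self (by linarith)) hz
    have hz' : ‖z - c‖ < R / 2 := by rw [← dist_eq_norm]; exact hz
    have h2 : 240 / R * ‖z - c‖ ≤ 120 := by
      rw [div_mul_eq_mul_div, div_le_iff₀ hR]; linarith
    have h3 : ‖2 * h c - 1‖ ≤ 2 * A + 1 := by
      refine (norm_sub_le _ _).trans ?_
      rw [norm_mul, norm_one, Complex.norm_ofNat]
      linarith
    have h4 : ‖G z‖ ≤ ‖G c‖ + ‖G z - G c‖ := by
      have : G z = G c + (G z - G c) := by ring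
      rw [this]; convert norm_add_le (G c) (G z - G c) using 2
      · congr 1; ring
    linarith
  have hzR : z ∈ ball c R := ball_subset_ball (by linarith) hz
  have hφz := cosb _ _ hGz
  rw [hcosG z hzR] at hφz
  have hhz := cosb _ _ hφz
  rw [hcosφ z hzR] at hhz
  have : h z = ((2 * h z - 1) + 1) / 2 := by ring
  rw [this, norm_div, Complex.norm_ofNat]
  have h5 := norm_add_le (2 * h z - 1) 1
  rw [norm_one] at h5
  linarith

/-- Propagation of local one-sided bounds along a domain, uniformly on a compact set. -/
theorem exists_bound_of_chain {W K : Set ℂ} (hWo : IsOpen W) (hWc : IsPreconnected W)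
    (hK : IsCompact K) (hKW : K ⊆ W) (P : (ℂ → ℝ) → Prop)
    (loc : ∀ A, ∃ B, ∀ u, P u → ∀ y r, ball y r ⊆ W → u y ≤ A → ∀ z ∈ ball y (r / 2), u z ≤ B)
    (A : ℝ) : ∃ B, ∀ u, P u → ∀ z ∈ K, u z ≤ A → ∀ z' ∈ K, u z' ≤ B := by
  let Q : ℂ → Set ℂ → Prop := fun z s => ∀ A, ∃ B, ∀ u, P u → u z ≤ A → ∀ z' ∈ s, u z' ≤ B
  let Q' : Set ℂ → ℂ → Prop := fun s z => ∀ A, ∃ B, ∀ u, P u → ∀ z' ∈ s, u z' ≤ A → u z ≤ B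
  have hloc : ∀ x ∈ W, ∃ t ∈ 𝓝 x, Q x t ∧ Q' t x := by
    intro x hx
    obtain ⟨r, hr, hrW⟩ := Metric.isOpen_iff.1 hWo x hx
    refine ⟨ball x (r / 4), ball_mem_nhds _ (by linarith), fun A => ?_, fun A => ?_⟩
    · obtain ⟨B, hB⟩ := loc A
      exact ⟨B, fun u hu hx z' hz' => hB u hu x r hrW hx z' (ball_subset_ball (by linarith) hz')⟩
    · obtain ⟨B, hB⟩ := loc A
      refine ⟨B, fun u hu z hz hzA => hB u hu z (3 * r / 4) (fun y hy => hrW ?_) hzA x ?_⟩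
      · rw [mem_ball] at *
        linarith [dist_triangle y z x]
      · rw [mem_ball] at *
        rw [dist_comm]
        linarith
  have hpt : ∀ x ∈ W, ∀ y ∈ W, Q x {y} := by
    intro x hx y hy
    refine hWc.induction₂' (fun x y => Q x {y}) (fun x hx => ?_) ?_ hx hy
    · obtain ⟨t, ht, h1, h2⟩ := hloc x hx
      filter_upwards [nhdsWithin_le_nhds ht] with y hy
      refine ⟨fun A => ?_, fun A => ?_⟩
      · obtain ⟨B, hB⟩ := h1 A
        exact ⟨B, fun u hu hux z' hz' => hB u hu hux z' (by rw [mem_singleton_iff.1 hz']; exact hy)⟩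
      · obtain ⟨B, hB⟩ := h2 A
        exact ⟨B, fun u hu hux z' hz' => by rw [mem_singleton_iff.1 hz']; exact hB u hu y hy hux⟩
    · intro x y z _ _ _ h1 h2 A
      obtain ⟨B, hB⟩ := h1 A
      obtain ⟨B', hB'⟩ := h2 B
      exact ⟨B', fun u hu hux => hB' u hu (hB u hu hux y rfl)⟩
  rcases K.eq_empty_or_nonempty with rfl | ⟨x₀, hx₀⟩
  · exact ⟨0, fun u _ z hz => hz.elim⟩
  have h1 : Q x₀ K := by
    refine hK.induction_on (p := Q x₀) (fun A => ⟨0, fun u _ _ z hz => hz.elim⟩)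
      (fun s t hst h A => ?_) (fun s t hs ht A => ?_) (fun x hx => ?_)
    · obtain ⟨B, hB⟩ := h A
      exact ⟨B, fun u hu hux z hz => hB u hu hux z (hst hz)⟩
    · obtain ⟨B, hB⟩ := hs A
      obtain ⟨B', hB'⟩ := ht A
      exact ⟨max B B', fun u hu hux z hz => hz.elim
        (fun hz => (hB u hu hux z hz).trans (le_max_left _ _))
        (fun hz => (hB' u hu hux z hz).trans (le_max_right _ _))⟩
    · obtain ⟨t, ht, h1, -⟩ := hloc x (hKW hx)
      refine ⟨t, nhdsWithin_le_nhds ht, fun A => ?_⟩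
      obtain ⟨B, hB⟩ := hpt x₀ (hKW hx₀) x (hKW hx) A
      obtain ⟨B', hB'⟩ := h1 B
      exact ⟨B', fun u hu hux => hB' u hu (hB u hu hux x rfl)⟩
  have h2 : Q' K x₀ := by
    refine hK.induction_on (p := fun s => Q' s x₀) (fun A => ⟨0, fun u _ z hz => hz.elim⟩)
      (fun s t hst h A => ?_) (fun s t hs ht A => ?_) (fun x hx => ?_)
    · obtain ⟨B, hB⟩ := h A
      exact ⟨B, fun u hu z hz hux => hB u hu z (hst hz) hux⟩
    · obtain ⟨B, hB⟩ := hs A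
      obtain ⟨B', hB'⟩ := ht A
      exact ⟨max B B', fun u hu z hz hux => hz.elim
        (fun hz => (hB u hu z hz hux).trans (le_max_left _ _))
        (fun hz => (hB' u hu z hz hux).trans (le_max_right _ _))⟩
    · obtain ⟨t, ht, -, h1⟩ := hloc x (hKW hx)
      refine ⟨t, nhdsWithin_le_nhds ht, fun A => ?_⟩
      obtain ⟨B, hB⟩ := h1 A
      obtain ⟨B', hB'⟩ := hpt x (hKW hx) x₀ (hKW hx₀) B
      exact ⟨B', fun u hu z hz hux => hB' u hu (hB u hu z hz hux) x₀ rfl⟩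
  obtain ⟨B, hB⟩ := h2 A
  obtain ⟨B', hB'⟩ := h1 B
  exact ⟨B', fun u hu z hz hzA => hB' u hu (hB u hu z hz hzA)⟩

theorem exists_schottky_chain {W K : Set ℂ} (hWo : IsOpen W) (hWc : IsPreconnected W)
    (hK : IsCompact K) (hKW : K ⊆ W) (A : ℝ) : ∃ B, 1 ≤ B ∧ ∀ φ : ℂ → ℂ, DifferentiableOn ℂ φ W →
      (∀ z ∈ W, φ z ≠ 0) → (∀ z ∈ W, φ z ≠ 1) → ∀ z ∈ K, ‖φ z‖ ≤ A → ∀ z' ∈ K, ‖φ z'‖ ≤ B := by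
  obtain ⟨B, hB⟩ := exists_bound_of_chain hWo hWc hK hKW
    (fun u => ∃ φ : ℂ → ℂ, (u = fun z => ‖φ z‖) ∧ DifferentiableOn ℂ φ W ∧
      (∀ z ∈ W, φ z ≠ 0) ∧ (∀ z ∈ W, φ z ≠ 1)) (fun A => by
        obtain ⟨B, -, hB⟩ := exists_schottky A
        refine ⟨B, ?_⟩
        rintro _ ⟨φ, rfl, hd, h0, h1⟩ y r hyr hA
        exact hB y r φ (hd.mono hyr) (fun z hz => h0 z (hyr hz)) (fun z hz => h1 z (hyr hz)) hA) A
  exact ⟨max B 1, le_max_right _ _, fun φ hd h0 h1 z hz hA z' hz' =>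
    (hB _ ⟨φ, rfl, hd, h0, h1⟩ z hz hA z' hz').trans (le_max_left _ _)⟩

/-- Harnack-type estimate for holomorphic functions of positive real part. -/
theorem norm_sub_le_of_re_pos {h : ℂ → ℂ} {c z : ℂ} {R : ℝ} (hh : DifferentiableOn ℂ h (ball c R))
    (hpos : ∀ z ∈ ball c R, 0 < (h z).re) (hz : z ∈ ball c R) :
    ‖h z - h c‖ ≤ 2 * (h c).re * dist z c / (R - dist z c) := by
  have hR : 0 < R := dist_nonneg.trans_lt hz
  have hmaps : ∀ w ∈ ball (0 : ℂ) R, c + w ∈ ball c R := by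
    intro w hw; simpa [dist_eq_norm] using hw
  have h1 := Complex.borelCaratheodory_zero (f := fun w => h c - h (c + w)) (M := (h c).re)
    (R := R) (z := z - c) (hpos c (mem_ball_self hR))
    ((hh.comp (by fun_prop) hmaps).const_sub (h c))
    (fun w hw => by
      have := hpos _ (hmaps w hw)
      simp only [mem_ofPred_eq, Complex.sub_re]
      linarith) hR (by simpa [dist_eq_norm] using hz) (by simp)
  simp only [add_sub_cancel] at h1
  rwa [norm_sub_rev, ← dist_eq_norm z c] at h1

/-- Harnack's inequality on a compact subset of a domain, for logarithms of moduli. -/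
theorem exists_harnack_chain {W K : Set ℂ} (hWo : IsOpen W) (hWc : IsPreconnected W)
    (hK : IsCompact K) (hKW : K ⊆ W) : ∃ C, 1 ≤ C ∧ ∀ q : ℂ → ℂ, DifferentiableOn ℂ q W →
      (∀ z ∈ W, 1 < ‖q z‖) → ∀ z ∈ K, ∀ z' ∈ K, Real.log ‖q z‖ ≤ C * Real.log ‖q z'‖ := by
  obtain ⟨B, hB⟩ := exists_bound_of_chain hWo hWc hK hKW
    (fun u => ∃ (q : ℂ → ℂ) (l : ℝ), (u = fun z => l * Real.log ‖q z‖) ∧ 0 < l ∧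
      DifferentiableOn ℂ q W ∧ (∀ z ∈ W, 1 < ‖q z‖)) (fun A => by
        refine ⟨3 * A, ?_⟩
        rintro _ ⟨q, l, rfl, hl, hd, h1⟩ y r hyr hA z hz
        have hr : 0 < r := by
          have : 0 < r / 2 := dist_nonneg.trans_lt hz
          linarith
        have hy := mem_ball_self hr (x := y)
        have hq0 : ∀ z ∈ ball y r, q z ≠ 0 := fun z hz e => by
          have := h1 z (hyr hz); rw [e, norm_zero] at this; linarith
        obtain ⟨L, hLd, -, hL⟩ := exists_holomorphic_log (convex_ball y r) isOpen_ball
          (hd.mono hyr) hq0 hy (Complex.exp_log (hq0 y hy))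
        have hre : ∀ z ∈ ball y r, (L z).re = Real.log ‖q z‖ := fun z hz => by
          rw [← hL z hz, Complex.norm_exp, Real.log_exp]
        have hzr : z ∈ ball y r := ball_subset_ball (by linarith) hz
        have hlog : ∀ z ∈ ball y r, 0 < (L z).re := fun z hz => by
          rw [hre z hz]; exact Real.log_pos (h1 z (hyr hz))
        have h2 := norm_sub_le_of_re_pos hLd hlog hzr
        have hz2 : dist z y < r / 2 := hz
        have h3 : 2 * (L y).re * dist z y / (r - dist z y) ≤ 2 * (L y).re := by
          rw [div_le_iff₀ (by linarith)]
          have := hlog y hy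
          nlinarith
        have h4 := (le_abs_self _).trans (Complex.abs_re_le_norm (L z - L y))
        rw [Complex.sub_re] at h4
        show l * Real.log ‖q z‖ ≤ 3 * A
        rw [← hre z hzr]
        have hA' : l * (L y).re ≤ A := by rw [hre y hy]; exact hA
        nlinarith) 1
  refine ⟨max B 1, le_max_right _ _, fun q hd h1 z hz z' hz' => ?_⟩
  have hp : 0 < Real.log ‖q z'‖ := Real.log_pos (h1 z' (hKW hz'))
  have h2 : (Real.log ‖q z'‖)⁻¹ * Real.log ‖q z‖ ≤ B :=
    hB _ ⟨q, (Real.log ‖q z'‖)⁻¹, rfl, inv_pos.2 hp, hd, h1⟩ z' hz'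
    (by show _ * _ ≤ _; rw [inv_mul_cancel₀ hp.ne']) z hz
  rw [inv_mul_le_iff₀ hp] at h2
  rw [mul_comm]
  exact h2.trans (mul_le_mul_of_nonneg_left (le_max_left _ _) hp.le)

theorem norm_deriv_le_of_norm_le {h : ℂ → ℂ} {c : ℂ} {R B : ℝ} (hR : 0 < R)
    (hh : DifferentiableOn ℂ h (ball c R)) (hB : ∀ z ∈ ball c R, ‖h z‖ ≤ B) :
    ‖deriv h c‖ ≤ 2 * B / R := by
  refine Complex.norm_deriv_le_div_of_mapsTo_ball hh (fun z hz => ?_) hR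
  rw [mem_closedBall, dist_eq_norm]
  refine (norm_sub_le _ _).trans ?_
  linarith [hB z hz, hB c (mem_ball_self hR)]

theorem deriv_ne_zero_of_injOn {h : ℂ → ℂ} {U : Set ℂ} (hU : IsOpen U)
    (hh : DifferentiableOn ℂ h U) (hinj : InjOn h U) {c : ℂ} (hc : c ∈ U) : deriv h c ≠ 0 := by
  intro h0
  have hUc := hU.mem_nhds hc
  have han : AnalyticAt ℂ h c := hh.analyticAt hUc
  have han' : AnalyticAt ℂ (fun z => h z - h c) c := han.sub analyticAt_const
  have hne : analyticOrderAt (fun z => h z - h c) c ≠ ⊤ := by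
    intro htop
    rw [analyticOrderAt_eq_top] at htop
    have h1 : ∀ᶠ z in 𝓝[≠] c, False := by
      filter_upwards [nhdsWithin_le_nhds htop, nhdsWithin_le_nhds hUc, self_mem_nhdsWithin]
        with z hz hzU hzc
      exact hzc (hinj hzU hc (sub_eq_zero.1 hz))
    exact h1.exists.elim fun _ => id
  obtain ⟨m, hm⟩ := ENat.ne_top_iff_exists.1 hne
  obtain ⟨g, hg, hgc, hgeq⟩ := (han'.analyticOrderAt_eq_natCast).1 hm.symm
  have hord := han.analyticOrderAt_deriv_add_one
  have hd1 : 1 ≤ analyticOrderAt (deriv h) c := by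
    rw [Order.one_le_iff_ne_zero, ne_eq, han.deriv.analyticOrderAt_eq_zero]
    simpa using h0
  have hm2 : 2 ≤ m := by
    have h2 : (2 : ℕ∞) ≤ (m : ℕ∞) := by
      rw [hm, ← hord]
      calc (2 : ℕ∞) = 1 + 1 := by norm_num
        _ ≤ _ := by gcongr
    exact_mod_cast h2
  have hmne : (m : ℂ) ≠ 0 := by exact_mod_cast (by omega : m ≠ 0)
  set γ := Complex.exp (Complex.log (g c) / m) with hγ
  have hγ0 : γ ≠ 0 := Complex.exp_ne_zero _
  let η : ℂ → ℂ := fun z => (z - c) * (Complex.exp (Complex.log (g z / g c) / m) * γ)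
  have hηpow : ∀ᶠ z in 𝓝 c, η z ^ m = h z - h c := by
    have hg0 : ∀ᶠ z in 𝓝 c, g z ≠ 0 := hg.continuousAt.eventually_ne hgc
    filter_upwards [hgeq, hg0] with z hz hgz
    rw [hz, smul_eq_mul, mul_pow, mul_pow, ← Complex.exp_nat_mul, ← Complex.exp_nat_mul,
      mul_div_cancel₀ _ hmne, mul_div_cancel₀ _ hmne, Complex.exp_log (div_ne_zero hgz hgc),
      Complex.exp_log hgc, div_mul_cancel₀ _ hgc]
  have hηan : AnalyticAt ℂ η c := by
    refine (analyticAt_id.sub analyticAt_const).mul (AnalyticAt.mul ?_ analyticAt_const)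
    refine AnalyticAt.cexp (AnalyticAt.div (AnalyticAt.clog (hg.div analyticAt_const hgc) ?_)
      analyticAt_const hmne)
    rw [div_self hgc]
    exact Complex.one_mem_slitPlane
  have hηd : deriv η c = γ := by
    have hk : DifferentiableAt ℂ (fun z => Complex.exp (Complex.log (g z / g c) / m) * γ) c := by
      refine DifferentiableAt.mul_const (DifferentiableAt.cexp
        (DifferentiableAt.div_const (DifferentiableAt.clog
        (hg.differentiableAt.div_const _) ?_) _)) _
      rw [div_self hgc]
      exact Complex.one_mem_slitPlane
    have := ((hasDerivAt_id c).sub_const c).mul hk.hasDerivAt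
    have h3 := this.deriv
    simp only [id, sub_self, zero_mul, add_zero, one_mul] at h3
    have h4 : deriv η c = Complex.exp (Complex.log (g c / g c) / m) * γ := h3
    rw [h4, div_self hgc]; simp
  have hηc : η c = 0 := by simp [η]
  have hst : HasStrictDerivAt η γ c := by rw [← hηd]; exact hηan.hasStrictDerivAt
  have hmap := hst.map_nhds_eq hγ0
  rw [hηc] at hmap
  set N : Set ℂ := {z | η z ^ m = h z - h c} ∩ U
  have hN : N ∈ 𝓝 c := inter_mem hηpow hUc
  have hηN : η '' N ∈ 𝓝 (0 : ℂ) := by rw [← hmap]; exact image_mem_map hN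
  set ω := Complex.exp (2 * Real.pi * Complex.I / m)
  have hprim : IsPrimitiveRoot ω m := Complex.isPrimitiveRoot_exp m (by omega)
  have hω1 : ω ≠ 1 := hprim.ne_one (by omega)
  have hωN : ∀ᶠ v in 𝓝 (0 : ℂ), ω * v ∈ η '' N := by
    have : Tendsto (fun v : ℂ => ω * v) (𝓝 0) (𝓝 0) := by
      simpa using (continuous_const_mul ω).tendsto (0 : ℂ)
    exact this hηN
  have hex : ∀ᶠ v in 𝓝[≠] (0 : ℂ), v ∈ η '' N ∧ ω * v ∈ η '' N ∧ v ≠ 0 := by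
    filter_upwards [nhdsWithin_le_nhds hηN, nhdsWithin_le_nhds hωN, self_mem_nhdsWithin]
      with v h1 h2 h3
    exact ⟨h1, h2, h3⟩
  obtain ⟨v, ⟨x, hx, hxv⟩, ⟨y, hy, hyv⟩, hv⟩ := hex.exists
  have hxy : h x = h y := by
    have h1 : h x - h c = v ^ m := by rw [← hx.1, hxv]
    have h2 : h y - h c = v ^ m := by rw [← hy.1, hyv, mul_pow, hprim.pow_eq_one, one_mul]
    linear_combination h1 - h2
  have := hinj hx.2 hy.2 hxy
  rw [this, hyv] at hxv
  exact hω1 (mul_right_cancel₀ hv (by rw [hxv, one_mul]))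

theorem differentiableOn_invFunOn {h : ℂ → ℂ} {U : Set ℂ} (hU : IsOpen U)
    (hh : DifferentiableOn ℂ h U) (hinj : InjOn h U) {c : ℂ} (hc : c ∈ U) :
    HasDerivAt (Function.invFunOn h U) (deriv h c)⁻¹ (h c) := by
  have hleft : ∀ z ∈ U, Function.invFunOn h U (h z) = z := fun z hz => hinj.leftInvOn_invFunOn hz
  have hst : HasStrictDerivAt h (deriv h c) c := (hh.analyticAt (hU.mem_nhds hc)).hasStrictDerivAt
  have h0 := deriv_ne_zero_of_injOn hU hh hinj hc
  have hmap := hst.map_nhds_eq h0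
  refine HasDerivAt.of_local_left_inverse ?_ (by rw [hleft c hc]; exact hst.hasDerivAt) h0 ?_
  · rw [ContinuousAt, hleft c hc, ← hmap, tendsto_map'_iff]
    refine Tendsto.congr' ?_ tendsto_id
    filter_upwards [hU.mem_nhds hc] with z hz
    exact (hleft z hz).symm
  · rw [← hmap, eventually_map]
    filter_upwards [hU.mem_nhds hc] with z hz
    rw [hleft z hz]

/-- An injective holomorphic function on a disc that omits a value `α` does not vary much
relative to its distance from `α`. -/
theorem exists_bound_of_injOn_of_omits : ∃ B : ℝ, 1 ≤ B ∧ ∀ (c : ℂ) (r : ℝ) (h : ℂ → ℂ) (α : ℂ),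
    DifferentiableOn ℂ h (ball c r) → InjOn h (ball c r) → (∀ z ∈ ball c r, h z ≠ α) →
    ∀ z ∈ ball c (r / 2), ‖h z - α‖ ≤ B * ‖h c - α‖ := by
  obtain ⟨B, hB0, hB⟩ := exists_schottky 1
  refine ⟨B ^ 2 + 1, by nlinarith [sq_nonneg B], fun c r h α hh hinj hα z hz => ?_⟩
  have hr : 0 < r := by
    have : 0 < r / 2 := dist_nonneg.trans_lt hz
    linarith
  have hc := mem_ball_self hr (x := c)
  have hcα : h c - α ≠ 0 := sub_ne_zero.2 (hα c hc)
  obtain ⟨s, hs, hsq⟩ := exists_holomorphic_sqrt (h := fun z => (h z - α) / (h c - α))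
    (convex_ball c r) isOpen_ball ((hh.sub_const α).div_const _)
    (fun z hz => div_ne_zero (sub_ne_zero.2 (hα z hz)) hcα) hc
  have hs0 : ∀ z ∈ ball c r, s z ≠ 0 := fun z hz e => by
    have h1 := hsq z hz
    rw [e, zero_pow two_ne_zero] at h1
    exact div_ne_zero (sub_ne_zero.2 (hα z hz)) hcα h1.symm
  have hsc : s c ^ 2 = 1 := by rw [hsq c hc, div_self hcα]
  have h1 := hB c r (fun z => - s z / s c) (hs.neg.div_const _)
    (fun z hz => div_ne_zero (neg_ne_zero.2 (hs0 z hz)) (hs0 c hc))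
    (fun z hz e => by
      rw [div_eq_iff (hs0 c hc), one_mul] at e
      have h2 : s z ^ 2 = s c ^ 2 := by rw [← e]; ring
      rw [hsc, hsq z hz, div_eq_one_iff_eq hcα] at h2
      have h3 : z = c := hinj hz hc (by linear_combination h2)
      rw [h3] at e
      have h4 : s c = 0 := by linear_combination - e / 2
      exact hs0 c hc h4)
    (by show ‖-s c / s c‖ ≤ 1; rw [norm_div, norm_neg, div_self (norm_ne_zero_iff.2 (hs0 c hc))]) z hz
  have hzr : z ∈ ball c r := ball_subset_ball (by linarith) hz
  have hnc : ‖s c‖ = 1 := by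
    have : ‖s c‖ ^ 2 = 1 := by rw [← norm_pow, hsc, norm_one]
    nlinarith [norm_nonneg (s c)]
  rw [norm_div, norm_neg, hnc, div_one] at h1
  have h2 : ‖h z - α‖ = ‖s z‖ ^ 2 * ‖h c - α‖ := by
    rw [← norm_pow, hsq z hzr, ← norm_mul, div_mul_cancel₀ _ hcα]
  rw [h2]
  refine mul_le_mul_of_nonneg_right ?_ (norm_nonneg _)
  nlinarith [norm_nonneg (s z)]

/-- A weak form of the Koebe quarter theorem. -/
theorem exists_koebe_quarter : ∃ c₀ > (0 : ℝ), ∀ (c : ℂ) (r : ℝ) (h : ℂ → ℂ),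
    DifferentiableOn ℂ h (ball c r) → InjOn h (ball c r) →
    ball (h c) (c₀ * r * ‖deriv h c‖) ⊆ h '' ball c r := by
  obtain ⟨B, hB1, hB⟩ := exists_bound_of_injOn_of_omits
  have hB0 : 0 < B := by linarith
  refine ⟨1 / (4 * B), by positivity, fun c r h hh hinj α hα => ?_⟩
  by_contra hcon
  have hr : 0 < r := by
    by_contra! hr
    have h1 : dist α (h c) < 1 / (4 * B) * r * ‖deriv h c‖ := hα
    have h2 : 1 / (4 * B) * r * ‖deriv h c‖ ≤ 0 :=
      mul_nonpos_of_nonpos_of_nonneg (mul_nonpos_of_nonneg_of_nonpos (by positivity) hr)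
        (norm_nonneg _)
    linarith [dist_nonneg (x := α) (y := h c)]
  have h1 := hB c r h α hh hinj (fun z hz e => hcon ⟨z, hz, e⟩)
  have h2 := norm_deriv_le_of_norm_le (h := fun z => h z - α) (half_pos hr)
    ((hh.sub_const α).mono (ball_subset_ball (by linarith))) h1
  rw [deriv_sub_const] at h2
  have h3 : ‖h c - α‖ < 1 / (4 * B) * r * ‖deriv h c‖ := by
    rw [← dist_eq_norm, dist_comm]; exact hα
  rw [le_div_iff₀ (half_pos hr)] at h2
  have h4 : 1 / (4 * B) * r * ‖deriv h c‖ * (4 * B) = r * ‖deriv h c‖ := by field_simp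
  nlinarith

/-- A weak form of the Koebe distortion theorem. -/
theorem exists_koebe_distortion : ∃ C : ℝ, 1 ≤ C ∧ ∀ (c : ℂ) (r : ℝ) (h : ℂ → ℂ),
    DifferentiableOn ℂ h (ball c r) → InjOn h (ball c r) → ∀ z ∈ ball c (r / 16),
    ‖deriv h z‖ ≤ C * ‖deriv h c‖ ∧ ‖deriv h c‖ ≤ C * ‖deriv h z‖ := by
  obtain ⟨B, hB1, hB⟩ := exists_bound_of_injOn_of_omits
  have key : ∀ (c : ℂ) (r : ℝ) (h : ℂ → ℂ), DifferentiableOn ℂ h (ball c r) →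
      InjOn h (ball c r) → ∀ z ∈ ball c (r / 8), ‖deriv h z‖ ≤ 16 * B * ‖deriv h c‖ := by
    intro c r h hh hinj z hz
    have hr : 0 < r := by
      have : 0 < r / 8 := dist_nonneg.trans_lt hz
      linarith
    have hc := mem_ball_self hr (x := c)
    have hd0 := deriv_ne_zero_of_injOn isOpen_ball hh hinj hc
    set d := ‖deriv h c‖ with hd
    have hdpos : 0 < d := norm_pos_iff.2 hd0
    obtain ⟨α, hα, hαn⟩ : ∃ α, dist α (h c) < 2 * r * d ∧ ∀ z ∈ ball c r, h z ≠ α := by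
      by_contra! hcon
      have hψd : DifferentiableOn ℂ (Function.invFunOn h (ball c r)) (ball (h c) (2 * r * d)) := by
        intro α hα
        obtain ⟨z, hz, rfl⟩ := hcon α hα
        exact (differentiableOn_invFunOn isOpen_ball hh hinj hz).differentiableAt.differentiableWithinAt
      have h1 := Complex.norm_deriv_le_div_of_mapsTo_ball (R₂ := r) hψd (fun α hα => by
        obtain ⟨z, hz, rfl⟩ := hcon α hα
        rw [hinj.leftInvOn_invFunOn hz, hinj.leftInvOn_invFunOn hc]
        exact ball_subset_closedBall hz) (by positivity)
      rw [(differentiableOn_invFunOn isOpen_ball hh hinj hc).deriv, norm_inv, ← hd] at h1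
      have h2 : r / (2 * r * d) = d⁻¹ / 2 := by field_simp
      rw [h2] at h1
      have := inv_pos.2 hdpos
      linarith
    have h1 := hB c r h α hh hinj hαn
    have hα' : ‖h c - α‖ < 2 * r * d := by rw [← dist_eq_norm, dist_comm]; exact hα
    have hsub : ball z (r / 4) ⊆ ball c (r / 2) := by
      intro y hy
      rw [mem_ball] at *
      linarith [dist_triangle y z c]
    have h2 := norm_deriv_le_of_norm_le (h := fun z => h z - α) (c := z) (R := r / 4)
      (B := B * (2 * r * d)) (by linarith)
      ((hh.sub_const α).mono (hsub.trans (ball_subset_ball (by linarith)))) (fun y hy =>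
        (h1 y (hsub hy)).trans (mul_le_mul_of_nonneg_left hα'.le (by linarith)))
    rw [deriv_sub_const] at h2
    refine h2.trans (le_of_eq ?_)
    field_simp
    ring
  refine ⟨16 * B, by linarith, fun c r h hh hinj z hz => ?_⟩
  have hr : 0 < r := by
    have : 0 < r / 16 := dist_nonneg.trans_lt hz
    linarith
  have hsub : ball z (15 * r / 16) ⊆ ball c r := by
    intro y hy
    rw [mem_ball] at *
    linarith [dist_triangle y z c]
  refine ⟨key c r h hh hinj z (ball_subset_ball (by linarith) hz),
    key z (15 * r / 16) h (hh.mono hsub) (hinj.mono hsub) c ?_⟩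
  rw [mem_ball] at *
  rw [dist_comm]
  linarith

theorem exists_affine_of_injective {f : ℂ → ℂ} (hf : Differentiable ℂ f)
    (hinj : Function.Injective f) : ∃ a b : ℂ, ∀ z, f z = a * z + b := by
  obtain ⟨C, hC1, hC⟩ := exists_koebe_distortion
  have hb : ∀ z, ‖deriv f z‖ ≤ C * ‖deriv f 0‖ := fun z =>
    (hC 0 (16 * (‖z‖ + 1)) f hf.differentiableOn hinj.injOn z (by simp)).1
  have hconst := Differentiable.apply_eq_apply_of_bounded (f := deriv f)
    (fun z => (hf.analyticAt z).deriv.differentiableAt)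
    (isBounded_iff_forall_norm_le.2 ⟨_, by rintro _ ⟨z, rfl⟩; exact hb z⟩)
  refine ⟨deriv f 0, f 0, fun z => ?_⟩
  have hd : Differentiable ℂ (fun z => f z - deriv f 0 * z) := hf.sub (by fun_prop)
  have := is_const_of_deriv_eq_zero hd (fun x => by
    have h1 : HasDerivAt (fun z => f z - deriv f 0 * z) (deriv f x - deriv f 0 * 1) x :=
      (hf x).hasDerivAt.sub ((hasDerivAt_id x).const_mul _)
    rw [h1.deriv, hconst x 0]; ring) z 0
  simp only [mul_zero, sub_zero] at this
  linear_combination this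

/-- Schottky's theorem on circles around an isolated singularity at infinity. -/
theorem exists_schottky_circle (A : ℝ) : ∃ B : ℝ, ∀ (R : ℝ) (φ : ℂ → ℂ), 0 < R →
    DifferentiableOn ℂ φ {z | R < ‖z‖} → (∀ z, R < ‖z‖ → φ z ≠ 0) → (∀ z, R < ‖z‖ → φ z ≠ 1) →
    ∀ z z', R * Real.exp 16 ≤ ‖z‖ → ‖z'‖ = ‖z‖ → ‖φ z‖ ≤ A → ‖φ z'‖ ≤ B := by
  obtain ⟨B, -, hB⟩ := exists_schottky A
  refine ⟨B, fun R φ hR hd h0 h1 z z' hz hzz' hA => ?_⟩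
  have hz0 : z ≠ 0 := by
    rw [← norm_pos_iff]
    exact (by positivity : 0 < R * Real.exp 16).trans_le hz
  have hz0' : z' ≠ 0 := by
    rw [← norm_pos_iff, hzz', norm_pos_iff]
    exact hz0
  have hmaps : ∀ t ∈ ball (Complex.log z) 16, R < ‖Complex.exp t‖ := by
    intro t ht
    rw [mem_ball, dist_eq_norm] at ht
    have h2 := (Complex.abs_re_le_norm _).trans_lt ht
    rw [Complex.sub_re, Complex.log_re, abs_lt] at h2
    rw [Complex.norm_exp, ← Real.log_lt_iff_lt_exp hR]
    have h3 : Real.log R + 16 ≤ Real.log ‖z‖ := by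
      rw [← Real.log_exp 16, ← Real.log_mul hR.ne' (Real.exp_pos _).ne']
      exact Real.log_le_log (by positivity) hz
    linarith
  have h2 := hB (Complex.log z) 16 (fun t => φ (Complex.exp t))
    (hd.comp Complex.differentiable_exp.differentiableOn hmaps)
    (fun t ht => h0 _ (hmaps t ht)) (fun t ht => h1 _ (hmaps t ht))
    (by rwa [Complex.exp_log hz0]) (Complex.log z') (by
      rw [mem_ball, dist_eq_norm]
      have h3 : Complex.log z' - Complex.log z = ((z'.arg - z.arg : ℝ) : ℂ) * Complex.I := by
        apply Complex.ext <;> simp [Complex.log_re, Complex.log_im, hzz']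
      rw [h3, norm_mul, Complex.norm_I, mul_one, Complex.norm_real, Real.norm_eq_abs]
      have := Real.pi_lt_d2
      rw [abs_lt]
      constructor <;> linarith [Complex.neg_pi_lt_arg z, Complex.neg_pi_lt_arg z',
        Complex.arg_le_pi z, Complex.arg_le_pi z'])
  rwa [Complex.exp_log hz0'] at h2

theorem meromorphicAt_comp_inv_of_bounded {φ : ℂ → ℂ} {R B : ℝ} (hR : 0 < R)
    (hd : DifferentiableOn ℂ φ {z | R < ‖z‖}) (hB : ∀ z, R < ‖z‖ → ‖φ z‖ ≤ B) :
    MeromorphicAt (fun x => φ x⁻¹) 0 := by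
  have hmaps : ∀ x ∈ ball (0 : ℂ) R⁻¹ \ {0}, R < ‖x⁻¹‖ := by
    rintro x ⟨hx, hx0⟩
    rw [norm_inv, lt_inv_comm₀ hR (norm_pos_iff.2 hx0)]
    simpa using hx
  have h1 := Complex.differentiableOn_update_limUnder_of_bddAbove (f := fun x => φ x⁻¹)
    (s := ball 0 R⁻¹) (c := 0)
    (ball_mem_nhds _ (by positivity))
    (hd.comp (fun x hx => (differentiableAt_inv hx.2).differentiableWithinAt) hmaps)
    ⟨B, by rintro _ ⟨x, hx, rfl⟩; exact hB _ (hmaps x hx)⟩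
  have h2 := (h1.analyticAt (ball_mem_nhds _ (by positivity))).meromorphicAt
  refine h2.congr ?_
  filter_upwards [self_mem_nhdsWithin] with x hx
  exact Function.update_of_ne hx _ _

/-- The case of Picard's great theorem in which the three omitted values are `0`, `1`, `∞`. -/
theorem meromorphicAt_comp_inv_of_omits {φ : ℂ → ℂ} {R : ℝ} (hR : 0 < R)
    (hd : DifferentiableOn ℂ φ {z | R < ‖z‖}) (h0 : ∀ z, R < ‖z‖ → φ z ≠ 0)
    (h1 : ∀ z, R < ‖z‖ → φ z ≠ 1) : MeromorphicAt (fun x => φ x⁻¹) 0 := by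
  by_cases hcase : ∀ ρ : ℝ, ∃ z, ρ ≤ ‖z‖ ∧ ‖φ z‖ ≤ 1
  · obtain ⟨B, hB⟩ := exists_schottky_circle 1
    obtain ⟨z₁, hz₁, hφ₁⟩ := hcase (R * Real.exp 16)
    have hRz : R < ‖z₁‖ := by
      refine lt_of_lt_of_le ?_ hz₁
      have := Real.add_one_le_exp (16 : ℝ)
      nlinarith
    have hB1 : ∀ z, ‖z‖ = ‖z₁‖ → ‖φ z‖ ≤ B := fun z hz => hB R φ hR hd h0 h1 z₁ z hz₁ hz hφ₁
    refine meromorphicAt_comp_inv_of_bounded (R := ‖z₁‖) (B := B) (by linarith)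
      (hd.mono fun z hz => hRz.trans hz) fun z hz => ?_
    obtain ⟨z₂, hz₂, hφ₂⟩ := hcase (max (R * Real.exp 16) (‖z‖ + 1))
    have hz₂' := (le_max_right _ _).trans hz₂
    have hB2 : ∀ z, ‖z‖ = ‖z₂‖ → ‖φ z‖ ≤ B := fun z hz =>
      hB R φ hR hd h0 h1 z₂ z ((le_max_left _ _).trans hz₂) hz hφ₂
    have hsub : closure (ball (0 : ℂ) ‖z₂‖ \ closedBall 0 ‖z₁‖) ⊆ {z | ‖z₁‖ ≤ ‖z‖ ∧ ‖z‖ ≤ ‖z₂‖} := by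
      refine closure_minimal ?_ ?_
      · rintro w ⟨hw, hw'⟩
        simp only [mem_ball, mem_closedBall, dist_zero_right, not_le] at hw hw'
        exact ⟨hw'.le, hw.le⟩
      · exact (isClosed_le continuous_const continuous_norm).inter
          (isClosed_le continuous_norm continuous_const)
    have hop : IsOpen (ball (0 : ℂ) ‖z₂‖ \ closedBall 0 ‖z₁‖) := isOpen_ball.sdiff isClosed_closedBall
    refine Complex.norm_le_of_forall_mem_frontier_norm_le
      (U := ball (0 : ℂ) ‖z₂‖ \ closedBall 0 ‖z₁‖) (isBounded_ball.subset sdiff_subset) ?_ ?_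
      (subset_closure ?_)
    · exact (hd.mono fun w hw => hRz.trans_le (hsub hw).1).diffContOnCl
    · intro w hw
      have hw1 := hsub hw.1
      have hw2 := hw.2
      rw [hop.interior_eq] at hw2
      simp only [Set.mem_sdiff, mem_ball, mem_closedBall, dist_zero_right, not_and, not_not] at hw2
      rcases hw1.2.lt_or_eq with h | h
      · exact hB1 w (le_antisymm (hw2 h) hw1.1)
      · exact hB2 w h
    · simp only [Set.mem_sdiff, mem_ball, mem_closedBall, dist_zero_right, not_le]
      exact ⟨by linarith, hz⟩
  · push Not at hcase
    obtain ⟨ρ, hρ⟩ := hcase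
    have h2 := meromorphicAt_comp_inv_of_bounded (φ := fun z => (φ z)⁻¹) (R := max R ρ) (B := 1)
      (lt_max_of_lt_left hR)
      ((hd.mono fun z hz => (le_max_left R ρ).trans_lt hz).fun_inv
        fun z hz => h0 z ((le_max_left _ _).trans_lt hz))
      (fun z hz => by
        rw [norm_inv]
        exact inv_le_one_of_one_le₀ (hρ z ((le_max_right _ _).trans_lt hz).le).le)
    simpa using h2.fun_inv

/-- Picard's little theorem, for the omitted values `0` and `1`. -/
theorem eq_of_differentiable_of_omits {f : ℂ → ℂ} (hf : Differentiable ℂ f) (h0 : ∀ z, f z ≠ 0)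
    (h1 : ∀ z, f z ≠ 1) (z w : ℂ) : f z = f w := by
  obtain ⟨B, -, hB⟩ := exists_schottky ‖f 0‖
  refine hf.apply_eq_apply_of_bounded (isBounded_iff_forall_norm_le.2 ⟨B, ?_⟩) z w
  rintro _ ⟨z, rfl⟩
  exact hB 0 (2 * (‖z‖ + 1)) f hf.differentiableOn (fun z _ => h0 z) (fun z _ => h1 z) le_rfl z
    (by simp)

/-- The finite part of a map to the sphere. -/
noncomputable def finMap (F : ℂ → OnePoint ℂ) (z : ℂ) : ℂ := finPart (F z)

theorem finPart_coe (z : ℂ) : finPart (z : OnePoint ℂ) = z := rfl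

theorem coe_finPart {u : OnePoint ℂ} (hu : u ≠ OnePoint.infty) : (finPart u : OnePoint ℂ) = u := by
  induction u using OnePoint.rec with
  | infty => exact absurd rfl hu
  | coe z => rfl

theorem totalize_coe (F : ℂ → OnePoint ℂ) (z : ℂ) : totalize F z = F z := rfl

theorem totalize_infty (F : ℂ → OnePoint ℂ) : totalize F OnePoint.infty = OnePoint.infty := rfl

theorem totalize_iterate_infty (F : ℂ → OnePoint ℂ) (n : ℕ) :
    (totalize F)^[n] OnePoint.infty = OnePoint.infty :=
  Function.iterate_fixed (totalize_infty F) n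

theorem iterate_ne_infty_of_le {F : ℂ → OnePoint ℂ} {u : OnePoint ℂ} {m n : ℕ} (hmn : m ≤ n)
    (h : (totalize F)^[n] u ≠ OnePoint.infty) : (totalize F)^[m] u ≠ OnePoint.infty := by
  intro e
  obtain ⟨j, rfl⟩ := Nat.exists_eq_add_of_le' hmn
  rw [Function.iterate_add_apply, e, totalize_iterate_infty] at h
  exact h rfl

theorem totalize_iterate_coe {F : ℂ → OnePoint ℂ} {z : ℂ} {n : ℕ}
    (h : (totalize F)^[n] z ≠ OnePoint.infty) : (totalize F)^[n] z = ((finMap F)^[n] z : ℂ) := by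
  induction n with
  | zero => rfl
  | succ n ih =>
    have h1 := ih (iterate_ne_infty_of_le n.le_succ h)
    rw [Function.iterate_succ_apply', h1, totalize_coe] at h ⊢
    rw [Function.iterate_succ_apply', finMap, coe_finPart h]

theorem continuousAt_totalize {F : ℂ → OnePoint ℂ} (hmero : ∀ z : ℂ, SphereMeroAt F z)
    {u : OnePoint ℂ} (hu : u ≠ OnePoint.infty) : ContinuousAt (totalize F) u := by
  induction u using OnePoint.rec with
  | infty => exact absurd rfl hu
  | coe z =>
    rw [OnePoint.continuousAt_coe]
    exact (hmero z).1

theorem analyticAt_finMap {F : ℂ → OnePoint ℂ} (hmero : ∀ z : ℂ, SphereMeroAt F z) {z : ℂ}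
    (hz : F z ≠ OnePoint.infty) : AnalyticAt ℂ (finMap F) z := by
  have h1 := (hmero z).2
  rw [← coe_finPart hz] at h1
  exact h1

theorem continuousAt_iterate {F : ℂ → OnePoint ℂ} (hmero : ∀ z : ℂ, SphereMeroAt F z)
    {n : ℕ} {u : OnePoint ℂ} (h : (totalize F)^[n] u ≠ OnePoint.infty) :
    ContinuousAt (totalize F)^[n] u := by
  induction n with
  | zero => exact continuousAt_id
  | succ n ih =>
    have h1 := iterate_ne_infty_of_le n.le_succ h
    rw [Function.iterate_succ']
    exact (continuousAt_totalize hmero h1).comp (ih h1)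

theorem isOpen_setOf_iterate_ne_infty {F : ℂ → OnePoint ℂ} (hmero : ∀ z : ℂ, SphereMeroAt F z)
    (n : ℕ) : IsOpen {z : ℂ | (totalize F)^[n] z ≠ OnePoint.infty} := by
  rw [isOpen_iff_mem_nhds]
  intro z hz
  have h1 := (continuousAt_iterate hmero hz).comp
    (OnePoint.continuous_coe (X := ℂ)).continuousAt
  exact h1.preimage_mem_nhds (isOpen_compl_singleton.mem_nhds hz)

theorem differentiableAt_iterate {F : ℂ → OnePoint ℂ} (hmero : ∀ z : ℂ, SphereMeroAt F z)
    {n : ℕ} {z : ℂ} (h : (totalize F)^[n] z ≠ OnePoint.infty) :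
    DifferentiableAt ℂ (finMap F)^[n] z := by
  induction n with
  | zero => exact differentiableAt_id
  | succ n ih =>
    have h1 := iterate_ne_infty_of_le n.le_succ h
    rw [Function.iterate_succ']
    refine (analyticAt_finMap hmero ?_).differentiableAt.comp z (ih h1)
    rw [Function.iterate_succ_apply', totalize_iterate_coe h1] at h
    exact h

theorem chordalDist_coe_le (z w : ℂ) : chordalDist z w ≤ 2 * dist z w := by
  change 2 * dist z w / (Real.sqrt (1 + ‖z‖ ^ 2) * Real.sqrt (1 + ‖w‖ ^ 2)) ≤ _
  refine div_le_self (by positivity) ?_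
  have h1 : 1 ≤ Real.sqrt (1 + ‖z‖ ^ 2) := Real.one_le_sqrt.2 (by nlinarith [sq_nonneg ‖z‖])
  have h2 : 1 ≤ Real.sqrt (1 + ‖w‖ ^ 2) := Real.one_le_sqrt.2 (by nlinarith [sq_nonneg ‖w‖])
  nlinarith

theorem chordalDist_coe_le_div (z w : ℂ) : chordalDist z w ≤ 4 * dist z w / (1 + ‖z‖) := by
  change 2 * dist z w / (Real.sqrt (1 + ‖z‖ ^ 2) * Real.sqrt (1 + ‖w‖ ^ 2)) ≤ _
  have h1 : (1 + ‖z‖) / 2 ≤ Real.sqrt (1 + ‖z‖ ^ 2) :=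
    Real.le_sqrt_of_sq_le (by nlinarith [sq_nonneg (‖z‖ - 1), norm_nonneg z])
  have h2 : 1 ≤ Real.sqrt (1 + ‖w‖ ^ 2) := Real.one_le_sqrt.2 (by nlinarith [sq_nonneg ‖w‖])
  have h3 := norm_nonneg z
  have hd : 0 ≤ dist z w := dist_nonneg
  rw [div_le_div_iff₀ (by positivity) (by positivity)]
  have h4 : (1 + ‖z‖) / 2 ≤ Real.sqrt (1 + ‖z‖ ^ 2) * Real.sqrt (1 + ‖w‖ ^ 2) := by nlinarith
  nlinarith

theorem exists_chordalDist_lt_imp (z : ℂ) {η : ℝ} (hη : 0 < η) :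
    ∃ δ > 0, ∀ w : ℂ, chordalDist z w < δ → dist z w < η := by
  have hz := norm_nonneg z
  refine ⟨min 1 η / (2 + ‖z‖) ^ 2, by positivity, fun w hw => ?_⟩
  change 2 * dist z w / (Real.sqrt (1 + ‖z‖ ^ 2) * Real.sqrt (1 + ‖w‖ ^ 2)) < _ at hw
  have h1 : Real.sqrt (1 + ‖z‖ ^ 2) ≤ 1 + ‖z‖ :=
    Real.sqrt_le_iff.2 ⟨by positivity, by nlinarith⟩
  have h2 : Real.sqrt (1 + ‖w‖ ^ 2) ≤ 1 + ‖z‖ + dist z w := by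
    have h3 : ‖w‖ ≤ ‖z‖ + dist z w := by
      rw [dist_eq_norm, norm_sub_rev]
      exact norm_le_norm_add_norm_sub' _ _
    exact Real.sqrt_le_iff.2 ⟨by positivity, by nlinarith [norm_nonneg w, dist_nonneg (x := z) (y := w)]⟩
  have h0 : 0 < Real.sqrt (1 + ‖z‖ ^ 2) * Real.sqrt (1 + ‖w‖ ^ 2) := by positivity
  rw [div_lt_div_iff₀ h0 (by positivity)] at hw
  have hd : 0 ≤ dist z w := dist_nonneg
  set d := dist z w
  set m := min 1 η
  have hm0 : 0 < m := by positivity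
  have hm1 : m ≤ 1 := min_le_left _ _
  have hm2 : m ≤ η := min_le_right _ _
  have h4 : Real.sqrt (1 + ‖z‖ ^ 2) * Real.sqrt (1 + ‖w‖ ^ 2) ≤ (1 + ‖z‖) * (1 + ‖z‖ + d) :=
    mul_le_mul h1 h2 (Real.sqrt_nonneg _) (by positivity)
  have h5 : 2 * d * (2 + ‖z‖) ^ 2 < m * ((1 + ‖z‖) * (1 + ‖z‖ + d)) :=
    hw.trans_le (mul_le_mul_of_nonneg_left h4 hm0.le)
  have h6 : m * ((1 + ‖z‖) * (1 + ‖z‖ + d)) ≤ m * (2 + ‖z‖) ^ 2 + d * (2 + ‖z‖) ^ 2 := by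
    have e1 : m * ((1 + ‖z‖) * d) ≤ d * (2 + ‖z‖) ^ 2 := by
      have : m * (1 + ‖z‖) ≤ (2 + ‖z‖) ^ 2 := by nlinarith
      nlinarith
    have e2 : m * ((1 + ‖z‖) * (1 + ‖z‖)) ≤ m * (2 + ‖z‖) ^ 2 := by
      apply mul_le_mul_of_nonneg_left _ hm0.le
      nlinarith
    nlinarith
  have h7 : d * (2 + ‖z‖) ^ 2 < m * (2 + ‖z‖) ^ 2 := by linarith
  exact (lt_of_mul_lt_mul_right h7 (by positivity)).trans_le hm2

theorem mem_meroFatou_iff {F : ℂ → OnePoint ℂ} {z : ℂ} : z ∈ MeroFatou F univ ↔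
    ∃ N : Set ℂ, IsOpen N ∧ z ∈ N ∧ (∀ n : ℕ, ∀ x ∈ N, (totalize F)^[n] x ≠ OnePoint.infty) ∧
      SphereEquicontOn (totalize F) ((fun t : ℂ => (t : OnePoint ℂ)) '' N) := by
  have hr : (fun t : ℂ => (t : OnePoint ℂ)) '' univ = {OnePoint.infty}ᶜ := by
    rw [image_univ]
    exact OnePoint.compl_infty.symm
  constructor
  · rintro ⟨N, hN, hz, ⟨h1, h2⟩ | ⟨n, -, h⟩⟩
    · refine ⟨N, hN, hz, fun n x hx => ?_, h2⟩
      have := h1 n (mem_image_of_mem _ (mem_image_of_mem _ hx))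
      rwa [hr] at this
    · exfalso
      have h3 : closure ((fun t : ℂ => (t : OnePoint ℂ)) '' univ) = univ := by
        rw [image_univ]
        exact (OnePoint.denseRange_coe (X := ℂ)).closure_range
      have := h (mem_image_of_mem _ (mem_image_of_mem _ hz))
      rw [h3] at this
      exact this (mem_univ _)
  · rintro ⟨N, hN, hz, h1, h2⟩
    refine ⟨N, hN, hz, Or.inl ⟨fun n => ?_, h2⟩⟩
    rintro _ ⟨_, ⟨x, hx, rfl⟩, rfl⟩
    rw [hr]
    exact h1 n x hx

theorem isOpen_meroFatou (F : ℂ → OnePoint ℂ) : IsOpen (MeroFatou F univ) := by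
  rw [isOpen_iff_forall_mem_open]
  intro z hz
  obtain ⟨N, hN, hzN, h⟩ := mem_meroFatou_iff.1 hz
  exact ⟨N, fun x hx => mem_meroFatou_iff.2 ⟨N, hN, hx, h⟩, hN, hzN⟩

theorem iterate_ne_infty_of_mem_meroFatou {F : ℂ → OnePoint ℂ} {z : ℂ}
    (hz : z ∈ MeroFatou F univ) (n : ℕ) : (totalize F)^[n] z ≠ OnePoint.infty := by
  obtain ⟨N, -, hzN, h, -⟩ := mem_meroFatou_iff.1 hz
  exact h n z hzN

/-- The Fatou set is backward invariant. -/
theorem mem_meroFatou_of_iterate {F : ℂ → OnePoint ℂ} (hmero : ∀ z : ℂ, SphereMeroAt F z)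
    {z w : ℂ} {n : ℕ} (h : (totalize F)^[n] z = w) (hw : w ∈ MeroFatou F univ) :
    z ∈ MeroFatou F univ := by
  obtain ⟨N, hN, hwN, h1, h2⟩ := mem_meroFatou_iff.1 hw
  have hz : (totalize F)^[n] z ≠ OnePoint.infty := by rw [h]; exact OnePoint.coe_ne_infty w
  have hDo := isOpen_setOf_iterate_ne_infty hmero n
  have hcont : ContinuousOn (finMap F)^[n] {z : ℂ | (totalize F)^[n] z ≠ OnePoint.infty} := fun x hx =>
    (differentiableAt_iterate hmero hx).continuousAt.continuousWithinAt
  refine mem_meroFatou_iff.2 ⟨{z : ℂ | (totalize F)^[n] z ≠ OnePoint.infty} ∩ (finMap F)^[n] ⁻¹' N,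
    hcont.isOpen_inter_preimage hDo hN, ⟨hz, ?_⟩, ?_, ?_⟩
  · rw [totalize_iterate_coe hz, OnePoint.coe_eq_coe] at h
    rwa [mem_preimage, h]
  · rintro m x ⟨hx, hxN⟩
    have h3 := h1 m _ hxN
    rw [← totalize_iterate_coe hx, ← Function.iterate_add_apply] at h3
    exact iterate_ne_infty_of_le (Nat.le_add_right m n) h3
  · rintro _ ⟨u, ⟨hu, huN⟩, rfl⟩ ε hε
    obtain ⟨δ₁, hδ₁, hδ₁'⟩ := h2 _ (mem_image_of_mem _ huN) ε hε
    have hfin : ∀ m ≤ n, ∀ x : ℂ, (totalize F)^[n] x ≠ OnePoint.infty →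
        (totalize F)^[m] x = ((finMap F)^[m] x : ℂ) := fun m hm x hx =>
      totalize_iterate_coe (iterate_ne_infty_of_le hm hx)
    have hev : ∀ᶠ v in 𝓝 u, ∀ m ∈ Finset.range (n + 1),
        dist ((finMap F)^[m] u) ((finMap F)^[m] v) < min (ε / 2) (δ₁ / 2) := by
      rw [Filter.eventually_all_finset]
      intro m hm
      have hm' : m ≤ n := by
        rw [Finset.mem_range] at hm
        lia
      have h3 := (differentiableAt_iterate hmero (iterate_ne_infty_of_le hm' hu)).continuousAt
      filter_upwards [h3 (ball_mem_nhds _ (by positivity : 0 < min (ε / 2) (δ₁ / 2)))] with v hv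
      rw [dist_comm]
      exact hv
    obtain ⟨η, hη, hη'⟩ := Metric.eventually_nhds_iff.1 hev
    obtain ⟨δ, hδ, hδ'⟩ := exists_chordalDist_lt_imp u hη
    refine ⟨δ, hδ, ?_⟩
    rintro _ ⟨v, ⟨hv, hvN⟩, rfl⟩ huv m
    have h4 := hη' (y := v) (by rw [dist_comm]; exact hδ' v huv)
    rcases le_total m n with hm | hm
    · rw [hfin m hm u hu, hfin m hm v hv]
      refine (chordalDist_coe_le _ _).trans_lt ?_
      have := (h4 m (by rw [Finset.mem_range]; lia)).trans_le (min_le_left _ _)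
      linarith
    · obtain ⟨j, rfl⟩ := Nat.exists_eq_add_of_le' hm
      rw [Function.iterate_add_apply, Function.iterate_add_apply, hfin n le_rfl u hu,
        hfin n le_rfl v hv]
      refine hδ₁' _ (mem_image_of_mem _ hvN) ((chordalDist_coe_le _ _).trans_lt ?_) j
      have := (h4 n (by simp)).trans_le (min_le_right _ _)
      linarith

theorem exists_sphere_extension {F : ℂ → OnePoint ℂ} {R : ℝ} (hfin : ∀ z, R < ‖z‖ → F z ≠ OnePoint.infty)
    (h : MeromorphicAt (fun x => finMap F x⁻¹) 0) :
    ∃ g : OnePoint ℂ → OnePoint ℂ, SphereAnalyticAt g OnePoint.infty ∧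
      ∃ r : ℝ, ∀ z : ℂ, r < ‖z‖ → g z = F z := by
  have hev : ∀ᶠ z in Bornology.cobounded ℂ, F z = (finMap F z : ℂ) := by
    filter_upwards [(eventually_cobounded_le_norm (R + 1))] with z hz
    exact (coe_finPart (hfin z (by linarith))).symm
  have hcc : coclosedCompact ℂ = Bornology.cobounded ℂ := by
    rw [coclosedCompact_eq_cocompact, Metric.cobounded_eq_cocompact]
  have hev0 : ∀ᶠ x in 𝓝[≠] (0 : ℂ), F x⁻¹ = (finMap F x⁻¹ : ℂ) :=
    Filter.tendsto_inv₀_nhdsNE_zero.eventually hev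
  have key : ∀ (v : OnePoint ℂ), Tendsto (fun z => (finMap F z : OnePoint ℂ))
      (Bornology.cobounded ℂ) (𝓝 v) →
      AnalyticAt ℂ (Function.update (fun x => sphereChart v (F x⁻¹)) 0 (sphereChart v v)) 0 →
      ∃ g : OnePoint ℂ → OnePoint ℂ, SphereAnalyticAt g OnePoint.infty ∧
      ∃ r : ℝ, ∀ z : ℂ, r < ‖z‖ → g z = F z := by
    intro v hv hana
    let g : OnePoint ℂ → OnePoint ℂ := fun u => Option.casesOn u v F
    refine ⟨g, ⟨?_, ?_⟩, 0, fun z _ => rfl⟩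
    · rw [OnePoint.continuousAt_infty', hcc]
      refine hv.congr' ?_
      filter_upwards [hev] with z hz
      exact hz.symm
    · change AnalyticAt ℂ _ (0 : ℂ)
      convert hana using 1
      funext x
      by_cases hx : x = 0
      · subst hx
        rw [Function.update_self]
        change sphereChart v (g (if (0 : ℂ) = 0 then OnePoint.infty else _)) = _
        rw [if_pos rfl]
        rfl
      · rw [Function.update_of_ne hx]
        change sphereChart v (g (if x = 0 then OnePoint.infty else _)) = _
        rw [if_neg hx]
        rfl
  by_cases hord : 0 ≤ meromorphicOrderAt (fun x => finMap F x⁻¹) 0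
  · obtain ⟨c, hc⟩ := (tendsto_nhds_iff_meromorphicOrderAt_nonneg h).2 hord
    refine key c ?_ ?_
    · have := hc.comp (Filter.tendsto_inv₀_cobounded' (α := ℂ))
      simp only [Function.comp_def, inv_inv] at this
      exact (OnePoint.continuous_coe.tendsto c).comp this
    · refine MeromorphicAt.analyticAt (h.congr ?_) ?_
      · filter_upwards [self_mem_nhdsWithin] with x hx
        rw [Function.update_of_ne hx]
        rfl
      · rw [continuousAt_update_same]
        exact hc
  · push Not at hord
    have ht := (tendsto_cobounded_iff_meromorphicOrderAt_neg h).2 hord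
    refine key OnePoint.infty ?_ ?_
    · have := ht.comp (Filter.tendsto_inv₀_cobounded' (α := ℂ))
      simp only [Function.comp_def, inv_inv] at this
      rw [← hcc] at this
      rw [← hcc]
      exact OnePoint.tendsto_coe_infty.comp this
    · have heq : ∀ᶠ x in 𝓝[≠] (0 : ℂ), (finMap F x⁻¹)⁻¹ = sphereChart OnePoint.infty (F x⁻¹) := by
        filter_upwards [hev0] with x hx
        rw [hx]
        change _ = finPart (if finMap F x⁻¹ = 0 then OnePoint.infty else ((finMap F x⁻¹)⁻¹ : ℂ))
        split_ifs with h0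
        · rw [h0, inv_zero]; rfl
        · rfl
      refine MeromorphicAt.analyticAt (h.fun_inv.congr ?_) ?_
      · filter_upwards [self_mem_nhdsWithin, heq] with x hx hx'
        rw [Function.update_of_ne hx]
        exact hx'
      · rw [continuousAt_update_same]
        have h5 : sphereChart OnePoint.infty OnePoint.infty = 0 := by
          change finPart ((0 : ℂ) : OnePoint ℂ) = 0
          rfl
        rw [h5]
        exact ((Filter.tendsto_inv₀_cobounded (α := ℂ)).comp ht).congr' heq

theorem not_forall_injOn_ball {F : ℂ → OnePoint ℂ} (hmero : ∀ z : ℂ, SphereMeroAt F z)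
    (htrans : ¬∃ g : OnePoint ℂ → OnePoint ℂ, SphereAnalyticAt g OnePoint.infty ∧
      ∃ r : ℝ, ∀ z : ℂ, r < ‖z‖ → g ((z : OnePoint ℂ)) = F z) :
    ¬∀ L : ℝ, (∀ z ∈ ball (0 : ℂ) L, F z ≠ OnePoint.infty) ∧ InjOn (finMap F) (ball 0 L) := by
  intro h
  have hfin : ∀ z, F z ≠ OnePoint.infty := fun z => (h (‖z‖ + 1)).1 z (by simp)
  have hinj : Function.Injective (finMap F) := fun z w hzw =>
    (h (max ‖z‖ ‖w‖ + 1)).2 (by simpa using (le_max_left ‖z‖ ‖w‖).trans_lt (lt_add_one _))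
      (by simpa using (le_max_right ‖z‖ ‖w‖).trans_lt (lt_add_one _)) hzw
  obtain ⟨a, b, hab⟩ := exists_affine_of_injective
    (fun z => (analyticAt_finMap hmero (hfin z)).differentiableAt) hinj
  refine htrans (exists_sphere_extension (R := 0) (fun z _ => hfin z) ?_)
  simp only [hab]
  fun_prop

/-- A disc on which all iterates are finite and injective lies in the Fatou set. -/
theorem ball_subset_meroFatou {F : ℂ → OnePoint ℂ} (hmero : ∀ z : ℂ, SphereMeroAt F z)
    (htrans : ¬∃ g : OnePoint ℂ → OnePoint ℂ, SphereAnalyticAt g OnePoint.infty ∧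
      ∃ r : ℝ, ∀ z : ℂ, r < ‖z‖ → g ((z : OnePoint ℂ)) = F z)
    {c : ℂ} {r : ℝ} (hfin : ∀ n : ℕ, ∀ x ∈ ball c r, (totalize F)^[n] x ≠ OnePoint.infty)
    (hinj : ∀ n : ℕ, InjOn (finMap F)^[n] (ball c r)) : ball c r ⊆ MeroFatou F univ := by
  have hdiff : ∀ n, DifferentiableOn ℂ (finMap F)^[n] (ball c r) := fun n x hx =>
    (differentiableAt_iterate hmero (hfin n x hx)).differentiableWithinAt
  by_cases hA : ∃ A, ∀ i : ℕ, ∃ α, ‖α‖ ≤ A ∧ ∀ x ∈ ball c r, (finMap F)^[i] x ≠ α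
  · obtain ⟨A, hA⟩ := hA
    have hA0 : 0 ≤ A := by
      obtain ⟨α, hα, -⟩ := hA 0
      exact (norm_nonneg α).trans hα
    obtain ⟨B, hB1, hB⟩ := exists_bound_of_injOn_of_omits
    intro z hz
    refine mem_meroFatou_iff.2 ⟨_, isOpen_ball, hz, hfin, ?_⟩
    rintro _ ⟨u, hu, rfl⟩ ε hε
    have hr' : 0 < r - dist u c := by
      rw [mem_ball] at hu
      linarith
    set r' := r - dist u c with hr'def
    have hsub : ball u r' ⊆ ball c r := ball_subset_ball' (by linarith)
    have hest : ∀ i : ℕ, ∀ v ∈ ball u (r' / 4),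
        chordalDist ((finMap F)^[i] u : ℂ) ((finMap F)^[i] v : ℂ) ≤
          32 * B / r' * (1 + A) * dist u v := by
      intro i v hv
      obtain ⟨α, hα, hαi⟩ := hA i
      have h1 := hB u r' (finMap F)^[i] α ((hdiff i).mono hsub) ((hinj i).mono hsub)
        (fun x hx => hαi x (hsub hx))
      have h2 : ∀ y ∈ ball u (r' / 4), ‖deriv (finMap F)^[i] y‖ ≤
          8 * B / r' * ‖(finMap F)^[i] u - α‖ := by
        intro y hy
        have hyb : ball y (r' / 4) ⊆ ball u (r' / 2) :=
          ball_subset_ball' (by rw [mem_ball] at hy; linarith)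
        have h3 := norm_deriv_le_of_norm_le (h := fun x => (finMap F)^[i] x - α)
          (c := y) (by positivity : 0 < r' / 4)
          (((hdiff i).mono (hyb.trans ((ball_subset_ball (by linarith)).trans hsub))).sub_const α)
          (fun x hx => h1 x (hyb hx))
        rw [deriv_sub_const] at h3
        refine h3.trans (le_of_eq ?_)
        field_simp
        ring
      have h3 := (convex_ball u (r' / 4)).norm_image_sub_le_of_norm_deriv_le (𝕜 := ℂ)
        (fun y hy => differentiableAt_iterate hmero (hfin i y
          (hsub (ball_subset_ball (by linarith) hy)))) h2 (mem_ball_self (by positivity)) hv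
      rw [norm_sub_rev, norm_sub_rev v u, ← dist_eq_norm, ← dist_eq_norm u v] at h3
      refine (chordalDist_coe_le_div _ _).trans ?_
      rw [div_le_iff₀ (by positivity)]
      have h4 : ‖(finMap F)^[i] u - α‖ ≤ (1 + A) * (1 + ‖(finMap F)^[i] u‖) := by
        have := norm_sub_le ((finMap F)^[i] u) α
        nlinarith [norm_nonneg ((finMap F)^[i] u)]
      calc 4 * dist ((finMap F)^[i] u) ((finMap F)^[i] v)
          ≤ 4 * (8 * B / r' * ‖(finMap F)^[i] u - α‖ * dist u v) := by linarith
        _ ≤ 4 * (8 * B / r' * ((1 + A) * (1 + ‖(finMap F)^[i] u‖)) * dist u v) := by gcongr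
        _ = _ := by ring
    have hK : 0 < 32 * B / r' * (1 + A) := by positivity
    obtain ⟨δ, hδ, hδ'⟩ := exists_chordalDist_lt_imp u
      (by positivity : 0 < min (r' / 4) (ε / (32 * B / r' * (1 + A))))
    refine ⟨δ, hδ, ?_⟩
    rintro _ ⟨v, hv, rfl⟩ huv n
    have h5 := hδ' v huv
    rw [totalize_iterate_coe (hfin n u hu), totalize_iterate_coe (hfin n v hv)]
    refine (hest n v (by rw [mem_ball, dist_comm]; exact h5.trans_le (min_le_left _ _))).trans_lt ?_
    have h6 := h5.trans_le (min_le_right _ _)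
    rw [lt_div_iff₀ hK] at h6
    linarith
  · push Not at hA
    refine absurd (fun L => ?_) (not_forall_injOn_ball hmero htrans)
    obtain ⟨i, hi⟩ := hA L
    refine ⟨fun z hz => ?_, fun z hz w hw hzw => ?_⟩
    · obtain ⟨x, hx, rfl⟩ := hi z (mem_ball_zero_iff.1 hz).le
      have h1 := hfin (i + 1) x hx
      rwa [Function.iterate_succ_apply', totalize_iterate_coe (hfin i x hx)] at h1
    · obtain ⟨x, hx, rfl⟩ := hi z (mem_ball_zero_iff.1 hz).le
      obtain ⟨y, hy, rfl⟩ := hi w (mem_ball_zero_iff.1 hw).le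
      have h1 : x = y := hinj (i + 1) hx hy (by
        rw [Function.iterate_succ_apply', Function.iterate_succ_apply']
        exact hzw)
      rw [h1]

theorem mem_meroPostsingular_of_mem {F : ℂ → OnePoint ℂ} {S : Set (OnePoint ℂ)} {z : ℂ}
    (hz : (z : OnePoint ℂ) ∈ S) : (z : OnePoint ℂ) ∈ MeroPostsingular F univ S :=
  subset_closure (mem_iUnion.2 ⟨0, z, ⟨hz, OnePoint.coe_ne_infty z, by simp⟩, rfl⟩)

theorem totalize_mem_meroPostsingular {F : ℂ → OnePoint ℂ} (hmero : ∀ z : ℂ, SphereMeroAt F z)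
    {S : Set (OnePoint ℂ)} {z : ℂ} (hz : (z : OnePoint ℂ) ∈ MeroPostsingular F univ S) :
    F z ∈ MeroPostsingular F univ S := by
  have h1 := (isOpen_compl_singleton (x := (OnePoint.infty : OnePoint ℂ))).closure_inter
    ⟨hz, OnePoint.coe_ne_infty z⟩
  refine closure_mono ?_ (mem_closure_image (f := totalize F) (x := (z : OnePoint ℂ))
    (continuousAt_totalize hmero (OnePoint.coe_ne_infty z)) h1)
  rintro _ ⟨v, ⟨hv, hv'⟩, rfl⟩
  obtain ⟨n, u, ⟨huS, hu, hun⟩, rfl⟩ := mem_iUnion.1 hv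
  refine mem_iUnion.2 ⟨n + 1, u, ⟨huS, hu, fun k hk => ?_⟩, Function.iterate_succ_apply' _ _ _⟩
  rcases (Nat.lt_succ_iff.1 hk).lt_or_eq with h | rfl
  · exact hun k h
  · exact ⟨_, mem_univ _, coe_finPart hv'⟩

theorem deriv_finMap_ne_zero {F : ℂ → OnePoint ℂ} (hmero : ∀ z : ℂ, SphereMeroAt F z)
    {S : Set (OnePoint ℂ)} (hS : MeroSingularSet F univ S) {z : ℂ} (hz : F z ≠ OnePoint.infty)
    (hzS : F z ∉ S) : deriv (finMap F) z ≠ 0 := by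
  obtain ⟨hSc, ⟨hmaps, hcov⟩, -⟩ := hS
  obtain ⟨U, hU, hzU, hinj⟩ := hcov.isLocalHomeomorph.isLocallyInjective ⟨z, mem_univ z, hzS⟩
  obtain ⟨V, hV, rfl⟩ := isOpen_induced_iff.1 hU
  have hFc : Continuous F := continuous_iff_continuousAt.2 fun z => (hmero z).1
  have hopen : IsOpen (V ∩ (F ⁻¹' Sᶜ ∩ F ⁻¹' {OnePoint.infty}ᶜ)) :=
    hV.inter ((hSc.isClosed.isOpen_compl.preimage hFc).inter
      (isOpen_compl_singleton.preimage hFc))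
  refine deriv_ne_zero_of_injOn hopen
    (fun x hx => (analyticAt_finMap hmero hx.2.2).differentiableAt.differentiableWithinAt)
    (fun x hx y hy hxy => ?_) (c := z) ⟨hzU, hzS, hz⟩
  have h1 : F x = F y := by
    rw [← coe_finPart hx.2.2, ← coe_finPart hy.2.2]
    exact congrArg _ hxy
  exact congrArg Subtype.val (@hinj ⟨x, mem_univ x, hx.2.1⟩ hx.1 ⟨y, mem_univ y, hy.2.1⟩ hy.1
    (Subtype.ext h1))

theorem exists_lift_of_singular {F : ℂ → OnePoint ℂ} (hmero : ∀ z : ℂ, SphereMeroAt F z)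
    {S : Set (OnePoint ℂ)} (hS : MeroSingularSet F univ S) {Y : Set ℂ} (hY : Convex ℝ Y)
    (hYo : IsOpen Y) {h : ℂ → ℂ} (hh : DifferentiableOn ℂ h Y)
    (hhS : ∀ y ∈ Y, (h y : OnePoint ℂ) ∉ S) {y₀ z₀ : ℂ} (hy₀ : y₀ ∈ Y) (hz₀ : F z₀ = h y₀) :
    ∃ Ψ : ℂ → ℂ, DifferentiableOn ℂ Ψ Y ∧ Ψ y₀ = z₀ ∧ ∀ y ∈ Y, F (Ψ y) = h y := by
  obtain ⟨hmaps, hcov⟩ := hS.2.1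
  have : SimplyConnectedSpace Y := hY.isSimplyConnected' ⟨y₀, hy₀⟩
  have : LocallyPathConnectedSpace Y := hYo.locallyPathConnectedSpace
  have hhc : Continuous fun y : Y => (⟨h y, hhS y y.2⟩ : (Sᶜ : Set (OnePoint ℂ))) :=
    Continuous.subtype_mk (OnePoint.continuous_coe.comp hh.continuousOn.domRestrict) _
  obtain ⟨Φ, ⟨hΦ0, hΦ⟩, -⟩ := hcov.existsUnique_continuousMap_lifts ⟨_, hhc⟩ ⟨y₀, hy₀⟩
    ⟨z₀, mem_univ _, by rw [mem_preimage, hz₀]; exact hhS _ hy₀⟩ (Subtype.ext hz₀)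
  classical
  let Ψ : ℂ → ℂ := fun y => if hy : y ∈ Y then Φ ⟨y, hy⟩ else 0
  have hΨ : ∀ y (hy : y ∈ Y), Ψ y = Φ ⟨y, hy⟩ := fun y hy => dif_pos hy
  have hΨF : ∀ y ∈ Y, F (Ψ y) = h y := by
    intro y hy
    rw [hΨ y hy]
    exact congrArg Subtype.val (congrFun hΦ ⟨y, hy⟩)
  have hΨc : ContinuousOn Ψ Y := by
    rw [continuousOn_iff_continuous_domRestrict]
    refine (continuous_subtype_val.comp Φ.continuous).congr fun y => (hΨ y y.2).symm
  refine ⟨Ψ, fun y hy => ?_, ?_, hΨF⟩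
  · have hfin : F (Ψ y) ≠ OnePoint.infty := by
      rw [hΨF y hy]
      exact OnePoint.coe_ne_infty _
    have hcomp : finMap F ∘ Ψ =ᶠ[𝓝 y] h := by
      filter_upwards [hYo.mem_nhds hy] with x hx
      rw [Function.comp_apply, finMap, hΨF x hx, finPart_coe]
    exact (HasDerivAt.of_comp_left (hΨc.continuousAt (hYo.mem_nhds hy))
      (analyticAt_finMap hmero hfin).differentiableAt.hasDerivAt
      (hh.differentiableAt (hYo.mem_nhds hy)).hasDerivAt
      (deriv_finMap_ne_zero hmero hS hfin (by rw [hΨF y hy]; exact hhS y hy))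
      hcomp).differentiableAt.differentiableWithinAt
  · rw [hΨ y₀ hy₀, hΦ0]

/-- Holomorphic lifts through iterates of maps avoiding the postsingular set. -/
theorem exists_lift_iterate {F : ℂ → OnePoint ℂ} (hmero : ∀ z : ℂ, SphereMeroAt F z)
    {S : Set (OnePoint ℂ)} (hS : MeroSingularSet F univ S) {Y : Set ℂ} (hY : Convex ℝ Y)
    (hYo : IsOpen Y) {h : ℂ → ℂ} (hh : DifferentiableOn ℂ h Y)
    (hhP : ∀ y ∈ Y, (h y : OnePoint ℂ) ∉ MeroPostsingular F univ S) {y₀ z₀ : ℂ} (hy₀ : y₀ ∈ Y)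
    {n : ℕ} (hz₀ : (totalize F)^[n] z₀ = h y₀) :
    ∃ Ψ : ℂ → ℂ, DifferentiableOn ℂ Ψ Y ∧ Ψ y₀ = z₀ ∧
      ∀ y ∈ Y, (totalize F)^[n] (Ψ y) = h y := by
  induction n generalizing h with
  | zero => exact ⟨h, hh, (OnePoint.coe_injective hz₀).symm, fun y _ => rfl⟩
  | succ n ih =>
    have hfin : (totalize F)^[n] z₀ ≠ OnePoint.infty :=
      iterate_ne_infty_of_le n.le_succ (by rw [hz₀]; exact OnePoint.coe_ne_infty _)
    have hw := totalize_iterate_coe hfin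
    rw [Function.iterate_succ_apply', hw] at hz₀
    obtain ⟨Ψ₁, hd, h0, hΨ₁⟩ := exists_lift_of_singular hmero hS hY hYo hh
      (fun y hy hyS => hhP y hy (mem_meroPostsingular_of_mem hyS)) hy₀ hz₀
    obtain ⟨Ψ, hΨd, hΨ0, hΨ⟩ := ih hd (fun y hy hyP => hhP y hy (by
      rw [← hΨ₁ y hy]
      exact totalize_mem_meroPostsingular hmero hyP)) (by rw [hw, h0])
    refine ⟨Ψ, hΨd, hΨ0, fun y hy => ?_⟩
    rw [Function.iterate_succ_apply', hΨ y hy]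
    exact hΨ₁ y hy

/-- The properties of an invariant Baker domain `W` of the `q`-th iterate of a transcendental
meromorphic function which are used below. -/
structure IsBakerDomain (F : ℂ → OnePoint ℂ) (W : Set ℂ) (q : ℕ) : Prop where
  mero : ∀ z : ℂ, SphereMeroAt F z
  trans : ¬∃ g : OnePoint ℂ → OnePoint ℂ, SphereAnalyticAt g OnePoint.infty ∧
      ∃ r : ℝ, ∀ z : ℂ, r < ‖z‖ → g ((z : OnePoint ℂ)) = F z
  one_le : 1 ≤ q
  nonempty : W.Nonempty
  isOpen : IsOpen W
  isPreconnected : IsPreconnected W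
  subset_fatou : W ⊆ MeroFatou F univ
  subset_of_isPreconnected : ∀ N : Set ℂ, IsPreconnected N → N ⊆ MeroFatou F univ →
    (N ∩ W).Nonempty → N ⊆ W
  mapsTo : MapsTo (finMap F)^[q] W W
  escapes : ∀ K : Set ℂ, K ⊆ W → IsCompact K → ∀ R : ℝ, ∃ N : ℕ, ∀ n ≥ N, ∀ z ∈ K,
    R < ‖(finMap F)^[n * q] z‖

namespace IsBakerDomain

variable {F : ℂ → OnePoint ℂ} {W : Set ℂ} {q : ℕ}

theorem iterate_ne_infty (h : IsBakerDomain F W q) {z : ℂ} (hz : z ∈ W) (n : ℕ) :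
    (totalize F)^[n] z ≠ OnePoint.infty :=
  iterate_ne_infty_of_mem_meroFatou (h.subset_fatou hz) n

theorem ne_infty (h : IsBakerDomain F W q) {z : ℂ} (hz : z ∈ W) : F z ≠ OnePoint.infty :=
  h.iterate_ne_infty hz 1

theorem iterate_eq (h : IsBakerDomain F W q) {z : ℂ} (hz : z ∈ W) (n : ℕ) :
    (totalize F)^[n] z = ((finMap F)^[n] z : ℂ) :=
  totalize_iterate_coe (h.iterate_ne_infty hz n)

theorem differentiableOn (h : IsBakerDomain F W q) (n : ℕ) :
    DifferentiableOn ℂ (finMap F)^[n] W := fun _ hz =>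
  (differentiableAt_iterate h.mero (h.iterate_ne_infty hz n)).differentiableWithinAt

theorem mapsTo_mul (h : IsBakerDomain F W q) (n : ℕ) : MapsTo (finMap F)^[n * q] W W := by
  rw [mul_comm, Function.iterate_mul]
  exact h.mapsTo.iterate n

theorem mem_of_mem_closure (h : IsBakerDomain F W q) {b : ℂ} (hb : b ∈ closure W)
    (hbF : b ∈ MeroFatou F univ) : b ∈ W := by
  obtain ⟨r, hr, hrF⟩ := Metric.isOpen_iff.1 (isOpen_meroFatou F) b hbF
  refine h.subset_of_isPreconnected (ball b r) (convex_ball b r).isPreconnected hrF ?_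
    (mem_ball_self hr)
  exact mem_closure_iff.1 hb _ isOpen_ball (mem_ball_self hr)

theorem iterate_ne_self (h : IsBakerDomain F W q) {z : ℂ} (hz : z ∈ W) {n : ℕ} (hn : n ≠ 0) :
    (finMap F)^[n] z ≠ z := by
  intro e
  obtain ⟨N, hN⟩ := h.escapes {z} (singleton_subset_iff.2 hz) isCompact_singleton ‖z‖
  have h1 := hN (n * N) (Nat.le_mul_of_pos_left N (Nat.pos_of_ne_zero hn)) z rfl
  rw [mul_assoc, Function.iterate_mul, Function.iterate_fixed e] at h1
  exact lt_irrefl _ h1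

theorem mem_fatou_of_apply_eq (h : IsBakerDomain F W q) {z b : ℂ} (hz : z ∈ W)
    (hb : finMap F z = b) : b ∈ MeroFatou F univ := by
  have h1 : (totalize F)^[q - 1] b = ((finMap F)^[q] z : ℂ) := by
    have h2 : totalize F z = b := by
      rw [totalize_coe, ← hb]
      exact (coe_finPart (h.ne_infty hz)).symm
    rw [← h2, ← Function.iterate_succ_apply, Nat.succ_eq_add_one, Nat.sub_add_cancel h.one_le,
      h.iterate_eq hz]
  exact mem_meroFatou_of_iterate h.mero h1 (h.subset_fatou (h.mapsTo hz))

theorem ne_univ (h : IsBakerDomain F W q) : W ≠ univ := by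
  rintro rfl
  set f := finMap F with hf
  have hfd : Differentiable ℂ f := differentiableOn_univ.1 (h.differentiableOn 1)
  have hfix : ∀ z, f z - z ≠ 0 := fun z => sub_ne_zero.2 (h.iterate_ne_self (mem_univ z) one_ne_zero)
  have h2 : ∀ z, f (f z) - z ≠ 0 := fun z =>
    sub_ne_zero.2 (h.iterate_ne_self (mem_univ z) two_ne_zero)
  have hconst := eq_of_differentiable_of_omits (f := fun z => (f (f z) - z) / (f z - z))
    (((hfd.comp hfd).sub differentiable_id).div (hfd.sub differentiable_id) hfix)
    (fun z => div_ne_zero (h2 z) (hfix z)) (fun z e => by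
      rw [div_eq_one_iff_eq (hfix z)] at e
      exact hfix (f z) (by linear_combination e))
  set c := (f (f 0) - 0) / (f 0 - 0) with hc
  have hc0 : c ≠ 0 := div_ne_zero (h2 0) (hfix 0)
  have hc1 : c ≠ 1 := fun e => by
    rw [hc, div_eq_one_iff_eq (hfix 0)] at e
    exact hfix (f 0) (by linear_combination e)
  have hfun : ∀ z, f (f z) - z = c * (f z - z) := fun z => by
    rw [← div_eq_iff (hfix z)]
    exact hconst z 0
  have hder : ∀ z, deriv f z * (deriv f (f z) - c) = 1 - c := by
    intro z
    have e1 : HasDerivAt (fun z => f (f z) - z) (deriv f (f z) * deriv f z - 1) z :=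
      ((hfd (f z)).hasDerivAt.comp z (hfd z).hasDerivAt).sub (hasDerivAt_id z)
    have e2 : HasDerivAt (fun z => c * (f z - z)) (c * (deriv f z - 1)) z :=
      ((hfd z).hasDerivAt.sub (hasDerivAt_id z)).const_mul c
    rw [← funext hfun] at e2
    linear_combination e1.unique e2
  have h1c : 1 - c ≠ 0 := sub_ne_zero.2 hc1.symm
  have hd0 : ∀ z, deriv f z ≠ 0 := fun z => left_ne_zero_of_mul (by rw [hder z]; exact h1c)
  have hd1 : ∀ z, deriv f (f z) - c ≠ 0 := fun z =>
    right_ne_zero_of_mul (by rw [hder z]; exact h1c)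
  have hconst2 := eq_of_differentiable_of_omits (f := fun z => deriv f (f z) / c)
    (((hfd.deriv).comp hfd).div_const c) (fun z => div_ne_zero (hd0 _) hc0) (fun z e => by
      rw [div_eq_one_iff_eq hc0] at e
      exact hd1 z (sub_eq_zero.2 e))
  have hd : ∀ z, deriv f z = deriv f 0 := by
    intro z
    have e1 : deriv f (f z) = deriv f (f 0) := by
      have := hconst2 z 0
      field_simp at this
      exact this
    have e2 := hder z
    rw [e1, ← hder 0] at e2
    exact mul_right_cancel₀ (hd1 0) e2
  have haff : ∀ z, f z = deriv f 0 * z + f 0 := by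
    intro z
    have e := is_const_of_deriv_eq_zero (f := fun z => f z - deriv f 0 * z)
      (hfd.sub (by fun_prop)) (fun x => by
        have e1 : HasDerivAt (fun z => f z - deriv f 0 * z) (deriv f x - deriv f 0 * 1) x :=
          (hfd x).hasDerivAt.sub ((hasDerivAt_id x).const_mul _)
        rw [e1.deriv, hd x]
        ring) z 0
    simp only [mul_zero, sub_zero] at e
    linear_combination e
  refine h.trans (exists_sphere_extension (R := 0) (fun z _ => h.ne_infty (mem_univ z)) ?_)
  rw [← hf, show (fun x : ℂ => f x⁻¹) = fun x => deriv f 0 * x⁻¹ + f 0 from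
    funext fun x => haff x⁻¹]
  fun_prop

/-- The complement of a Baker domain is unbounded. -/
theorem not_isBounded_compl (h : IsBakerDomain F W q) : ¬Bornology.IsBounded Wᶜ := by
  intro hb
  obtain ⟨R₀, hR₀⟩ := isBounded_iff_forall_norm_le.1 hb
  obtain ⟨b, hbf⟩ := nonempty_frontier_iff.2 ⟨h.nonempty, h.ne_univ⟩
  rw [h.isOpen.frontier_eq] at hbf
  have hbF : b ∉ MeroFatou F univ := fun hF => hbf.2 (h.mem_of_mem_closure hbf.1 hF)
  set R := max 1 (max R₀ ‖b‖) with hR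
  have hRW : ∀ z, R < ‖z‖ → z ∈ W := fun z hz => by
    by_contra hzW
    have := hR₀ z hzW
    have h1 : R₀ ≤ R := (le_max_left _ _).trans (le_max_right _ _)
    linarith
  have hRb : ∀ z, R < ‖z‖ → z - b ≠ 0 := fun z hz e => by
    rw [sub_eq_zero] at e
    have h1 : ‖b‖ ≤ R := (le_max_right _ _).trans (le_max_right _ _)
    rw [e] at hz
    linarith
  have hmer := meromorphicAt_comp_inv_of_omits (φ := fun z => (finMap F z - b) / (z - b)) (R := R)
    (by positivity)
    ((((h.differentiableOn 1).mono hRW).sub_const b).fun_div (by fun_prop) hRb)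
    (fun z hz => div_ne_zero (fun e => hbF (h.mem_fatou_of_apply_eq (hRW z hz) (sub_eq_zero.1 e)))
      (hRb z hz))
    (fun z hz e => by
      rw [div_eq_one_iff_eq (hRb z hz)] at e
      exact h.iterate_ne_self (hRW z hz) one_ne_zero (sub_left_injective e))
  refine h.trans (exists_sphere_extension (R := R) (fun z hz => h.ne_infty (hRW z hz)) ?_)
  have hmer2 : MeromorphicAt (fun x : ℂ => b + (x⁻¹ - b) * ((finMap F x⁻¹ - b) / (x⁻¹ - b))) 0 :=
    (MeromorphicAt.const b 0).add (((MeromorphicAt.id 0).inv.sub (MeromorphicAt.const b 0)).mul hmer)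
  refine hmer2.congr ?_
  filter_upwards [Filter.tendsto_inv₀_nhdsNE_zero.eventually (eventually_cobounded_le_norm (R + 1))]
    with x hx
  rw [mul_div_cancel₀ _ (hRb x⁻¹ (by linarith))]
  ring

end IsBakerDomain

/-- The iterates of `f^q`, translated so that `a` becomes the origin. -/
noncomputable def shiftedIterate (F : ℂ → OnePoint ℂ) (q : ℕ) (a : ℂ) (n : ℕ) (z : ℂ) : ℂ :=
  (finMap F)^[n * q] z - a

/-- A compact connected set `K` joining a point of a Baker domain to its image, with a compact
connected neighbourhood `V` of `K` that contains the image of `K`. -/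
structure IsBakerFrame (F : ℂ → OnePoint ℂ) (W : Set ℂ) (q : ℕ) (a x₀ : ℂ) (K V : Set ℂ)
    (r : ℝ) : Prop extends IsBakerDomain F W q where
  notMem : a ∉ W
  isCompact_K : IsCompact K
  isPreconnected_K : IsPreconnected K
  mem_K : x₀ ∈ K
  apply_mem_K : (finMap F)^[q] x₀ ∈ K
  isCompact_V : IsCompact V
  isPreconnected_V : IsPreconnected V
  V_subset : V ⊆ W
  r_pos : 0 < r
  closedBall_subset : ∀ x ∈ K, closedBall x r ⊆ V
  apply_mem_V : ∀ x ∈ K, (finMap F)^[q] x ∈ V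

theorem IsBakerDomain.exists_frame {F : ℂ → OnePoint ℂ} {W : Set ℂ} {q : ℕ}
    (h : IsBakerDomain F W q) {a : ℂ} (ha : a ∉ W) :
    ∃ x₀ K V r, IsBakerFrame F W q a x₀ K V r := by
  obtain ⟨x₀, hx₀⟩ := h.nonempty
  have hpc : IsPathConnected W :=
    (h.isOpen.isConnected_iff_isPathConnected).1 ⟨h.nonempty, h.isPreconnected⟩
  obtain ⟨γ, hγ⟩ := hpc.joinedIn x₀ hx₀ _ (h.mapsTo hx₀)
  set K := range γ with hKdef
  have hKW : K ⊆ W := by rintro _ ⟨t, rfl⟩; exact hγ t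
  have hKc : IsCompact K := isCompact_range γ.continuous
  have hKp : IsPreconnected K := isPreconnected_range γ.continuous
  have h0 : x₀ ∈ K := ⟨0, γ.source⟩
  have h1 : (finMap F)^[q] x₀ ∈ K := ⟨1, γ.target⟩
  have hgc := (h.differentiableOn q).continuousOn.mono hKW
  set K' := K ∪ (finMap F)^[q] '' K with hK'
  have hK'c : IsCompact K' := hKc.union (hKc.image_of_continuousOn hgc)
  have hK'W : K' ⊆ W := union_subset hKW (image_subset_iff.2 fun x hx => h.mapsTo (hKW hx))
  have hK'p : IsPreconnected K' := IsPreconnected.union _ h1 (mem_image_of_mem _ h0) hKp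
    (hKp.image _ hgc)
  obtain ⟨r, hr, hrW⟩ := hK'c.exists_cthickening_subset_open h.isOpen hK'W
  have hmem : ∀ x ∈ K', closedBall x r ⊆ cthickening r K' := fun x hx =>
    closedBall_subset_cthickening hx r
  have hsub : K' ⊆ cthickening r K' := self_subset_cthickening K'
  refine ⟨x₀, K, cthickening r K', r, { h with
    notMem := ha
    isCompact_K := hKc
    isPreconnected_K := hKp
    mem_K := h0
    apply_mem_K := h1
    isCompact_V := hK'c.cthickening
    isPreconnected_V := ?_
    V_subset := hrW
    r_pos := hr
    closedBall_subset := fun x hx => hmem x (Or.inl hx)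
    apply_mem_V := fun x hx => hsub (Or.inr (mem_image_of_mem _ hx)) }⟩
  refine isPreconnected_of_forall x₀ fun y hy => ?_
  rw [hK'c.cthickening_eq_biUnion_closedBall hr.le] at hy
  obtain ⟨x, hx, hyx⟩ := mem_iUnion₂.1 hy
  refine ⟨K' ∪ closedBall x r, union_subset hsub (hmem x hx), Or.inl (Or.inl h0), Or.inr hyx,
    IsPreconnected.union x hx (mem_closedBall_self hr.le) hK'p
      (convex_closedBall x r).isPreconnected⟩

namespace IsBakerFrame

variable {F : ℂ → OnePoint ℂ} {W : Set ℂ} {q : ℕ} {a x₀ : ℂ} {K V : Set ℂ} {r : ℝ}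

theorem K_subset_V (h : IsBakerFrame F W q a x₀ K V r) : K ⊆ V := fun x hx =>
  h.closedBall_subset x hx (mem_closedBall_self h.r_pos.le)

theorem K_subset (h : IsBakerFrame F W q a x₀ K V r) : K ⊆ W := h.K_subset_V.trans h.V_subset

theorem shiftedIterate_add_mem (h : IsBakerFrame F W q a x₀ K V r) (n : ℕ) {z : ℂ} (hz : z ∈ W) :
    a + shiftedIterate F q a n z ∈ W := by
  rw [shiftedIterate, add_sub_cancel]
  exact h.mapsTo_mul n hz

theorem shiftedIterate_succ (n : ℕ) (z : ℂ) :
    shiftedIterate F q a (n + 1) z = shiftedIterate F q a n ((finMap F)^[q] z) := by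
  rw [shiftedIterate, shiftedIterate, ← Function.iterate_add_apply, Nat.succ_mul]

theorem shiftedIterate_succ' (n : ℕ) (z : ℂ) :
    shiftedIterate F q a (n + 1) z = (finMap F)^[q] (a + shiftedIterate F q a n z) - a := by
  rw [shiftedIterate, shiftedIterate, add_sub_cancel, ← Function.iterate_add_apply, Nat.succ_mul,
    add_comm]

theorem differentiableOn_shiftedIterate (h : IsBakerFrame F W q a x₀ K V r) (n : ℕ) :
    DifferentiableOn ℂ (shiftedIterate F q a n) W :=
  (h.differentiableOn (n * q)).sub_const a

theorem shiftedIterate_ne (h : IsBakerFrame F W q a x₀ K V r) (n : ℕ) {z j : ℂ} (hz : z ∈ W)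
    (hj : j ∉ W) : shiftedIterate F q a n z ≠ j - a := by
  intro e
  have := h.shiftedIterate_add_mem n hz
  rw [e, add_sub_cancel] at this
  exact hj this

theorem shiftedIterate_ne_zero (h : IsBakerFrame F W q a x₀ K V r) (n : ℕ) {z : ℂ} (hz : z ∈ W) :
    shiftedIterate F q a n z ≠ 0 := by
  have := h.shiftedIterate_ne n hz h.notMem
  rwa [sub_self] at this

theorem shiftedIterate_succ_ne (h : IsBakerFrame F W q a x₀ K V r) (n : ℕ) {z : ℂ} (hz : z ∈ W) :
    shiftedIterate F q a (n + 1) z ≠ shiftedIterate F q a n z := by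
  intro e
  rw [shiftedIterate_succ'] at e
  exact h.iterate_ne_self (h.shiftedIterate_add_mem n hz) (Nat.one_le_iff_ne_zero.1 h.one_le)
    (by linear_combination e)

theorem tendsto_shiftedIterate (h : IsBakerFrame F W q a x₀ K V r) (R : ℝ) :
    ∃ N : ℕ, ∀ n ≥ N, ∀ z ∈ V, R < ‖shiftedIterate F q a n z‖ := by
  obtain ⟨N, hN⟩ := h.escapes V h.V_subset h.isCompact_V (R + ‖a‖)
  refine ⟨N, fun n hn z hz => ?_⟩
  have := hN n hn z hz
  have h2 := norm_sub_norm_le ((finMap F)^[n * q] z) a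
  rw [shiftedIterate]
  linarith

theorem exists_norm_eq (h : IsBakerFrame F W q a x₀ K V r) {ρ : ℝ}
    (hρ : ‖shiftedIterate F q a 0 x₀‖ ≤ ρ) : ∃ n, ∃ x ∈ K, ‖shiftedIterate F q a n x‖ = ρ := by
  have hex : ∃ n, ρ ≤ ‖shiftedIterate F q a (n + 1) x₀‖ := by
    obtain ⟨N, hN⟩ := h.tendsto_shiftedIterate ρ
    exact ⟨N, (hN (N + 1) N.le_succ x₀ (h.K_subset_V h.mem_K)).le⟩
  classical
  set n := Nat.find hex with hn
  have h1 : ρ ≤ ‖shiftedIterate F q a (n + 1) x₀‖ := Nat.find_spec hex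
  have h2 : ‖shiftedIterate F q a n x₀‖ ≤ ρ := by
    rcases Nat.eq_zero_or_pos n with h0 | h0
    · rwa [h0]
    · have := Nat.find_min hex (m := n - 1) (by lia)
      rw [Nat.sub_add_cancel h0] at this
      exact (not_le.1 this).le
  rw [shiftedIterate_succ] at h1
  obtain ⟨x, hx, hx'⟩ := h.isPreconnected_K.intermediate_value h.mem_K h.apply_mem_K
    (((h.differentiableOn_shiftedIterate n).continuousOn.mono h.K_subset).norm) ⟨h2, h1⟩
  exact ⟨n, x, hx, hx'⟩

theorem exists_lt_of_norm (h : IsBakerFrame F W q a x₀ K V r) (N : ℕ) :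
    ∃ R, ∀ n, ∀ x ∈ V, R ≤ ‖shiftedIterate F q a n x‖ → N < n := by
  have : ∀ n, ∃ C, ∀ x ∈ V, ‖shiftedIterate F q a n x‖ ≤ C := fun n =>
    h.isCompact_V.exists_bound_of_continuousOn
      ((h.differentiableOn_shiftedIterate n).continuousOn.mono h.V_subset)
  choose C hC using this
  refine ⟨(∑ n ∈ Finset.range (N + 1), |C n|) + 1, fun n x hx hR => ?_⟩
  by_contra! hn
  have h1 := hC n x hx
  have h2 : |C n| ≤ ∑ n ∈ Finset.range (N + 1), |C n| :=
    Finset.single_le_sum (f := fun n => |C n|) (fun _ _ => abs_nonneg _) (by simp; lia)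
  linarith [le_abs_self (C n)]

/-- If a value of an iterate on `V` is comparable to a point outside of `W`, then all values of
this iterate on `V` are. -/
theorem exists_tame (h : IsBakerFrame F W q a x₀ K V r) (κ : ℝ) :
    ∃ B, 1 ≤ B ∧ ∀ n, ∀ j ∉ W, ∀ v ∈ V, ‖shiftedIterate F q a n v‖ ≤ κ * ‖j - a‖ →
      ‖j - a‖ ≤ κ * ‖shiftedIterate F q a n v‖ → ∀ y ∈ V, ‖shiftedIterate F q a n y‖ ≤ B * ‖j - a‖ ∧
        ‖j - a‖ ≤ B * ‖shiftedIterate F q a n y‖ := by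
  obtain ⟨B, hB1, hB⟩ := exists_schottky_chain h.isOpen h.isPreconnected h.isCompact_V h.V_subset κ
  refine ⟨B, hB1, fun n j hj v hv h1 h2 y hy => ?_⟩
  have hv0 := norm_pos_iff.2 (h.shiftedIterate_ne_zero n (h.V_subset hv))
  have hy0 := norm_pos_iff.2 (h.shiftedIterate_ne_zero n (h.V_subset hy))
  have hja : j - a ≠ 0 := by
    intro e
    rw [e, norm_zero, mul_zero] at h1
    linarith
  have hj0 := norm_pos_iff.2 hja
  constructor
  · have := hB (fun z => shiftedIterate F q a n z / (j - a))
      ((h.differentiableOn_shiftedIterate n).div_const _)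
      (fun z hz => div_ne_zero (h.shiftedIterate_ne_zero n hz) hja)
      (fun z hz e => h.shiftedIterate_ne n hz hj ((div_eq_one_iff_eq hja).1 e)) v hv
      (by rw [norm_div, div_le_iff₀ hj0]; exact h1) y hy
    rwa [norm_div, div_le_iff₀ hj0] at this
  · have := hB (fun z => (j - a) / shiftedIterate F q a n z)
      ((differentiableOn_const _).fun_div (h.differentiableOn_shiftedIterate n)
        (fun z hz => h.shiftedIterate_ne_zero n hz))
      (fun z hz => div_ne_zero hja (h.shiftedIterate_ne_zero n hz))
      (fun z hz e => h.shiftedIterate_ne n hz hj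
        ((div_eq_one_iff_eq (h.shiftedIterate_ne_zero n hz)).1 e).symm) v hv
      (by rw [norm_div, div_le_iff₀ hv0]; exact h2) y hy
    rwa [norm_div, div_le_iff₀ hy0] at this

/-- A bound on logarithmic derivatives of iterates whose values on `V` are comparable to a point
outside of `W`. -/
theorem exists_norm_deriv_le (h : IsBakerFrame F W q a x₀ K V r) (κ : ℝ) :
    ∃ M, 0 < M ∧ ∀ n, ∀ j ∉ W, ∀ v ∈ V, ‖shiftedIterate F q a n v‖ ≤ κ * ‖j - a‖ →
      ‖j - a‖ ≤ κ * ‖shiftedIterate F q a n v‖ → ∀ x ∈ K, ∀ y ∈ ball x (r / 2),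
        ‖deriv (shiftedIterate F q a n) y‖ ≤ M * ‖shiftedIterate F q a n y‖ := by
  obtain ⟨B, hB1, hB⟩ := h.exists_tame κ
  have hr := h.r_pos
  refine ⟨4 * B ^ 2 / r, by positivity, fun n j hj v hv h1 h2 x hx y hy => ?_⟩
  have hBV := hB n j hj v hv h1 h2
  have hyV : ball y (r / 2) ⊆ V := (ball_subset_ball' (by rw [mem_ball] at hy; linarith)).trans
    (ball_subset_closedBall.trans (h.closedBall_subset x hx))
  have hyy := (hBV y (hyV (mem_ball_self (by linarith)))).2
  have := norm_deriv_le_of_norm_le (h := shiftedIterate F q a n) (c := y)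
    (B := B * (B * ‖shiftedIterate F q a n y‖)) (by linarith : 0 < r / 2)
    ((h.differentiableOn_shiftedIterate n).mono (hyV.trans h.V_subset))
    (fun z hz => (hBV z (hyV hz)).1.trans (by gcongr))
  refine this.trans (le_of_eq ?_)
  field_simp
  ring

end IsBakerFrame

/-- Distortion of a locally univalent function along a vertical segment. -/
theorem exists_distortion_segment {δ : ℝ} (hδ : 0 < δ) (T : ℝ) : ∃ D : ℝ, 1 ≤ D ∧
    ∀ (Ψ : ℂ → ℂ) (θ₀ : ℝ), θ₀ ≤ T →
      (∀ θ ∈ Icc 0 θ₀, DifferentiableOn ℂ Ψ (ball (θ * Complex.I) δ)) →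
      (∀ θ ∈ Icc 0 θ₀, InjOn Ψ (ball (θ * Complex.I) δ)) → ∀ θ ∈ Icc 0 θ₀,
        ‖deriv Ψ (θ * Complex.I)‖ ≤ D * ‖deriv Ψ 0‖ ∧
          ‖deriv Ψ 0‖ ≤ D * ‖deriv Ψ (θ * Complex.I)‖ := by
  obtain ⟨C, hC1, hC⟩ := exists_koebe_distortion
  obtain ⟨m, hm⟩ := exists_nat_ge (20 * T / δ)
  refine ⟨C ^ m, one_le_pow₀ hC1, fun Ψ θ₀ hθ₀ hd hinj => ?_⟩
  have key : ∀ m : ℕ, ∀ θ ∈ Icc 0 θ₀, θ ≤ m * (δ / 20) →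
      ‖deriv Ψ (θ * Complex.I)‖ ≤ C ^ m * ‖deriv Ψ 0‖ ∧
          ‖deriv Ψ 0‖ ≤ C ^ m * ‖deriv Ψ (θ * Complex.I)‖ := by
    intro m
    induction m with
    | zero =>
      intro θ hθ h0
      have : θ = 0 := le_antisymm (by simpa using h0) hθ.1
      simp [this]
    | succ m ih =>
      intro θ hθ h0
      push_cast at h0
      set θ' := max (θ - δ / 20) 0 with hθ'
      have h1 : θ' ≤ θ := max_le (by linarith) hθ.1
      have h2 : θ - θ' ≤ δ / 20 := by linarith [le_max_left (θ - δ / 20) 0]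
      have hθ'm : θ' ∈ Icc 0 θ₀ := ⟨le_max_right _ _, h1.trans hθ.2⟩
      have hm0 : (0 : ℝ) ≤ m * (δ / 20) := by positivity
      obtain ⟨i1, i2⟩ := ih θ' hθ'm (max_le (by linarith) hm0)
      have hmem : (θ * Complex.I : ℂ) ∈ ball (θ' * Complex.I) (δ / 16) := by
        rw [mem_ball, dist_eq_norm, ← sub_mul, norm_mul, Complex.norm_I, mul_one,
          ← Complex.ofReal_sub, Complex.norm_real, Real.norm_eq_abs, abs_of_nonneg (by linarith)]
        linarith
      obtain ⟨j1, j2⟩ := hC _ δ Ψ (hd θ' hθ'm) (hinj θ' hθ'm) _ hmem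
      have hC0 : 0 ≤ C := by linarith
      constructor
      · calc _ ≤ C * ‖deriv Ψ (θ' * Complex.I)‖ := j1
          _ ≤ C * (C ^ m * ‖deriv Ψ 0‖) := by gcongr
          _ = _ := by ring
      · calc _ ≤ C ^ m * ‖deriv Ψ (θ' * Complex.I)‖ := i2
          _ ≤ C ^ m * (C * ‖deriv Ψ (θ * Complex.I)‖) := by gcongr
          _ = _ := by ring
  refine fun θ hθ => key m θ hθ ?_
  rw [div_le_iff₀ hδ] at hm
  linarith [hθ.2]

/-- `Ψ` is a branch on `Y` of the inverse of an iterate of `f`, applied to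
`t ↦ a + w * exp t`. -/
structure IsExpLift (F : ℂ → OnePoint ℂ) (n : ℕ) (a w : ℂ) (Y : Set ℂ) (Ψ : ℂ → ℂ) : Prop where
  differentiableOn : DifferentiableOn ℂ Ψ Y
  iterate_eq : ∀ t ∈ Y, (totalize F)^[n] (Ψ t) = ((a + w * Complex.exp t : ℂ) : OnePoint ℂ)

namespace IsExpLift

variable {F : ℂ → OnePoint ℂ} {n : ℕ} {a w : ℂ} {Y : Set ℂ} {Ψ : ℂ → ℂ}

theorem iterate_ne_infty (h : IsExpLift F n a w Y Ψ) {t : ℂ} (ht : t ∈ Y) {l : ℕ} (hl : l ≤ n) :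
    (totalize F)^[l] (Ψ t) ≠ OnePoint.infty :=
  iterate_ne_infty_of_le hl (by rw [h.iterate_eq t ht]; exact OnePoint.coe_ne_infty _)

theorem finMap_iterate_eq (h : IsExpLift F n a w Y Ψ) {t : ℂ} (ht : t ∈ Y) :
    (finMap F)^[n] (Ψ t) = a + w * Complex.exp t := by
  have := h.iterate_eq t ht
  rw [totalize_iterate_coe (h.iterate_ne_infty ht le_rfl)] at this
  exact OnePoint.coe_injective this

theorem injOn_comp (h : IsExpLift F n a w Y Ψ) (hw : w ≠ 0) {c : ℂ} {s : ℝ} (hs : s ≤ 3)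
    (hsY : ball c s ⊆ Y) {l : ℕ} (hl : l ≤ n) : InjOn ((finMap F)^[l] ∘ Ψ) (ball c s) := by
  intro t ht t' ht' e
  have e1 : (finMap F)^[n] (Ψ t) = (finMap F)^[n] (Ψ t') := by
    obtain ⟨j, rfl⟩ := Nat.exists_eq_add_of_le' hl
    rw [Function.iterate_add_apply, Function.iterate_add_apply]
    exact congrArg _ e
  rw [h.finMap_iterate_eq (hsY ht), h.finMap_iterate_eq (hsY ht'), add_right_inj,
    mul_right_inj' hw, Complex.exp_eq_exp_iff_exists_int] at e1
  obtain ⟨k, hk⟩ := e1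
  have h1 : ‖t - t'‖ < 6 := by
    rw [← dist_eq_norm]
    linarith [dist_triangle_right t t' c, mem_ball.1 ht, mem_ball.1 ht']
  have h2 : t - t' = k * (2 * Real.pi * Complex.I) := by rw [hk]; ring
  rw [h2] at h1
  rcases eq_or_ne k 0 with rfl | hk0
  · simpa [sub_eq_zero] using h2
  · have h3 : (1 : ℝ) ≤ |(k : ℝ)| := by exact_mod_cast Int.one_le_abs hk0
    have h4 : ‖(k : ℂ) * (2 * Real.pi * Complex.I)‖ = |(k : ℝ)| * (2 * Real.pi) := by
      simp [abs_of_pos Real.pi_pos]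
    rw [h4] at h1
    nlinarith [Real.pi_gt_three]

theorem injOn (h : IsExpLift F n a w Y Ψ) (hw : w ≠ 0) {c : ℂ} {s : ℝ} (hs : s ≤ 3)
    (hsY : ball c s ⊆ Y) : InjOn Ψ (ball c s) :=
  h.injOn_comp hw hs hsY n.zero_le

theorem injOn_iterate (h : IsExpLift F n a w Y Ψ) (hw : w ≠ 0) {c : ℂ} {s : ℝ} (hs : s ≤ 3)
    (hsY : ball c s ⊆ Y) {l : ℕ} (hl : l ≤ n) : InjOn (finMap F)^[l] (Ψ '' ball c s) := by
  rintro _ ⟨t, ht, rfl⟩ _ ⟨t', ht', rfl⟩ e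
  rw [h.injOn_comp hw hs hsY hl ht ht' e]

theorem mapsTo {W : Set ℂ} {q : ℕ} (h : IsExpLift F n a w Y Ψ) (hW : IsBakerDomain F W q)
    {Z : Set ℂ} (hZY : Z ⊆ Y) (hZ : IsPreconnected Z) {t₀ : ℂ} (ht₀ : t₀ ∈ Z)
    (hΨ : Ψ t₀ ∈ W) (hF : ∀ t ∈ Z, Ψ t ∈ MeroFatou F univ) : MapsTo Ψ Z W :=
  mapsTo_iff_image_subset.2 <| hW.subset_of_isPreconnected _
    (hZ.image _ (h.differentiableOn.continuousOn.mono hZY)) (image_subset_iff.2 hF)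
    ⟨_, mem_image_of_mem _ ht₀, hΨ⟩

theorem mem_fatou {W : Set ℂ} {q : ℕ} (h : IsExpLift F n a w Y Ψ) (hW : IsBakerDomain F W q)
    {t : ℂ} (ht : t ∈ Y) (htW : a + w * Complex.exp t ∈ W) : Ψ t ∈ MeroFatou F univ :=
  mem_meroFatou_of_iterate hW.mero (h.iterate_eq t ht) (hW.subset_fatou htW)

end IsExpLift

theorem IsBakerDomain.exists_isExpLift {F : ℂ → OnePoint ℂ} {W : Set ℂ} {q : ℕ}
    (h : IsBakerDomain F W q) {S : Set (OnePoint ℂ)} (hS : MeroSingularSet F univ S)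
    {Y : Set ℂ} (hY : Convex ℝ Y) (hYo : IsOpen Y) (h0 : (0 : ℂ) ∈ Y) {a x : ℂ} (hx : x ∈ W)
    (n : ℕ) (hP : ∀ t ∈ Y, ((a + shiftedIterate F q a n x * Complex.exp t : ℂ) : OnePoint ℂ) ∉
      MeroPostsingular F univ S) :
    ∃ Ψ, IsExpLift F (n * q) a (shiftedIterate F q a n x) Y Ψ ∧ Ψ 0 = x := by
  obtain ⟨Ψ, h1, h2, h3⟩ := exists_lift_iterate h.mero hS hY hYo
    (h := fun t => a + shiftedIterate F q a n x * Complex.exp t) (by fun_prop) hP h0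
    (z₀ := x) (n := n * q)
    (by rw [h.iterate_eq hx]; simp [shiftedIterate])
  exact ⟨Ψ, ⟨h1, h3⟩, h2⟩

/-- In a direction in which the circle around `a` of radius `‖w‖` leaves `W` for the first time. -/
theorem exists_first_exit {W : Set ℂ} (hW : IsOpen W) {a w z : ℂ} (hw : w ≠ 0)
    (hz : z ∉ W) (hzw : ‖z - a‖ = ‖w‖) : ∃ θ₀ ∈ Icc (0 : ℝ) 7,
      a + w * Complex.exp (θ₀ * Complex.I) ∉ W ∧
        ∀ θ ∈ Ico 0 θ₀, a + w * Complex.exp (θ * Complex.I) ∈ W := by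
  set A := {θ : ℝ | θ ∈ Icc (0 : ℝ) 7 ∧ a + w * Complex.exp (θ * Complex.I) ∉ W} with hA
  have hcl : IsClosed A := by
    refine isClosed_Icc.inter (IsClosed.preimage (f := fun θ : ℝ =>
      a + w * Complex.exp (θ * Complex.I)) (by fun_prop) hW.isClosed_compl)
  have hcp : IsCompact A := isCompact_Icc.of_isClosed_subset hcl fun θ hθ => hθ.1
  have hne : A.Nonempty := by
    have hu : ‖(z - a) / w‖ = 1 := by
      rw [norm_div, hzw, div_self (norm_ne_zero_iff.2 hw)]
    set α := Complex.arg ((z - a) / w) with hα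
    have hexp : w * Complex.exp (α * Complex.I) = z - a := by
      have := Complex.norm_mul_exp_arg_mul_I ((z - a) / w)
      rw [hu, Complex.ofReal_one, one_mul] at this
      rw [hα, this, mul_div_cancel₀ _ hw]
    have hp := Real.pi_lt_d2
    have hα1 := Complex.neg_pi_lt_arg ((z - a) / w)
    have hα2 := Complex.arg_le_pi ((z - a) / w)
    rw [← hα] at hα1 hα2
    rcases le_or_gt 0 α with h0 | h0
    · refine ⟨α, ⟨h0, by linarith⟩, ?_⟩
      rwa [hexp, add_sub_cancel]
    · refine ⟨α + 2 * Real.pi, ⟨by linarith, by linarith⟩, ?_⟩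
      have : (((α + 2 * Real.pi : ℝ) : ℂ) * Complex.I) = α * Complex.I + 2 * Real.pi * Complex.I := by
        push_cast; ring
      rwa [this, Complex.exp_periodic, hexp, add_sub_cancel]
  obtain ⟨h1, h2⟩ := hcp.sInf_mem hne
  refine ⟨sInf A, h1, h2, fun θ hθ => ?_⟩
  by_contra hcon
  exact not_le.2 hθ.2 (csInf_le hcp.bddBelow ⟨⟨hθ.1, hθ.2.le.trans h1.2⟩, hcon⟩)

theorem exists_norm_le_infDist_le {W : Set ℂ} {S : Set ℂ} {a w : ℂ} (hw : w ≠ 0) {δ : ℝ} (hδ : δ ≤ 1 / 2)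
    {s t : ℂ} (hs : a + w * Complex.exp s ∈ closure W) (hs0 : s.re = 0) (hst : dist t s < δ)
    (hP : a + w * Complex.exp t ∈ S) :
    ∃ p ∈ S, ‖w‖ * Real.exp (-δ) ≤ ‖p - a‖ ∧ ‖p - a‖ ≤ ‖w‖ * Real.exp δ ∧
      infDist p W ≤ 4 * δ * ‖p - a‖ := by
  have hw0 := norm_pos_iff.2 hw
  have hre : |t.re| < δ := by
    have := Complex.abs_re_le_norm (t - s)
    rw [Complex.sub_re, hs0, sub_zero] at this
    rw [dist_eq_norm] at hst
    linarith
  have hδ0 : 0 ≤ δ := dist_nonneg.trans hst.le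
  have hn : ‖a + w * Complex.exp t - a‖ = ‖w‖ * Real.exp t.re := by
    rw [add_sub_cancel_left, norm_mul, Complex.norm_exp]
  have h1 : ‖w‖ * Real.exp (-δ) ≤ ‖w‖ * Real.exp t.re := by
    gcongr; exact (abs_lt.1 hre).1.le
  refine ⟨_, hP, by rw [hn]; exact h1, ?_, ?_⟩
  · rw [hn]; gcongr; exact (abs_lt.1 hre).2.le
  · rw [hn, ← infDist_closure]
    refine (infDist_le_dist_of_mem hs).trans ?_
    have h2 : dist (a + w * Complex.exp t) (a + w * Complex.exp s) =
        ‖w‖ * ‖Complex.exp (t - s) - 1‖ := by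
      rw [dist_eq_norm]
      have : a + w * Complex.exp t - (a + w * Complex.exp s) =
          w * (Complex.exp (t - s) - 1) * Complex.exp s := by
        rw [Complex.exp_sub]
        field_simp [Complex.exp_ne_zero]
        ring
      rw [this, norm_mul, norm_mul, Complex.norm_exp, hs0, Real.exp_zero, mul_one]
    rw [h2]
    rw [dist_eq_norm] at hst
    have h3 := Complex.norm_exp_sub_one_le (x := t - s) (by linarith)
    have h4 : (1 / 2 : ℝ) ≤ Real.exp (-δ) := by linarith [Real.add_one_le_exp (-δ)]
    have h5 : ‖w‖ * (1 / 2) ≤ ‖w‖ * Real.exp t.re := (by gcongr : _ ≤ ‖w‖ * Real.exp (-δ)).trans h1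
    calc ‖w‖ * ‖Complex.exp (t - s) - 1‖ ≤ ‖w‖ * (2 * δ) := by gcongr; linarith
      _ = 4 * δ * (‖w‖ * (1 / 2)) := by ring
      _ ≤ _ := by gcongr

namespace IsBakerFrame

variable {F : ℂ → OnePoint ℂ} {W : Set ℂ} {q : ℕ} {a x₀ : ℂ} {K V : Set ℂ} {r : ℝ}

/-- If the circle of radius `ρ` about `a` is not contained in `W` and there are no postsingular
points close to this circle and to `W`, then many iterates are univalent on a ball of definite
size centered outside of the Fatou set. -/
theorem exists_univalent_ball (h : IsBakerFrame F W q a x₀ K V r) {S : Set (OnePoint ℂ)}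
    (hS : MeroSingularSet F univ S) {δ : ℝ} (hδ0 : 0 < δ) (hδ : δ ≤ 1 / 2) :
    ∃ c₁ > (0 : ℝ), ∃ R' : ℝ, ∀ N : ℕ, ∃ R₁ : ℝ, ∀ ρ ≥ R₁, ∀ z ∉ W, ‖z - a‖ = ρ →
      (∀ p : ℂ, (p : OnePoint ℂ) ∈ MeroPostsingular F univ S → ρ * Real.exp (-δ) ≤ ‖p - a‖ →
        ‖p - a‖ ≤ ρ * Real.exp δ → ¬infDist p W ≤ 4 * δ * ‖p - a‖) →
      ∃ y, ‖y‖ ≤ R' ∧ y ∉ MeroFatou F univ ∧ ∀ l ≤ N,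
        (∀ x ∈ ball y c₁, (totalize F)^[l] x ≠ OnePoint.infty) ∧
          InjOn (finMap F)^[l] (ball y c₁) := by
  obtain ⟨M, hM0, hM⟩ := h.exists_norm_deriv_le 1
  obtain ⟨c₀, hc₀, hq⟩ := exists_koebe_quarter
  obtain ⟨D, hD1, hD⟩ := exists_distortion_segment hδ0 7
  obtain ⟨RK, hRK⟩ := h.isCompact_K.exists_bound_of_continuousOn continuousOn_id
  obtain ⟨L, hL⟩ := not_forall.1 (not_forall_injOn_ball h.mero h.trans)
  have hD0 : 0 < D := by linarith
  set M₂ := (L + RK) / (c₀ * δ) with hM₂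
  refine ⟨c₀ * δ * (1 / (M * D)), by positivity, RK + D * |M₂| * 7, fun N => ?_⟩
  obtain ⟨R₁, hR₁⟩ := h.exists_lt_of_norm N
  refine ⟨max (max R₁ 1) ‖shiftedIterate F q a 0 x₀‖, fun ρ hρ z hz hzρ hP => ?_⟩
  have hρ1 : 1 ≤ ρ := (le_max_right _ _).trans ((le_max_left _ _).trans hρ)
  obtain ⟨n, x, hx, hn⟩ := h.exists_norm_eq ((le_max_right _ _).trans hρ)
  have hNn : N < n := hR₁ n x (h.K_subset_V hx)
    (by rw [hn]; exact (le_max_left _ _).trans ((le_max_left _ _).trans hρ))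
  have hxW := h.K_subset hx
  have hNq : N < n * q := hNn.trans_le (Nat.le_mul_of_pos_right n h.one_le)
  set w := shiftedIterate F q a n x with hw
  have hw0 : w ≠ 0 := h.shiftedIterate_ne_zero n hxW
  obtain ⟨θ₀, hθ₀, hexit, hbefore⟩ := exists_first_exit h.isOpen hw0 hz (hzρ.trans hn.symm)
  set Y := thickening δ (segment ℝ (0 : ℂ) (θ₀ * Complex.I)) with hY
  have hseg : ∀ s ∈ segment ℝ (0 : ℂ) (θ₀ * Complex.I), ∃ θ ∈ Icc 0 θ₀, s = θ * Complex.I := by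
    intro s hs
    rw [segment_eq_image] at hs
    obtain ⟨u, hu, rfl⟩ := hs
    refine ⟨u * θ₀, ⟨mul_nonneg hu.1 hθ₀.1, mul_le_of_le_one_left hθ₀.1 hu.2⟩, ?_⟩
    simp [mul_assoc]
  have hsub : ∀ θ ∈ Icc 0 θ₀, (θ * Complex.I : ℂ) ∈ segment ℝ (0 : ℂ) (θ₀ * Complex.I) := by
    intro θ hθ
    rw [segment_eq_image]
    rcases hθ₀.1.eq_or_lt with e | e
    · have : θ = 0 := le_antisymm (by rw [e]; exact hθ.2) hθ.1
      exact ⟨0, by simp, by simp [this]⟩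
    · refine ⟨θ / θ₀, ⟨div_nonneg hθ.1 e.le, (div_le_one e).2 hθ.2⟩, ?_⟩
      have : (θ₀ : ℂ) ≠ 0 := by exact_mod_cast e.ne'
      simp
      field_simp
  have hball : ∀ θ ∈ Icc 0 θ₀, ball (θ * Complex.I : ℂ) δ ⊆ Y := fun θ hθ =>
    ball_subset_thickening (hsub θ hθ) δ
  have h00 : (0 : ℝ) ∈ Icc 0 θ₀ := ⟨le_rfl, hθ₀.1⟩
  have h01 : θ₀ ∈ Icc 0 θ₀ := ⟨hθ₀.1, le_rfl⟩
  have h0Y : (0 : ℂ) ∈ Y := hball 0 h00 (by simpa using hδ0)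
  have hθ₀pos : 0 < θ₀ := by
    rcases hθ₀.1.eq_or_lt with e | e
    · exfalso
      apply hexit
      rw [← e]
      simpa using h.shiftedIterate_add_mem n hxW
    · exact e
  have hclos : ∀ θ ∈ Icc 0 θ₀, a + w * Complex.exp (θ * Complex.I) ∈ closure W := by
    intro θ hθ
    have : θ ∈ closure (Ico 0 θ₀) := by rwa [closure_Ico hθ₀pos.ne]
    have hcont : Continuous fun θ : ℝ => a + w * Complex.exp (θ * Complex.I) := by fun_prop
    exact closure_mono (image_subset_iff.2 hbefore) (image_closure_subset_closure_image hcont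
      (mem_image_of_mem _ this))
  obtain ⟨Ψ, hΨ, hΨ0⟩ := h.exists_isExpLift hS (Convex.thickening (convex_segment _ _) δ)
    isOpen_thickening h0Y hxW n (fun t ht hcon => by
      obtain ⟨s, hs, hts⟩ := mem_thickening_iff.1 ht
      obtain ⟨θ, hθ, rfl⟩ := hseg s hs
      obtain ⟨p, hp, hp1, hp2, hp3⟩ := exists_norm_le_infDist_le
        (S := {p : ℂ | (p : OnePoint ℂ) ∈ MeroPostsingular F univ S}) hw0 hδ (hclos θ hθ)
        (by simp) hts hcon
      rw [hn] at hp1 hp2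
      exact hP p hp hp1 hp2 hp3)
  have hinj : ∀ θ ∈ Icc 0 θ₀, InjOn Ψ (ball (θ * Complex.I) δ) := fun θ hθ =>
    hΨ.injOn hw0 (by linarith) (hball θ hθ)
  have hdist := hD Ψ θ₀ hθ₀.2 (fun θ hθ => hΨ.differentiableOn.mono (hball θ hθ)) hinj
  have hlow : 1 / M ≤ ‖deriv Ψ 0‖ := by
    have hYn : Y ∈ 𝓝 (0 : ℂ) := isOpen_thickening.mem_nhds h0Y
    have e1 : HasDerivAt Ψ (deriv Ψ 0) 0 := (hΨ.differentiableOn.differentiableAt hYn).hasDerivAt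
    have e2 : HasDerivAt (shiftedIterate F q a n) (deriv (shiftedIterate F q a n) (Ψ 0)) (Ψ 0) := by
      rw [hΨ0]
      exact ((h.differentiableOn_shiftedIterate n).differentiableAt
        (h.isOpen.mem_nhds hxW)).hasDerivAt
    have e3 := e2.comp 0 e1
    have e4 : HasDerivAt (fun t => w * Complex.exp t) (w * Complex.exp 0) 0 :=
      (Complex.hasDerivAt_exp 0).const_mul w
    have e5 := e3.unique (e4.congr_of_eventuallyEq (by
      filter_upwards [hYn] with t ht
      simp only [Function.comp, shiftedIterate]
      rw [hΨ.finMap_iterate_eq ht]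
      ring))
    have e6 := hM n z hz x (h.K_subset_V hx) (by rw [hn, hzρ, one_mul])
      (by rw [hn, hzρ, one_mul]) x hx x (mem_ball_self (by linarith [h.r_pos]))
    rw [hΨ0, Complex.exp_zero, mul_one] at e5
    have e7 := congrArg norm e5
    rw [norm_mul] at e7
    have hwn : 0 < ‖w‖ := norm_pos_iff.2 hw0
    rw [div_le_iff₀ hM0]
    have : ‖w‖ ≤ M * ‖w‖ * ‖deriv Ψ 0‖ :=
      e7.symm.le.trans (mul_le_mul_of_nonneg_right e6 (norm_nonneg _))
    nlinarith
  have hup : ‖deriv Ψ 0‖ ≤ M₂ := by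
    by_contra! hcon
    have hc := hq 0 δ Ψ (by simpa using hΨ.differentiableOn.mono (hball 0 h00))
      (by simpa using hinj 0 h00)
    have hsub0 : ball (0 : ℂ) δ ⊆ Y := by simpa using hball 0 h00
    have hLsub : ball (0 : ℂ) L ⊆ Ψ '' ball 0 δ := by
      refine (ball_subset_ball' ?_).trans hc
      rw [hΨ0, dist_zero_left]
      rw [hM₂, div_lt_iff₀ (by positivity)] at hcon
      have := hRK x hx
      simp only [id] at this
      linarith
    refine hL ⟨fun v hv => ?_, ?_⟩
    · obtain ⟨t, ht, rfl⟩ := hLsub hv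
      exact hΨ.iterate_ne_infty (hsub0 ht) (l := 1) (by lia)
    · exact (hΨ.injOn_iterate hw0 (by linarith) hsub0 (l := 1) (by lia)).mono hLsub
  refine ⟨Ψ (θ₀ * Complex.I), ?_, ?_, ?_⟩
  · have := Convex.norm_image_sub_le_of_norm_deriv_le (𝕜 := ℂ) (f := Ψ) (C := D * |M₂|)
      (s := segment ℝ (0 : ℂ) (θ₀ * Complex.I)) (x := 0) (y := θ₀ * Complex.I)
      (fun s hs => hΨ.differentiableOn.differentiableAt
        (isOpen_thickening.mem_nhds (self_subset_thickening hδ0 _ hs)))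
      (fun s hs => by
        obtain ⟨θ, hθ, rfl⟩ := hseg s hs
        refine (hdist θ hθ).1.trans ?_
        gcongr
        exact hup.trans (le_abs_self _)) (convex_segment _ _) (left_mem_segment _ _ _)
      (right_mem_segment _ _ _)
    rw [hΨ0, sub_zero, norm_mul, Complex.norm_I, mul_one, Complex.norm_real,
      Real.norm_of_nonneg hθ₀.1] at this
    have h1 := norm_sub_norm_le (Ψ (θ₀ * Complex.I)) x
    have h2 := hRK x hx
    simp only [id] at h2
    have h3 : D * |M₂| * θ₀ ≤ D * |M₂| * 7 := by gcongr; exact hθ₀.2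
    linarith
  · intro hF
    have hmaps := hΨ.mapsTo h.toIsBakerDomain
      (self_subset_thickening hδ0 (segment ℝ (0 : ℂ) (θ₀ * Complex.I)))
      (convex_segment _ _).isPreconnected (left_mem_segment _ _ _) (by rwa [hΨ0])
      (fun s hs => by
        obtain ⟨θ, hθ, rfl⟩ := hseg s hs
        rcases hθ.2.eq_or_lt with e | e
        · rwa [e]
        · exact hΨ.mem_fatou h.toIsBakerDomain (self_subset_thickening hδ0 _ hs)
            (hbefore θ ⟨hθ.1, e⟩))
    have := h.mapsTo_mul n (hmaps (right_mem_segment _ _ _))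
    rw [hΨ.finMap_iterate_eq (hball θ₀ h01 (mem_ball_self hδ0))] at this
    exact hexit this
  · have hc : ball (Ψ (θ₀ * Complex.I)) (c₀ * δ * (1 / (M * D))) ⊆ Ψ '' ball (θ₀ * Complex.I) δ := by
      refine (ball_subset_ball ?_).trans (hq _ δ Ψ (hΨ.differentiableOn.mono (hball θ₀ h01))
        (hinj θ₀ h01))
      gcongr
      rw [div_le_iff₀ (by positivity)]
      rw [div_le_iff₀ hM0] at hlow
      have := (hdist θ₀ h01).2
      nlinarith
    intro l hl
    refine ⟨fun v hv => ?_, (hΨ.injOn_iterate hw0 (by linarith) (hball θ₀ h01) (by lia)).mono hc⟩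
    obtain ⟨t, ht, rfl⟩ := hc hv
    exact hΨ.iterate_ne_infty (hball θ₀ h01 ht) (by lia)

/-- Postsingular points near circles that are not contained in `W`. -/
theorem exists_postsingular_of_norm_eq (h : IsBakerFrame F W q a x₀ K V r) {S : Set (OnePoint ℂ)}
    (hS : MeroSingularSet F univ S) {δ : ℝ} (hδ0 : 0 < δ) (hδ : δ ≤ 1 / 2) :
    ∃ R₁ : ℝ, ∀ ρ ≥ R₁, ∀ z ∉ W, ‖z - a‖ = ρ → ∃ p : ℂ,
      (p : OnePoint ℂ) ∈ MeroPostsingular F univ S ∧ ρ * Real.exp (-δ) ≤ ‖p - a‖ ∧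
        ‖p - a‖ ≤ ρ * Real.exp δ ∧ infDist p W ≤ 4 * δ * ‖p - a‖ := by
  obtain ⟨c₁, hc₁, R', H⟩ := h.exists_univalent_ball hS hδ0 hδ
  by_contra! hcon
  have key : ∀ N : ℕ, ∃ y, ‖y‖ ≤ R' ∧ y ∉ MeroFatou F univ ∧ ∀ l ≤ N,
        (∀ x ∈ ball y c₁, (totalize F)^[l] x ≠ OnePoint.infty) ∧
          InjOn (finMap F)^[l] (ball y c₁) := by
    intro N
    obtain ⟨R₁, hR₁⟩ := H N
    obtain ⟨ρ, hρ, z, hz, hzρ, hno⟩ := hcon R₁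
    exact hR₁ ρ hρ z hz hzρ fun p h1 h2 h3 => not_le.2 (hno p h1 h2 h3)
  choose y hyR hyF hy using key
  obtain ⟨b, -, φ, hφ, hlim⟩ := tendsto_subseq_of_bounded (isBounded_closedBall (x := (0 : ℂ)) (r := R'))
    (x := y) (fun n => by simpa using hyR n)
  have hev : ∀ᶠ N in atTop, dist (y (φ N)) b < c₁ / 2 :=
    (Metric.tendsto_nhds.1 hlim) _ (by linarith)
  have hball : ∀ l : ℕ, ∃ N, l ≤ φ N ∧ ball b (c₁ / 2) ⊆ ball (y (φ N)) c₁ := by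
    intro l
    obtain ⟨N, hN1, hN2⟩ := (hev.and (eventually_ge_atTop l)).exists
    exact ⟨N, hN2.trans hφ.le_apply, ball_subset_ball' (by rw [dist_comm]; linarith)⟩
  have hsub := ball_subset_meroFatou h.mero h.trans (c := b) (r := c₁ / 2)
    (fun l x hx => by
      obtain ⟨N, hN, hb⟩ := hball l
      exact (hy (φ N) l hN).1 x (hb hx))
    (fun l => by
      obtain ⟨N, hN, hb⟩ := hball l
      exact (hy (φ N) l hN).2.mono hb)
  obtain ⟨N, hN⟩ := hev.exists
  exact hyF (φ N) (hsub hN)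

end IsBakerFrame

/-- The derivative of a logarithm of a function omitting `0` and `1`. -/
theorem exists_norm_deriv_log_le (A : ℝ) : ∃ B : ℝ, 0 < B ∧ ∀ (c : ℂ) (R : ℝ) (h : ℂ → ℂ),
    DifferentiableOn ℂ h (ball c R) → (∀ z ∈ ball c R, Complex.exp (h z) ≠ 1) → |(h c).re| ≤ A →
      ∀ z ∈ ball c (R / 4), ‖deriv h z‖ ≤ B / R := by
  obtain ⟨B, hB0, hB⟩ := exists_schottky (Real.exp A)
  refine ⟨8 * B ^ 2, by positivity, fun c R h hh h1 hA z hz => ?_⟩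
  have hR : 0 < R := by
    have : 0 < R / 4 := dist_nonneg.trans_lt hz
    linarith
  have b1 := hB c R (fun z => Complex.exp (h z)) hh.cexp (fun z _ => Complex.exp_ne_zero _) h1
    (by rw [Complex.norm_exp]; exact Real.exp_le_exp.2 (abs_le.1 hA).2)
  have b2 := hB c R (fun z => Complex.exp (-h z)) hh.neg.cexp (fun z _ => Complex.exp_ne_zero _)
    (fun z hz e => h1 z hz (by rw [Complex.exp_neg, inv_eq_one] at e; exact e))
    (by rw [Complex.norm_exp]; exact Real.exp_le_exp.2 (by
      rw [Complex.neg_re]; linarith [(abs_le.1 hA).1]))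
  have hsub : ball z (R / 4) ⊆ ball c (R / 2) :=
    ball_subset_ball' (by rw [mem_ball] at hz; linarith)
  have hsub2 : ball c (R / 2) ⊆ ball c R := ball_subset_ball (by linarith)
  have hz' : z ∈ ball z (R / 4) := mem_ball_self (by linarith)
  have h3 := norm_deriv_le_of_norm_le (h := fun z => Complex.exp (h z)) (by linarith : 0 < R / 4)
    (hh.cexp.mono (hsub.trans hsub2)) fun w hw => b1 w (hsub hw)
  have h4 := (hh.differentiableAt (isOpen_ball.mem_nhds (hsub2 (hsub hz')))).hasDerivAt
  rw [h4.cexp.deriv, norm_mul] at h3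
  have h5 := b2 z (hsub hz')
  have h6 : ‖Complex.exp (-h z)‖ * ‖Complex.exp (h z)‖ = 1 := by
    rw [← norm_mul, ← Complex.exp_add, neg_add_cancel, Complex.exp_zero, norm_one]
  calc ‖deriv h z‖ = ‖Complex.exp (-h z)‖ * (‖Complex.exp (h z)‖ * ‖deriv h z‖) := by
        rw [← mul_assoc, h6, one_mul]
    _ ≤ B * (2 * B / (R / 4)) := by gcongr
    _ = _ := by ring

/-- Harnack's inequality for a logarithm of a function omitting `0` and `1`. -/
theorem exists_harnack_log : ∃ A : ℝ, 0 < A ∧ ∀ (c : ℂ) (R : ℝ) (h : ℂ → ℂ),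
    DifferentiableOn ℂ h (ball c R) → (∀ z ∈ ball c R, Complex.exp (h z) ≠ 1) → A < (h c).re →
      ∀ z ∈ ball c (R / 4), ‖h z - h c‖ ≤ 2 * (h c).re * dist z c / (R / 4 - dist z c) := by
  obtain ⟨B, hB0, hB⟩ := exists_schottky 1
  refine ⟨|Real.log B| + 1, by positivity, fun c R h hh h1 hA z hz => ?_⟩
  have hR : 0 < R := by
    have : 0 < R / 4 := dist_nonneg.trans_lt hz
    linarith
  refine norm_sub_le_of_re_pos (hh.mono (ball_subset_ball (by linarith))) (fun t ht => ?_) hz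
  by_contra! hcon
  rw [mem_ball] at ht
  have hsub : ball t (3 * R / 4) ⊆ ball c R := ball_subset_ball' (by linarith)
  have := hB t (3 * R / 4) (fun z => Complex.exp (h z)) (hh.mono hsub).cexp
    (fun z _ => Complex.exp_ne_zero _) (fun z hz => h1 z (hsub hz))
    (by rw [Complex.norm_exp]; exact Real.exp_le_one_iff.2 hcon) c
    (by rw [mem_ball, dist_comm]; linarith)
  rw [Complex.norm_exp, ← Real.le_log_iff_exp_le hB0] at this
  linarith [le_abs_self (Real.log B)]

theorem eqOn_of_exp_eq {s : Set ℂ} (hs : IsPreconnected s) {L₁ L₂ : ℂ → ℂ}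
    (h₁ : ContinuousOn L₁ s) (h₂ : ContinuousOn L₂ s)
    (h : ∀ t ∈ s, Complex.exp (L₁ t) = Complex.exp (L₂ t)) {t₀ : ℂ} (ht₀ : t₀ ∈ s)
    (h0 : L₁ t₀ = L₂ t₀) : EqOn L₁ L₂ s :=
  Complex.isCoveringMap_exp.eqOn_of_comp_eqOn hs h₁ h₂ (fun t ht => Subtype.ext (h t ht)) ht₀ h0

theorem convex_strip (u v : ℝ) : Convex ℝ (Complex.re ⁻¹' Ioo u v) :=
  (convex_Ioo u v).linear_preimage Complex.reLm

theorem isOpen_strip (u v : ℝ) : IsOpen (Complex.re ⁻¹' Ioo u v) :=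
  isOpen_Ioo.preimage Complex.continuous_re

theorem ball_subset_strip {u v R : ℝ} {t : ℂ} (h1 : u ≤ t.re - R) (h2 : t.re + R ≤ v) :
    ball t R ⊆ Complex.re ⁻¹' Ioo u v := by
  intro z hz
  have := (Complex.abs_re_le_norm (z - t)).trans_lt (by rwa [mem_ball, dist_eq_norm] at hz)
  rw [Complex.sub_re, abs_lt] at this
  exact ⟨by linarith, by linarith⟩

/-- A logarithm of a `2πi`-periodic function on a vertical strip. -/
theorem exists_int_of_periodic {u v : ℝ} {L : ℂ → ℂ}
    (hL : DifferentiableOn ℂ L (Complex.re ⁻¹' Ioo u v))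
    (hper : ∀ t ∈ Complex.re ⁻¹' Ioo u v,
      Complex.exp (L (t + 2 * Real.pi * Complex.I)) = Complex.exp (L t))
    {t₀ : ℂ} (ht₀ : t₀ ∈ Complex.re ⁻¹' Ioo u v) :
    ∃ e : ℤ, ∀ k : ℤ, ∀ t ∈ Complex.re ⁻¹' Ioo u v,
      L (t + k * (2 * Real.pi * Complex.I)) = L t + (e * k : ℤ) * (2 * Real.pi * Complex.I) := by
  obtain ⟨e, he⟩ := Complex.exp_eq_exp_iff_exists_int.1 (hper t₀ ht₀)
  have hmem : ∀ k : ℤ, ∀ t ∈ Complex.re ⁻¹' Ioo u v,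
      t + k * (2 * Real.pi * Complex.I) ∈ Complex.re ⁻¹' Ioo u v := by
    intro k t ht
    have : (t + k * (2 * Real.pi * Complex.I)).re = t.re := by simp
    rwa [mem_preimage, this]
  have h1 : ∀ t ∈ Complex.re ⁻¹' Ioo u v,
      L (t + 2 * Real.pi * Complex.I) = L t + e * (2 * Real.pi * Complex.I) := by
    refine eqOn_of_exp_eq (convex_strip u v).isPreconnected
      (L₁ := fun t => L (t + 2 * Real.pi * Complex.I))
      (L₂ := fun t => L t + e * (2 * Real.pi * Complex.I))
      (hL.continuousOn.comp (by fun_prop) fun t ht => by simpa using hmem 1 t ht)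
      (hL.continuousOn.add continuousOn_const) (fun t ht => ?_) ht₀ he
    rw [hper t ht, Complex.exp_eq_exp_iff_exists_int]
    exact ⟨-e, by push_cast; ring⟩
  refine ⟨e, fun k => ?_⟩
  induction k using Int.induction_on with
  | zero => simp
  | succ k ih =>
    intro t ht
    have := h1 _ (hmem k t ht)
    rw [ih t ht] at this
    rw [← sub_eq_zero] at this ⊢
    rw [← this]
    push_cast
    ring_nf
  | pred k ih =>
    intro t ht
    have := h1 _ (hmem (-k - 1) t ht)
    have h2 := ih t ht
    have e1 : t + ((-k - 1 : ℤ) : ℂ) * (2 * Real.pi * Complex.I) + 2 * Real.pi * Complex.I =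
      t + ((-k : ℤ) : ℂ) * (2 * Real.pi * Complex.I) := by push_cast; ring
    rw [e1, h2] at this
    have hsplit : L t + ((e * -k : ℤ) : ℂ) * (2 * Real.pi * Complex.I) =
        L t + ((e * (-k - 1) : ℤ) : ℂ) * (2 * Real.pi * Complex.I) +
          e * (2 * Real.pi * Complex.I) := by
      push_cast
      ring
    linear_combination -this + hsplit

/-- Integrals of a `2πi`-periodic function over vertical segments. -/
theorem integral_vertical_eq {u v : ℝ} {L : ℂ → ℂ}
    (hL : DifferentiableOn ℂ L (Complex.re ⁻¹' Ioo u v))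
    (hper : ∀ t ∈ Complex.re ⁻¹' Ioo u v, L (t + 2 * Real.pi * Complex.I) = L t)
    {σ₀ σ₁ : ℝ} (h₀ : σ₀ ∈ Ioo u v) (h₁ : σ₁ ∈ Ioo u v) (τ₀ τ₁ : ℝ) :
    ∫ τ in τ₁..τ₁ + 2 * Real.pi, L (σ₁ + τ * Complex.I) =
      ∫ τ in τ₀..τ₀ + 2 * Real.pi, L (σ₀ + τ * Complex.I) := by
  have hp : ∀ σ ∈ Ioo u v, Function.Periodic (fun τ : ℝ => L (σ + τ * Complex.I)) (2 * Real.pi) := by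
    intro σ hσ τ
    have := hper (σ + τ * Complex.I) (by simpa using hσ)
    simp only
    rw [← this]
    push_cast
    ring_nf
  rw [(hp σ₁ h₁).intervalIntegral_add_eq τ₁ τ₀]
  have hsub : uIcc σ₀ σ₁ ⊆ Ioo u v := (ordConnected_Ioo).uIcc_subset h₀ h₁
  have := Complex.integral_boundary_rect_eq_zero_of_differentiableOn L (σ₀ + τ₀ * Complex.I)
    (σ₁ + (τ₀ + 2 * Real.pi : ℝ) * Complex.I) (hL.mono fun t ht => hsub (by simpa using ht.1))
  have e1 : ∀ x : ℝ, x ∈ uIcc σ₀ σ₁ →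
      L (x + ((τ₀ + 2 * Real.pi : ℝ) : ℂ) * Complex.I) = L (x + τ₀ * Complex.I) := by
    intro x hx
    have := hp x (hsub hx) τ₀
    simpa using this
  simp only [Complex.add_re, Complex.ofReal_re, Complex.re_ofReal_mul, Complex.I_re, mul_zero,
    add_zero, Complex.add_im, Complex.ofReal_im, Complex.im_ofReal_mul, Complex.I_im, mul_one,
    zero_add] at this
  rw [intervalIntegral.integral_congr (g := fun x : ℝ => L (x + τ₀ * Complex.I)) (fun x hx => e1 x hx),
    sub_self, zero_add, sub_eq_zero] at this
  have h2 := smul_right_injective ℂ Complex.I_ne_zero this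
  exact h2

/-- The open annulus around `a` with radii `exp u < exp v` is a maximal annulus contained
in `W`. -/
structure IsFullAnnulus (W : Set ℂ) (a : ℂ) (u v : ℝ) : Prop where
  exists_lower : ∃ j ∉ W, ‖j - a‖ = Real.exp u
  exists_upper : ∃ j ∉ W, ‖j - a‖ = Real.exp v
  mem : ∀ z, Real.exp u < ‖z - a‖ → ‖z - a‖ < Real.exp v → z ∈ W

theorem IsFullAnnulus.add_exp_mem {W : Set ℂ} {a : ℂ} {u v : ℝ} (h : IsFullAnnulus W a u v) {t : ℂ}
    (ht : t ∈ Complex.re ⁻¹' Ioo u v) : a + Complex.exp t ∈ W := by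
  apply h.mem <;> rw [add_sub_cancel_left, Complex.norm_exp, Real.exp_lt_exp]
  exacts [ht.1, ht.2]

theorem exists_isFullAnnulus {W : Set ℂ} (hW : IsOpen W) (hb : ¬Bornology.IsBounded Wᶜ) {a j₁ : ℂ}
    (hj₁ : j₁ ∉ W) (hja : j₁ ≠ a) {σ c : ℝ} (hσ : ‖j₁ - a‖ ≤ Real.exp (σ - c))
    (hfull : ∀ z, Real.exp (σ - c) < ‖z - a‖ → ‖z - a‖ < Real.exp (σ + c) → z ∈ W) :
    ∃ u v, IsFullAnnulus W a u v ∧ u ≤ σ - c ∧ σ + c ≤ v := by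
  have hnc : Continuous fun z : ℂ => ‖z - a‖ := by fun_prop
  obtain ⟨jl, hjl, hjlmax⟩ := ((isCompact_closedBall a (Real.exp (σ - c))).inter_right
    hW.isClosed_compl).exists_isMaxOn ⟨j₁, by rwa [mem_closedBall, dist_eq_norm], hj₁⟩ hnc.continuousOn
  obtain ⟨b, hbW, hba⟩ : ∃ b ∉ W, Real.exp (σ + c) ≤ ‖b - a‖ := by
    by_contra! hcon
    refine hb ((isBounded_ball (x := a) (r := Real.exp (σ + c))).subset fun z hz => ?_)
    rw [mem_ball, dist_eq_norm]
    exact hcon z hz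
  obtain ⟨ju, hju, hjumin⟩ := ((isCompact_closedBall a ‖b - a‖).inter_right
    (hW.isClosed_compl.inter (isClosed_le continuous_const hnc :
      IsClosed {z | Real.exp (σ + c) ≤ ‖z - a‖}))).exists_isMinOn
    ⟨b, by rw [mem_closedBall, dist_eq_norm], hbW, hba⟩ hnc.continuousOn
  have hjl0 : 0 < ‖jl - a‖ := (norm_pos_iff.2 (sub_ne_zero.2 hja)).trans_le
    (hjlmax ⟨by rwa [mem_closedBall, dist_eq_norm], hj₁⟩)
  have hju0 : 0 < ‖ju - a‖ := (Real.exp_pos _).trans_le hju.2.2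
  have hjl1 : ‖jl - a‖ ≤ Real.exp (σ - c) := by
    have := hjl.1
    rwa [mem_closedBall, dist_eq_norm] at this
  refine ⟨Real.log ‖jl - a‖, Real.log ‖ju - a‖, ⟨⟨jl, hjl.2, (Real.exp_log hjl0).symm⟩,
    ⟨ju, hju.2.1, (Real.exp_log hju0).symm⟩, fun z hz1 hz2 => ?_⟩,
    (Real.log_le_iff_le_exp hjl0).2 hjl1, (Real.le_log_iff_exp_le hju0).2 hju.2.2⟩
  rw [Real.exp_log hjl0] at hz1
  rw [Real.exp_log hju0] at hz2
  by_contra hzW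
  rcases le_or_gt ‖z - a‖ (Real.exp (σ - c)) with h1 | h1
  · exact not_lt.2 (hjlmax ⟨by rwa [mem_closedBall, dist_eq_norm], hzW⟩) hz1
  · rcases lt_or_ge ‖z - a‖ (Real.exp (σ + c)) with h2 | h2
    · exact hzW (hfull z h1 h2)
    · have h3 : ‖ju - a‖ ≤ ‖b - a‖ := hjumin ⟨by rw [mem_closedBall, dist_eq_norm], hbW, hba⟩
      exact not_lt.2 (hjumin ⟨by rw [mem_closedBall, dist_eq_norm]; exact hz2.le.trans h3, hzW, h2⟩) hz2

/-- Harnack's inequality on a compact set for logarithms of functions omitting `0` and `1`. -/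
theorem exists_harnack_of_large {W V : Set ℂ} (hWo : IsOpen W) (hWc : IsPreconnected W)
    (hV : IsCompact V) (hVc : IsPreconnected V) (hVW : V ⊆ W) : ∃ C A : ℝ, 1 ≤ C ∧
      ∀ φ : ℂ → ℂ, DifferentiableOn ℂ φ W → (∀ z ∈ W, φ z ≠ 0) → (∀ z ∈ W, φ z ≠ 1) →
        ∀ x ∈ V, A < Real.log ‖φ x‖ → ∀ y ∈ V, Real.log ‖φ x‖ ≤ C * Real.log ‖φ y‖ := by
  obtain ⟨ε, hε, hεW⟩ := hV.exists_cthickening_subset_open hWo hVW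
  have hVε : V ⊆ thickening ε V := self_subset_thickening hε V
  have hpre : IsPreconnected (thickening ε V) := by
    rcases V.eq_empty_or_nonempty with rfl | ⟨x, hx⟩
    · simpa using isPreconnected_empty
    refine isPreconnected_of_forall x fun y hy => ?_
    obtain ⟨b, hb, hyb⟩ := mem_thickening_iff.1 hy
    exact ⟨V ∪ ball b ε, union_subset hVε (ball_subset_thickening hb ε), Or.inl hx, Or.inr hyb,
      IsPreconnected.union b hb (mem_ball_self hε) hVc (convex_ball b ε).isPreconnected⟩
  obtain ⟨B, hB1, hB⟩ := exists_schottky_chain hWo hWc hV.cthickening hεW 1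
  obtain ⟨C, hC1, hC⟩ := exists_harnack_chain isOpen_thickening hpre hV hVε
  refine ⟨C, Real.log B, hC1, fun φ hφ h0 h1 x hx hA y hy => ?_⟩
  have hsub : thickening ε V ⊆ cthickening ε V := thickening_subset_cthickening ε V
  refine hC φ (hφ.mono (hsub.trans hεW)) (fun z hz => ?_) x hx y hy
  by_contra! hcon
  have h2 := hB φ hφ h0 h1 z (hsub hz) hcon x (hsub (hVε hx))
  have h3 : 0 < ‖φ x‖ := norm_pos_iff.2 (h0 x (hVW hx))
  exact not_lt.2 (Real.log_le_log h3 h2) hA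

namespace IsBakerFrame

variable {F : ℂ → OnePoint ℂ} {W : Set ℂ} {q : ℕ} {a x₀ : ℂ} {K V : Set ℂ} {r : ℝ}

theorem one_le_q (h : IsBakerFrame F W q a x₀ K V r) : q ≠ 0 := by
  have := h.one_le
  lia

/-- The map `t ↦ log (f^q (a + exp t) - a)` on the strip over a full annulus. -/
theorem exists_log (h : IsBakerFrame F W q a x₀ K V r) {u v : ℝ} (hA : IsFullAnnulus W a u v)
    {t₀ : ℂ} (ht₀ : t₀ ∈ Complex.re ⁻¹' Ioo u v) :
    ∃ L : ℂ → ℂ, ∃ e : ℤ, DifferentiableOn ℂ L (Complex.re ⁻¹' Ioo u v) ∧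
      (∀ t ∈ Complex.re ⁻¹' Ioo u v,
        Complex.exp (L t) = (finMap F)^[q] (a + Complex.exp t) - a) ∧
      ∀ k : ℤ, ∀ t ∈ Complex.re ⁻¹' Ioo u v,
        L (t + k * (2 * Real.pi * Complex.I)) = L t + (e * k : ℤ) * (2 * Real.pi * Complex.I) := by
  have hd : DifferentiableOn ℂ (fun t => (finMap F)^[q] (a + Complex.exp t) - a)
      (Complex.re ⁻¹' Ioo u v) :=
    ((h.differentiableOn q).comp (by fun_prop) fun t ht => hA.add_exp_mem ht).sub_const a
  have h0 : ∀ t ∈ Complex.re ⁻¹' Ioo u v, (finMap F)^[q] (a + Complex.exp t) - a ≠ 0 :=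
    fun t ht e => h.notMem (by
      rw [← sub_eq_zero.1 e]; exact h.mapsTo (hA.add_exp_mem ht))
  obtain ⟨L, hL, -, hexp⟩ := exists_holomorphic_log (convex_strip u v) (isOpen_strip u v) hd h0 ht₀
    (Complex.exp_log (h0 t₀ ht₀))
  obtain ⟨e, he⟩ := exists_int_of_periodic hL (fun t ht => by
    rw [hexp t ht, hexp _ (by simpa using ht), Complex.exp_periodic]) ht₀
  exact ⟨L, e, hL, hexp, he⟩

end IsBakerFrame

theorem two_pi_mul_I_mem_ball : (2 * Real.pi * Complex.I : ℂ) ∈ ball (0 : ℂ) 7 := by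
  have h1 := Real.pi_pos
  have h2 := Real.pi_lt_d2
  simp [abs_of_pos h1]
  linarith

theorem norm_sub_lt_of_norm_deriv_le {κ : ℂ → ℂ} {c : ℂ} {C : ℝ}
    (hκ : DifferentiableOn ℂ κ (ball c 7)) (hC : ∀ t ∈ ball c 7, ‖deriv κ t‖ ≤ C) (hC1 : C < 1) :
    ‖κ (c + 2 * Real.pi * Complex.I) - κ c‖ < 2 * Real.pi := by
  have hmem : c + 2 * Real.pi * Complex.I ∈ ball c 7 := by
    simpa [dist_eq_norm] using two_pi_mul_I_mem_ball
  have := Convex.norm_image_sub_le_of_norm_deriv_le (𝕜 := ℂ) (f := κ)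
    (fun t ht => hκ.differentiableAt (isOpen_ball.mem_nhds ht)) hC (convex_ball c 7)
    (mem_ball_self (by norm_num)) hmem
  have h2 : ‖c + 2 * Real.pi * Complex.I - c‖ = 2 * Real.pi := by
    simp [abs_of_pos Real.pi_pos]
  rw [h2] at this
  refine this.trans_lt ?_
  nlinarith [Real.pi_pos]

theorem two_pi_le_norm_int_mul {e : ℤ} (he : e ≠ 0) :
    2 * Real.pi ≤ ‖(e : ℂ) * (2 * Real.pi * Complex.I)‖ := by
  have h3 : (1 : ℝ) ≤ |(e : ℝ)| := by exact_mod_cast Int.one_le_abs he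
  have h4 : ‖(e : ℂ) * (2 * Real.pi * Complex.I)‖ = |(e : ℝ)| * (2 * Real.pi) := by
    simp [abs_of_pos Real.pi_pos]
  rw [h4]
  nlinarith [Real.pi_pos]

namespace IsBakerFrame

variable {F : ℂ → OnePoint ℂ} {W : Set ℂ} {q : ℕ} {a x₀ : ℂ} {K V : Set ℂ} {r : ℝ}

/-- If a value on `V` of an iterate lies in a full annulus, then either all values do or some
value has the same modulus as a point on the boundary. -/
theorem mem_annulus_or_exists (h : IsBakerFrame F W q a x₀ K V r) {u v : ℝ}
    (hA : IsFullAnnulus W a u v) {m : ℕ} {y : ℂ} (hy : y ∈ V)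
    (hyu : Real.exp u < ‖shiftedIterate F q a m y‖) (hyv : ‖shiftedIterate F q a m y‖ < Real.exp v) :
    (∀ z ∈ V, Real.exp u < ‖shiftedIterate F q a m z‖ ∧ ‖shiftedIterate F q a m z‖ < Real.exp v) ∨
      ∃ z ∈ V, ∃ j ∉ W, ‖shiftedIterate F q a m z‖ = ‖j - a‖ := by
  have hcont := ((h.differentiableOn_shiftedIterate m).continuousOn.mono h.V_subset).norm
  by_contra! hcon
  obtain ⟨⟨z, hz, hzuv⟩, hno⟩ := hcon
  rcases le_or_gt ‖shiftedIterate F q a m z‖ (Real.exp u) with h1 | h1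
  · obtain ⟨j, hj, hju⟩ := hA.exists_lower
    obtain ⟨z', hz', e⟩ := h.isPreconnected_V.intermediate_value hz hy hcont ⟨h1, hyu.le⟩
    exact hno z' hz' j hj (e.trans hju.symm)
  · obtain ⟨j, hj, hjv⟩ := hA.exists_upper
    obtain ⟨z', hz', e⟩ := h.isPreconnected_V.intermediate_value hy hz hcont ⟨hyv.le, hzuv h1⟩
    exact hno z' hz' j hj (e.trans hjv.symm)

/-- The winding number of `f^q - a` along circles in a full annulus vanishes, if small
loops are mapped to these circles by an iterate. -/
theorem winding_eq_zero (h : IsBakerFrame F W q a x₀ K V r) {M η : ℝ}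
    (hM : ∀ n, ∀ j ∉ W, ∀ v ∈ V, ‖shiftedIterate F q a n v‖ ≤ 1 * ‖j - a‖ →
      ‖j - a‖ ≤ 1 * ‖shiftedIterate F q a n v‖ → ∀ x ∈ K, ∀ y ∈ ball x (r / 2),
        ‖deriv (shiftedIterate F q a n) y‖ ≤ M * ‖shiftedIterate F q a n y‖)
    (hM0 : 0 ≤ M) (hMη : M * η < 1) {u v : ℝ} (hA : IsFullAnnulus W a u v) {L : ℂ → ℂ} {e : ℤ}
    (hL : DifferentiableOn ℂ L (Complex.re ⁻¹' Ioo u v))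
    (hexp : ∀ t ∈ Complex.re ⁻¹' Ioo u v,
      Complex.exp (L t) = (finMap F)^[q] (a + Complex.exp t) - a)
    (he : ∀ k : ℤ, ∀ t ∈ Complex.re ⁻¹' Ioo u v,
      L (t + k * (2 * Real.pi * Complex.I)) = L t + (e * k : ℤ) * (2 * Real.pi * Complex.I))
    {n : ℕ} {x : ℂ} (hx : x ∈ K) (hxu : Real.exp u < ‖shiftedIterate F q a n x‖)
    (hxv : ‖shiftedIterate F q a n x‖ < Real.exp v) {Ψ : ℂ → ℂ}
    (hΨ : DifferentiableOn ℂ Ψ (ball 0 7)) (hΨx : MapsTo Ψ (ball 0 7) (ball x (r / 2)))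
    (hΨη : ∀ t ∈ ball 0 7, ‖deriv Ψ t‖ ≤ η)
    (hΨn : ∀ t ∈ ball 0 7, shiftedIterate F q a n (Ψ t) = shiftedIterate F q a n x * Complex.exp t) :
    e = 0 := by
  by_contra he0
  have hr := h.r_pos
  have hxV : ball x (r / 2) ⊆ V := (ball_subset_ball (by linarith)).trans
    (ball_subset_closedBall.trans (h.closedBall_subset x hx))
  have hxW := h.K_subset hx
  have key : ∀ k : ℕ, ∃ κ : ℂ → ℂ, DifferentiableOn ℂ κ (ball 0 7) ∧
      (∀ t ∈ ball 0 7, Complex.exp (κ t) = shiftedIterate F q a (n + k) (Ψ t)) ∧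
      (∃ d : ℤ, d ≠ 0 ∧ κ (0 + 2 * Real.pi * Complex.I) = κ 0 + d * (2 * Real.pi * Complex.I)) ∧
      ∃ y ∈ V, Real.exp u < ‖shiftedIterate F q a (n + k) y‖ ∧
        ‖shiftedIterate F q a (n + k) y‖ < Real.exp v := by
    intro k
    induction k with
    | zero =>
      refine ⟨fun t => Complex.log (shiftedIterate F q a n x) + t, by fun_prop, fun t ht => ?_,
        ⟨1, one_ne_zero, by simp⟩, x, h.K_subset_V hx, hxu, hxv⟩
      rw [Complex.exp_add, Complex.exp_log (h.shiftedIterate_ne_zero n hxW), add_zero, hΨn t ht]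
    | succ k ih =>
      obtain ⟨κ, hκ, hκexp, ⟨d, hd0, hd⟩, y, hy, hyu, hyv⟩ := ih
      rcases h.mem_annulus_or_exists hA hy hyu hyv with hall | ⟨z, hz, j, hj, hzj⟩
      · have hκS : MapsTo κ (ball 0 7) (Complex.re ⁻¹' Ioo u v) := by
          intro t ht
          have := hall _ (hxV (hΨx ht))
          rw [← hκexp t ht, Complex.norm_exp, Real.exp_lt_exp, Real.exp_lt_exp] at this
          exact this
        have h0 : (0 : ℂ) ∈ ball (0 : ℂ) 7 := mem_ball_self (by norm_num)
        refine ⟨L ∘ κ, hL.comp hκ hκS, fun t ht => ?_, ⟨e * d, mul_ne_zero he0 hd0, ?_⟩, x₀,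
          h.K_subset_V h.mem_K, ?_⟩
        · rw [Function.comp_apply, hexp _ (hκS ht), hκexp t ht, ← add_assoc, shiftedIterate_succ']
        · simp only [Function.comp_apply]
          rw [hd, he d _ (hκS h0)]
        · rw [← add_assoc, shiftedIterate_succ]
          exact hall _ (h.apply_mem_V x₀ h.mem_K)
      · exfalso
        have hder := hM (n + k) j hj z hz (by rw [hzj, one_mul]) (by rw [hzj, one_mul]) x hx
        have hlt := norm_sub_lt_of_norm_deriv_le hκ (C := M * η) (fun t ht => by
          have hb := isOpen_ball.mem_nhds ht
          have hΨW := h.V_subset (hxV (hΨx ht))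
          have e1 := (hκ.differentiableAt hb).hasDerivAt.cexp
          have e2 := (((h.differentiableOn_shiftedIterate (n + k)).differentiableAt
            (h.isOpen.mem_nhds hΨW)).hasDerivAt).comp t (hΨ.differentiableAt hb).hasDerivAt
          have e3 := e1.unique (e2.congr_of_eventuallyEq
            (by filter_upwards [hb] with s hs using hκexp s hs))
          have hpos : 0 < ‖shiftedIterate F q a (n + k) (Ψ t)‖ :=
            norm_pos_iff.2 (h.shiftedIterate_ne_zero _ hΨW)
          have e4 := congrArg norm e3
          rw [norm_mul, norm_mul, hκexp t ht] at e4
          refine le_of_mul_le_mul_left ?_ hpos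
          calc _ = _ := e4
            _ ≤ (M * ‖shiftedIterate F q a (n + k) (Ψ t)‖) * η :=
              mul_le_mul (hder _ (hΨx ht)) (hΨη t ht) (norm_nonneg _) (by positivity)
            _ = _ := by ring) hMη
        rw [hd, add_sub_cancel_left] at hlt
        exact not_lt.2 (two_pi_le_norm_int_mul hd0) hlt
  obtain ⟨N, hN⟩ := h.tendsto_shiftedIterate (Real.exp v)
  obtain ⟨κ, -, -, -, y, hy, -, hyv⟩ := key N
  exact not_lt.2 (hN (n + N) (Nat.le_add_left N n) y hy).le hyv

end IsBakerFrame

theorem integral_vertical_eq' {u v : ℝ} {L : ℂ → ℂ}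
    (hL : DifferentiableOn ℂ L (Complex.re ⁻¹' Ioo u v))
    (hper : ∀ t ∈ Complex.re ⁻¹' Ioo u v, L (t + 2 * Real.pi * Complex.I) = L t)
    {t₀ t₁ : ℂ} (h₀ : t₀ ∈ Complex.re ⁻¹' Ioo u v) (h₁ : t₁ ∈ Complex.re ⁻¹' Ioo u v) :
    ∫ θ in (0 : ℝ)..2 * Real.pi, L (t₁ + θ * Complex.I) =
      ∫ θ in (0 : ℝ)..2 * Real.pi, L (t₀ + θ * Complex.I) := by
  have hshift : ∀ t : ℂ, ∫ θ in (0 : ℝ)..2 * Real.pi, L (t + θ * Complex.I) =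
      ∫ τ in t.im..t.im + 2 * Real.pi, L (t.re + τ * Complex.I) := by
    intro t
    have := intervalIntegral.integral_comp_add_left
      (f := fun τ : ℝ => L (t.re + τ * Complex.I)) (a := 0) (b := 2 * Real.pi) t.im
    rw [add_zero] at this
    rw [← this]
    congr 1
    ext θ
    congr 1
    conv_lhs => rw [← Complex.re_add_im t]
    push_cast
    ring
  rw [hshift, hshift]
  exact integral_vertical_eq hL hper h₀ h₁ _ _

theorem norm_le_of_forall_norm_sub_le {u v : ℝ} {L : ℂ → ℂ}
    (hL : DifferentiableOn ℂ L (Complex.re ⁻¹' Ioo u v))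
    (hper : ∀ t ∈ Complex.re ⁻¹' Ioo u v, L (t + 2 * Real.pi * Complex.I) = L t)
    {t₀ t₁ : ℂ} (h₀ : t₀ ∈ Complex.re ⁻¹' Ioo u v) (h₁ : t₁ ∈ Complex.re ⁻¹' Ioo u v)
    {b : ℂ} {B : ℝ}
    (hB : ∀ θ ∈ Icc (0 : ℝ) (2 * Real.pi), ‖L (t₀ + θ * Complex.I) - L (t₁ + θ * Complex.I) + b‖ ≤ B) :
    ‖b‖ ≤ B := by
  have hcont : ∀ t ∈ Complex.re ⁻¹' Ioo u v, Continuous fun θ : ℝ => L (t + θ * Complex.I) :=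
    fun t ht => hL.continuousOn.comp_continuous (by fun_prop) fun θ => by simpa using ht
  have h2 := intervalIntegral.norm_integral_le_of_norm_le_const (a := 0) (b := 2 * Real.pi)
    (f := fun θ : ℝ => L (t₀ + θ * Complex.I) - L (t₁ + θ * Complex.I) + b) (C := B) fun θ hθ => by
      rw [uIoc_of_le Real.two_pi_pos.le] at hθ
      exact hB θ ⟨hθ.1.le, hθ.2⟩
  have hcont' : Continuous fun θ : ℝ => L (t₀ + θ * Complex.I) - L (t₁ + θ * Complex.I) :=
    (hcont t₀ h₀).sub (hcont t₁ h₁)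
  rw [intervalIntegral.integral_add (hcont'.intervalIntegrable _ _) (by simp),
    intervalIntegral.integral_sub ((hcont t₀ h₀).intervalIntegrable _ _)
    ((hcont t₁ h₁).intervalIntegrable _ _), integral_vertical_eq' hL hper h₀ h₁, sub_self, zero_add,
    intervalIntegral.integral_const, sub_zero, norm_smul, Real.norm_of_nonneg Real.two_pi_pos.le,
    abs_of_pos Real.two_pi_pos, mul_comm] at h2
  exact le_of_mul_le_mul_right h2 Real.two_pi_pos

namespace IsBakerFrame

variable {F : ℂ → OnePoint ℂ} {W : Set ℂ} {q : ℕ} {a x₀ : ℂ} {K V : Set ℂ} {r : ℝ}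

theorem exists_abs_log_sub_log_le (h : IsBakerFrame F W q a x₀ K V r) (κ : ℝ) :
    ∃ B, 0 ≤ B ∧ ∀ n, ∀ j ∉ W, j ≠ a → ∀ z ∈ V,
      |Real.log ‖shiftedIterate F q a n z‖ - Real.log ‖j - a‖| ≤ κ → ∀ y ∈ V, ∀ y' ∈ V,
        |Real.log ‖shiftedIterate F q a n y‖ - Real.log ‖shiftedIterate F q a n y'‖| ≤ B := by
  obtain ⟨B, hB1, hB⟩ := h.exists_tame (Real.exp κ)
  have hB0 : 0 < B := by linarith
  have hlB := Real.log_nonneg hB1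
  have hexp : ∀ {s t : ℝ}, 0 < s → 0 < t → Real.log s - Real.log t ≤ κ → s ≤ Real.exp κ * t := by
    intro s t hs ht hst
    rw [← Real.log_le_log_iff hs (by positivity), Real.log_mul (Real.exp_pos _).ne' ht.ne',
      Real.log_exp]
    linarith
  have hlog : ∀ {s t : ℝ}, 0 < s → 0 < t → s ≤ B * t → Real.log s - Real.log t ≤ Real.log B := by
    intro s t hs ht hst
    rw [← Real.log_le_log_iff hs (by positivity), Real.log_mul hB0.ne' ht.ne'] at hst
    linarith
  refine ⟨2 * Real.log B, by linarith, fun n j hj hja z hz hzj y hy y' hy' => ?_⟩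
  have hpos : ∀ y ∈ V, 0 < ‖shiftedIterate F q a n y‖ := fun y hy =>
    norm_pos_iff.2 (h.shiftedIterate_ne_zero n (h.V_subset hy))
  have hj0 : 0 < ‖j - a‖ := norm_pos_iff.2 (sub_ne_zero.2 hja)
  rw [abs_le] at hzj
  have := hB n j hj z hz (hexp (hpos z hz) hj0 hzj.2) (hexp hj0 (hpos z hz) (by linarith))
  have h1 := hlog (hpos y hy) hj0 (this y hy).1
  have h2 := hlog hj0 (hpos y hy) (this y hy).2
  have h3 := hlog (hpos y' hy') hj0 (this y' hy').1
  have h4 := hlog hj0 (hpos y' hy') (this y' hy').2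
  rw [abs_le]
  constructor <;> linarith

/-- A value of an iterate far from a given value stays away from the boundary of a full
annulus. -/
theorem exists_lt_sub_lt (h : IsBakerFrame F W q a x₀ K V r) (κ : ℝ) :
    ∃ B, 0 ≤ B ∧ ∀ u v, IsFullAnnulus W a u v → ∀ n, ∀ y ∈ V, ∀ y' ∈ V,
      u ≤ Real.log ‖shiftedIterate F q a n y‖ - κ → Real.log ‖shiftedIterate F q a n y‖ + κ ≤ v →
      B < |Real.log ‖shiftedIterate F q a n y‖ - Real.log ‖shiftedIterate F q a n y'‖| →
      u ≤ Real.log ‖shiftedIterate F q a n y'‖ - κ ∧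
        Real.log ‖shiftedIterate F q a n y'‖ + κ ≤ v := by
  obtain ⟨B, hB0, hB⟩ := h.exists_abs_log_sub_log_le |κ|
  refine ⟨B, hB0, fun u v hA n y hy y' hy' hu hv hlt => ?_⟩
  have hcont : ContinuousOn (fun z => Real.log ‖shiftedIterate F q a n z‖) V :=
    ((h.differentiableOn_shiftedIterate n).continuousOn.mono h.V_subset).norm.log
      fun z hz => (norm_pos_iff.2 (h.shiftedIterate_ne_zero n (h.V_subset hz))).ne'
  have hne : ∀ {j s}, ‖j - a‖ = Real.exp s → j ≠ a := by
    rintro j s hjs rfl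
    rw [sub_self, norm_zero] at hjs
    exact (Real.exp_pos s).ne hjs
  have hκ := le_abs_self κ
  have hκ0 := abs_nonneg κ
  constructor
  · by_contra! hcon
    obtain ⟨j, hj, hju⟩ := hA.exists_lower
    obtain ⟨z, hz, hzu⟩ : ∃ z ∈ V, |Real.log ‖shiftedIterate F q a n z‖ - u| ≤ |κ| := by
      rcases le_or_gt u (Real.log ‖shiftedIterate F q a n y'‖) with h1 | h1
      · exact ⟨y', hy', by rw [abs_le]; constructor <;> linarith⟩
      · rcases le_or_gt u (Real.log ‖shiftedIterate F q a n y‖) with h2 | h2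
        · obtain ⟨z, hz, e⟩ := h.isPreconnected_V.intermediate_value hy' hy hcont ⟨h1.le, h2⟩
          dsimp only at e
          exact ⟨z, hz, by rw [e, sub_self, abs_zero]; exact hκ0⟩
        · exact ⟨y, hy, by
            rw [abs_le, ← neg_le_neg_iff, neg_neg]
            constructor <;> linarith [neg_abs_le κ]⟩
    exact not_lt.2 (hB n j hj (hne hju) z hz (by rwa [hju, Real.log_exp]) y hy y' hy') hlt
  · by_contra! hcon
    obtain ⟨j, hj, hju⟩ := hA.exists_upper
    obtain ⟨z, hz, hzu⟩ : ∃ z ∈ V, |Real.log ‖shiftedIterate F q a n z‖ - v| ≤ |κ| := by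
      rcases le_or_gt (Real.log ‖shiftedIterate F q a n y'‖) v with h1 | h1
      · exact ⟨y', hy', by rw [abs_le]; constructor <;> linarith⟩
      · rcases le_or_gt (Real.log ‖shiftedIterate F q a n y‖) v with h2 | h2
        · obtain ⟨z, hz, e⟩ := h.isPreconnected_V.intermediate_value hy hy' hcont ⟨h2, h1.le⟩
          dsimp only at e
          exact ⟨z, hz, by rw [e, sub_self, abs_zero]; exact hκ0⟩
        · exact ⟨y, hy, by
            rw [abs_le, ← neg_le_neg_iff, neg_neg]
            constructor <;> linarith [neg_abs_le κ]⟩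
    exact not_lt.2 (hB n j hj (hne hju) z hz (by rwa [hju, Real.log_exp]) y hy y' hy') hlt

/-- If the circles of radii comparable to `‖w‖` lie in `W` and avoid the postsingular set, then
the branches of the inverse iterates have small derivative on a logarithmic scale. -/
theorem exists_small_lift (h : IsBakerFrame F W q a x₀ K V r) {S : Set (OnePoint ℂ)}
    (hS : MeroSingularSet F univ S) {j₁ : ℂ} (hj₁ : j₁ ∉ W) (hja : j₁ ≠ a) {η : ℝ} (hη : 0 < η) :
    ∃ c₀ : ℝ, ∀ n, ∀ x ∈ K, (∀ t ∈ ball (0 : ℂ) c₀,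
      a + shiftedIterate F q a n x * Complex.exp t ∈ W ∧
      ((a + shiftedIterate F q a n x * Complex.exp t : ℂ) : OnePoint ℂ) ∉
        MeroPostsingular F univ S) → ∃ Ψ : ℂ → ℂ,
      DifferentiableOn ℂ Ψ (ball 0 7) ∧ MapsTo Ψ (ball 0 7) (ball x (r / 2)) ∧
      (∀ t ∈ ball 0 7, ‖deriv Ψ t‖ ≤ η) ∧
      ∀ t ∈ ball 0 7, shiftedIterate F q a n (Ψ t) = shiftedIterate F q a n x * Complex.exp t := by
  obtain ⟨A, hA⟩ := h.isCompact_K.exists_bound_of_continuousOn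
    (f := fun x => (x - a) / (j₁ - a)) (by fun_prop)
  obtain ⟨B, hB0, hB⟩ := exists_schottky A
  have hja' := sub_ne_zero.2 hja
  have hj0 := norm_pos_iff.2 hja'
  have hr := h.r_pos
  set η' := min η (r / 28) with hη'
  have hη'0 : 0 < η' := lt_min hη (by linarith)
  set c₀ := 28 + 8 * B * ‖j₁ - a‖ / η' with hc₀
  have hc28 : 28 ≤ c₀ := by
    have : 0 ≤ 8 * B * ‖j₁ - a‖ / η' := by positivity
    linarith
  refine ⟨c₀, fun n x hx hW => ?_⟩
  have h0 : (0 : ℂ) ∈ ball (0 : ℂ) c₀ := mem_ball_self (by linarith)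
  obtain ⟨Ψ, hΨ, hΨ0⟩ := h.exists_isExpLift hS (convex_ball 0 c₀) isOpen_ball h0
    (h.K_subset hx) n fun t ht => (hW t ht).2
  have hmaps := hΨ.mapsTo h.toIsBakerDomain Subset.rfl (convex_ball 0 c₀).isPreconnected h0
    (by rw [hΨ0]; exact h.K_subset hx) fun t ht => hΨ.mem_fatou h.toIsBakerDomain ht (hW t ht).1
  have hd := hΨ.differentiableOn
  have hbd := hB 0 c₀ (fun t => (Ψ t - a) / (j₁ - a)) ((hd.sub_const a).div_const _)
    (fun t ht => div_ne_zero (sub_ne_zero.2 fun e => h.notMem (e ▸ hmaps ht)) hja')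
    (fun t ht e => hj₁ (by
      rw [div_eq_one_iff_eq hja', sub_left_inj] at e
      exact e ▸ hmaps ht)) (by rw [hΨ0]; exact hA x hx)
  have h7 : ball (0 : ℂ) 7 ⊆ ball 0 c₀ := ball_subset_ball (by linarith)
  have hder : ∀ t ∈ ball (0 : ℂ) 7, ‖deriv Ψ t‖ ≤ η' := by
    intro t ht
    have hsub : ball t (c₀ / 4) ⊆ ball 0 (c₀ / 2) :=
      ball_subset_ball' (by rw [mem_ball] at ht; linarith)
    have := norm_deriv_le_of_norm_le (h := fun t => Ψ t - a) (B := B * ‖j₁ - a‖) (c := t)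
      (by linarith : 0 < c₀ / 4)
      ((hd.sub_const a).mono (hsub.trans (ball_subset_ball (by linarith)))) fun s hs => by
        have := hbd s (hsub hs)
        rwa [norm_div, div_le_iff₀ hj0] at this
    rw [deriv_sub_const] at this
    refine this.trans ?_
    have h8 : 8 * B * ‖j₁ - a‖ ≤ η' * c₀ := by
      rw [hc₀, mul_add, mul_div_cancel₀ _ hη'0.ne']
      linarith
    rw [div_le_iff₀ (by linarith)]
    linarith
  refine ⟨Ψ, hd.mono h7, fun t ht => ?_, fun t ht => (hder t ht).trans (min_le_left _ _),
    fun t ht => ?_⟩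
  · have := Convex.norm_image_sub_le_of_norm_deriv_le (𝕜 := ℂ) (f := Ψ)
      (fun t ht => hd.differentiableAt (isOpen_ball.mem_nhds (h7 ht))) hder (convex_ball 0 7)
      (mem_ball_self (by norm_num)) ht
    rw [hΨ0, sub_zero] at this
    rw [mem_ball, dist_eq_norm]
    have h1 : ‖t‖ ≤ 7 := (mem_ball_zero_iff.1 ht).le
    have h2 : η' ≤ r / 28 := min_le_right _ _
    calc ‖Ψ t - x‖ ≤ η' * ‖t‖ := this
      _ ≤ r / 28 * 7 := by gcongr
      _ < r / 2 := by linarith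
  · rw [shiftedIterate, hΨ.finMap_iterate_eq (h7 ht), add_sub_cancel_left]

/-- Large logarithmic displacements of consecutive iterates are comparable on `V`. -/
theorem exists_harnack_displacement (h : IsBakerFrame F W q a x₀ K V r) :
    ∃ C A : ℝ, 1 ≤ C ∧ ∀ n, ∀ s : ℝ, s = 1 ∨ s = -1 → ∀ x ∈ V, ∀ y ∈ V,
      A < s * (Real.log ‖shiftedIterate F q a (n + 1) x‖ - Real.log ‖shiftedIterate F q a n x‖) →
      s * (Real.log ‖shiftedIterate F q a (n + 1) x‖ - Real.log ‖shiftedIterate F q a n x‖) ≤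
      C * (s *
        (Real.log ‖shiftedIterate F q a (n + 1) y‖ - Real.log ‖shiftedIterate F q a n y‖)) := by
  obtain ⟨C, A, hC, hA⟩ := exists_harnack_of_large h.isOpen h.isPreconnected h.isCompact_V
    h.isPreconnected_V h.V_subset
  refine ⟨C, A, hC, fun n s hs x hx y hy => ?_⟩
  have h0 : ∀ n, ∀ z ∈ W, shiftedIterate F q a n z ≠ 0 := fun n z hz => h.shiftedIterate_ne_zero n hz
  have hd := h.differentiableOn_shiftedIterate
  have hlog : ∀ m k, ∀ z ∈ V, Real.log ‖shiftedIterate F q a m z / shiftedIterate F q a k z‖ =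
      Real.log ‖shiftedIterate F q a m z‖ - Real.log ‖shiftedIterate F q a k z‖ := fun m k z hz => by
    rw [norm_div, Real.log_div (norm_ne_zero_iff.2 (h0 m z (h.V_subset hz)))
      (norm_ne_zero_iff.2 (h0 k z (h.V_subset hz)))]
  rcases hs with rfl | rfl
  · have := hA (fun z => shiftedIterate F q a (n + 1) z / shiftedIterate F q a n z)
      ((hd _).div (hd _) (h0 n)) (fun z hz => div_ne_zero (h0 _ z hz) (h0 _ z hz))
      (fun z hz e => h.shiftedIterate_succ_ne n hz (by rwa [div_eq_one_iff_eq (h0 _ z hz)] at e))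
      x hx
    simp only [hlog _ _ x hx] at this
    intro h1
    rw [one_mul] at h1 ⊢
    have := this h1 y hy
    rw [hlog _ _ y hy] at this
    rwa [one_mul]
  · have := hA (fun z => shiftedIterate F q a n z / shiftedIterate F q a (n + 1) z)
      ((hd _).div (hd _) (h0 _)) (fun z hz => div_ne_zero (h0 _ z hz) (h0 _ z hz))
      (fun z hz e => h.shiftedIterate_succ_ne n hz
        (by rw [div_eq_one_iff_eq (h0 _ z hz)] at e; exact e.symm)) x hx
    simp only [hlog _ _ x hx] at this
    intro h1
    rw [neg_one_mul, neg_sub] at h1 ⊢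
    have := this h1 y hy
    rw [hlog _ _ y hy] at this
    rwa [neg_one_mul, neg_sub]

theorem norm_mul_I_lt {θ : ℝ} (hθ : θ ∈ Icc (0 : ℝ) (2 * Real.pi)) :
    ‖(θ * Complex.I : ℂ)‖ ≤ 7 := by
  rw [norm_mul, Complex.norm_I, mul_one, Complex.norm_real, Real.norm_of_nonneg hθ.1]
  linarith [hθ.2, Real.pi_lt_d2]

/-- On a wide full annulus around a point of the orbit, the image of a circle around `a` under
`f^q` has non-zero winding number. -/
theorem exists_not_periodic (h : IsBakerFrame F W q a x₀ K V r) :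
    ∃ c₀ : ℝ, 0 < c₀ ∧ ∀ u v, IsFullAnnulus W a u v → ∀ n, ∀ x ∈ K,
      u ≤ Real.log ‖shiftedIterate F q a n x‖ - c₀ →
      Real.log ‖shiftedIterate F q a n x‖ + c₀ ≤ v → ∀ L : ℂ → ℂ,
      DifferentiableOn ℂ L (Complex.re ⁻¹' Ioo u v) →
      (∀ t ∈ Complex.re ⁻¹' Ioo u v,
        Complex.exp (L t) = (finMap F)^[q] (a + Complex.exp t) - a) →
      ¬∀ t ∈ Complex.re ⁻¹' Ioo u v, L (t + 2 * Real.pi * Complex.I) = L t := by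
  obtain ⟨C, A, hC, hCA⟩ := h.exists_harnack_displacement
  obtain ⟨A', hA', hHar⟩ := exists_harnack_log
  obtain ⟨B, hB, hlt⟩ := h.exists_lt_sub_lt 140
  set Λ₀ := |A| + A' * C + B with hΛ₀
  obtain ⟨D, hD, hDer⟩ := exists_norm_deriv_log_le Λ₀
  have hA'C : A' ≤ A' * C := le_mul_of_one_le_right hA'.le hC
  set c₀ := 140 + D + 112 * C with hc₀
  refine ⟨c₀, by positivity, fun u v hann n x hx hu hv L hL hexp hper => ?_⟩
  have hxW := h.K_subset hx
  have hg : (finMap F)^[q] x ∈ V := h.apply_mem_V x hx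
  have h0 := h.shiftedIterate_ne_zero n hxW
  set t₀ := Complex.log (shiftedIterate F q a n x) with ht₀
  have hre₀ : t₀.re = Real.log ‖shiftedIterate F q a n x‖ := Complex.log_re _
  have he₀ : Complex.exp t₀ = shiftedIterate F q a n x := Complex.exp_log h0
  have hball₀ : ball t₀ c₀ ⊆ Complex.re ⁻¹' Ioo u v :=
    ball_subset_strip (by rw [hre₀]; exact hu) (by rw [hre₀]; exact hv)
  have hc0pos : 140 < c₀ := by linarith
  have ht₀m : t₀ ∈ Complex.re ⁻¹' Ioo u v := hball₀ (mem_ball_self (by linarith))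
  set t₁ := L t₀ with ht₁
  have he₁ : Complex.exp t₁ = shiftedIterate F q a (n + 1) x := by
    rw [ht₁, hexp t₀ ht₀m, he₀, shiftedIterate_succ']
  have hre₁ : t₁.re = Real.log ‖shiftedIterate F q a (n + 1) x‖ := by
    rw [← he₁, Complex.norm_exp, Real.log_exp]
  have hre₁' : t₁.re = Real.log ‖shiftedIterate F q a n ((finMap F)^[q] x)‖ := by
    rw [hre₁, shiftedIterate_succ]
  have hexp_ne : ∀ t ∈ Complex.re ⁻¹' Ioo u v, Complex.exp (L t) ≠ Complex.exp t := by
    intro t ht e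
    rw [hexp t ht] at e
    exact h.iterate_ne_self (hann.add_exp_mem ht) h.one_le_q (by linear_combination e)
  have hne1 : ∀ t ∈ Complex.re ⁻¹' Ioo u v, Complex.exp (L t - t) ≠ 1 := by
    intro t ht e
    rw [Complex.exp_sub, div_eq_one_iff_eq (Complex.exp_ne_zero _)] at e
    exact hexp_ne t ht e
  have hΛd : DifferentiableOn ℂ (fun t => L t - t) (Complex.re ⁻¹' Ioo u v) :=
    hL.sub differentiableOn_id
  have hlarge : Λ₀ < |(L t₀ - t₀).re| := by
    by_contra! hcon
    have h1 := hDer t₀ c₀ (fun t => L t - t) (hΛd.mono hball₀) (fun t ht => hne1 t (hball₀ ht)) hcon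
    have h7 : ball t₀ 7 ⊆ ball t₀ (c₀ / 4) := ball_subset_ball (by linarith)
    have h2 := norm_sub_lt_of_norm_deriv_le (κ := fun t => L t - t) (c := t₀) (C := D / c₀)
      (hΛd.mono ((h7.trans (ball_subset_ball (by linarith))).trans hball₀))
      (fun t ht => h1 t (h7 ht)) (by rw [div_lt_one (by linarith)]; linarith)
    rw [hper t₀ ht₀m] at h2
    have h3 : L t₀ - (t₀ + 2 * Real.pi * Complex.I) - (L t₀ - t₀) =
        ((-(2 * Real.pi) : ℝ) : ℂ) * Complex.I := by push_cast; ring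
    rw [h3, norm_mul, Complex.norm_I, mul_one, Complex.norm_real, norm_neg,
      Real.norm_of_nonneg Real.two_pi_pos.le] at h2
    exact lt_irrefl _ h2
  obtain ⟨s, hs, hs_abs⟩ : ∃ s : ℝ, (s = 1 ∨ s = -1) ∧ |(L t₀ - t₀).re| = s * (L t₀ - t₀).re := by
    rcases abs_choice (L t₀ - t₀).re with e | e
    · exact ⟨1, Or.inl rfl, by rw [e, one_mul]⟩
    · exact ⟨-1, Or.inr rfl, by rw [e, neg_one_mul]⟩
  have hs1 : ‖(s : ℂ)‖ = 1 := by rcases hs with rfl | rfl <;> simp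
  have hHar' : ∀ c R, ball c R ⊆ Complex.re ⁻¹' Ioo u v → A' < s * (L c - c).re →
      ∀ z ∈ ball c (R / 4), ‖(L z - z) - (L c - c)‖ ≤
        2 * (s * (L c - c).re) * dist z c / (R / 4 - dist z c) := by
    intro c R hb hc z hz
    have := hHar c R (fun t => s * (L t - t)) ((hΛd.mono hb).const_mul _) (fun t ht e => by
      rcases hs with rfl | rfl
      · rw [Complex.ofReal_one, one_mul] at e
        exact hne1 t (hb ht) e
      · rw [Complex.ofReal_neg, Complex.ofReal_one, neg_one_mul, Complex.exp_neg, inv_eq_one] at e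
        exact hne1 t (hb ht) e) (by rwa [Complex.re_ofReal_mul]) z hz
    rwa [← mul_sub, norm_mul, hs1, one_mul, Complex.re_ofReal_mul] at this
  set ell := s * (L t₀ - t₀).re with hell
  rw [hs_abs] at hlarge
  have hA'C0 : 0 < A' * C := by positivity
  have hell' : ell = s * (Real.log ‖shiftedIterate F q a (n + 1) x‖ -
      Real.log ‖shiftedIterate F q a n x‖) := by
    rw [hell, Complex.sub_re, ← ht₁, hre₁, hre₀]
  obtain ⟨hu₁, hv₁⟩ := hlt u v hann n x (h.K_subset_V hx) _ hg (by linarith) (by linarith) (by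
    rw [← hre₀, ← hre₁', abs_sub_comm, ← Complex.sub_re, hs_abs]
    linarith [abs_nonneg A])
  rw [← hre₁'] at hu₁ hv₁
  have hball₁ : ball t₁ 140 ⊆ Complex.re ⁻¹' Ioo u v := ball_subset_strip hu₁ hv₁
  have ht₁m : t₁ ∈ Complex.re ⁻¹' Ioo u v := hball₁ (mem_ball_self (by norm_num))
  have hreL₁ : (L t₁).re = Real.log ‖shiftedIterate F q a (n + 1) ((finMap F)^[q] x)‖ := by
    have : Complex.exp (L t₁) = shiftedIterate F q a (n + 1) ((finMap F)^[q] x) := by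
      rw [hexp t₁ ht₁m, he₁, ← shiftedIterate_succ', shiftedIterate_succ (n + 1)]
    rw [← this, Complex.norm_exp, Real.log_exp]
  set ell₁ := s * (L t₁ - t₁).re with hell₁
  have hcomp : ell ≤ C * ell₁ := by
    have := hCA n s hs x (h.K_subset_V hx) _ hg (by
      rw [← hell']
      linarith [le_abs_self A])
    rwa [← hell', ← hreL₁, ← hre₁', ← Complex.sub_re] at this
  have hA'1 : A' < ell₁ := by
    have : A' * C < ell₁ * C := by linarith [abs_nonneg A]
    exact lt_of_mul_lt_mul_right this (by linarith)
  have hnorm : ell₁ ≤ ‖L t₁ - t₁‖ := by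
    have := Complex.abs_re_le_norm (s * (L t₁ - t₁))
    rw [norm_mul, hs1, one_mul, Complex.re_ofReal_mul] at this
    exact (le_abs_self _).trans this
  have hquot : ∀ R y d : ℝ, 28 < R → 0 ≤ y → 0 ≤ d → d ≤ 7 →
      2 * y * d / (R / 4 - d) ≤ 2 * y * 7 / (R / 4 - 7) := by
    intro R y d hR hy hd hd7
    have : 0 < R / 4 - 7 := by linarith
    gcongr
  have hfinal := norm_le_of_forall_norm_sub_le hL hper ht₀m ht₁m (b := L t₁ - t₁)
    (B := 2 * ell * 7 / (c₀ / 4 - 7) + 2 * ell₁ * 7 / (140 / 4 - 7)) fun θ hθ => by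
      have h7 : ∀ t : ℂ, dist (t + θ * Complex.I) t ≤ 7 := fun t => by
        rw [dist_eq_norm, add_sub_cancel_left]
        exact norm_mul_I_lt hθ
      have b0 := (hHar' t₀ c₀ hball₀ (by linarith [abs_nonneg A]) (t₀ + θ * Complex.I)
        ((h7 t₀).trans_lt (by linarith))).trans
          (hquot _ _ _ (by linarith) (by linarith [abs_nonneg A]) dist_nonneg (h7 t₀))
      have b1 := (hHar' t₁ 140 hball₁ hA'1 (t₁ + θ * Complex.I)
        ((h7 t₁).trans_lt (by norm_num))).trans
          (hquot _ _ _ (by norm_num) (by linarith) dist_nonneg (h7 t₁))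
      have e : L (t₀ + θ * Complex.I) - L (t₁ + θ * Complex.I) + (L t₁ - t₁) =
          (L (t₀ + θ * Complex.I) - (t₀ + θ * Complex.I) - (L t₀ - t₀)) -
          (L (t₁ + θ * Complex.I) - (t₁ + θ * Complex.I) - (L t₁ - t₁)) := by
        rw [← ht₁]; ring
      rw [e]
      exact (norm_sub_le _ _).trans (add_le_add b0 b1)
  have hle : 2 * ell * 7 / (c₀ / 4 - 7) < ell₁ / 2 := by
    have hpos : 0 < c₀ / 4 - 7 := by linarith
    rw [div_lt_iff₀ hpos]
    have h1 : 0 < ell₁ := by linarith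
    have : 0 < ell₁ * (28 + D / 4) := by positivity
    have e : c₀ / 4 - 7 = 28 + D / 4 + 28 * C := by rw [hc₀]; ring
    rw [e]
    linarith
  have h14 : 2 * ell₁ * 7 / (140 / 4 - 7) = ell₁ / 2 := by ring
  linarith

/-- Wide annuli far away from the origin meet the complement of the Baker domain or the
postsingular set. -/
theorem exists_notMem_or_mem_postsingular (h : IsBakerFrame F W q a x₀ K V r)
    {S : Set (OnePoint ℂ)} (hS : MeroSingularSet F univ S) :
    ∃ c₀ : ℝ, 0 < c₀ ∧ ∃ R : ℝ, ∀ ρ ≥ R, ∃ z : ℂ, ρ * Real.exp (-c₀) < ‖z - a‖ ∧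
      ‖z - a‖ < ρ * Real.exp c₀ ∧ (z ∉ W ∨ (z : OnePoint ℂ) ∈ MeroPostsingular F univ S) := by
  obtain ⟨j₁, hj₁, hja⟩ : ∃ j₁ ∉ W, j₁ ≠ a := by
    by_contra! hcon
    exact h.not_isBounded_compl ((Bornology.isBounded_singleton (x := a)).subset hcon)
  have hj0 : 0 < ‖j₁ - a‖ := norm_pos_iff.2 (sub_ne_zero.2 hja)
  obtain ⟨M, hM0, hM⟩ := h.exists_norm_deriv_le 1
  obtain ⟨c₁, hc₁⟩ := h.exists_small_lift hS hj₁ hja (η := 1 / (2 * M)) (by positivity)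
  obtain ⟨c₂, hc₂, hnot⟩ := h.exists_not_periodic
  set c₀ := max c₁ c₂ with hc₀
  have hc₀0 : 0 < c₀ := hc₂.trans_le (le_max_right _ _)
  refine ⟨c₀, hc₀0, max ‖shiftedIterate F q a 0 x₀‖ (‖j₁ - a‖ * Real.exp c₀), fun ρ hρ => ?_⟩
  by_contra! hcon
  obtain ⟨n, x, hx, hnx⟩ := h.exists_norm_eq ((le_max_left _ _).trans hρ)
  have hρj : ‖j₁ - a‖ * Real.exp c₀ ≤ ρ := (le_max_right _ _).trans hρ
  have hρ0 : 0 < ρ := by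
    rw [← hnx]
    exact norm_pos_iff.2 (h.shiftedIterate_ne_zero n (h.K_subset hx))
  have hexp : ∀ s, Real.exp (Real.log ρ + s) = ρ * Real.exp s := fun s => by
    rw [Real.exp_add, Real.exp_log hρ0]
  obtain ⟨u, v, hA, hu, hv⟩ := exists_isFullAnnulus h.isOpen h.not_isBounded_compl hj₁ hja
    (σ := Real.log ρ) (c := c₀) (by
      rwa [sub_eq_add_neg (Real.log ρ), hexp, Real.exp_neg, ← div_eq_mul_inv,
        le_div_iff₀ (Real.exp_pos _)])
    (fun z h1 h2 => by
      rw [sub_eq_add_neg (Real.log ρ), hexp] at h1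
      rw [hexp] at h2
      exact (hcon z h1 h2).1)
  have hxu : Real.exp u < ‖shiftedIterate F q a n x‖ := by
    rw [hnx, ← Real.lt_log_iff_exp_lt hρ0]
    linarith
  have hxv : ‖shiftedIterate F q a n x‖ < Real.exp v := by
    rw [hnx, ← Real.log_lt_iff_lt_exp hρ0]
    linarith
  obtain ⟨L, e, hL, hLexp, hLe⟩ := h.exists_log hA (t₀ := (Real.log ρ : ℂ))
    (by rw [mem_preimage, Complex.ofReal_re]; constructor <;> linarith)
  obtain ⟨Ψ, hΨ, hΨx, hΨη, hΨn⟩ := hc₁ n x hx fun t ht => by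
    have h1 := abs_le.1 (Complex.abs_re_le_norm t)
    have h2 : ‖t‖ < c₀ := (mem_ball_zero_iff.1 ht).trans_le (le_max_left _ _)
    have h3 : ‖a + shiftedIterate F q a n x * Complex.exp t - a‖ = ρ * Real.exp t.re := by
      rw [add_sub_cancel_left, norm_mul, hnx, Complex.norm_exp]
    exact hcon _ (by rw [h3]; gcongr; linarith) (by rw [h3]; gcongr; linarith)
  have he := h.winding_eq_zero hM hM0.le (by field_simp; norm_num) hA hL hLexp hLe hx hxu hxv
    hΨ hΨx hΨη hΨn
  have hmax := le_max_right c₁ c₂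
  refine hnot u v hA n x hx (by rw [hnx]; linarith) (by rw [hnx]; linarith) L hL hLexp
    fun t ht => ?_
  have := hLe 1 t ht
  rw [he, zero_mul, Int.cast_zero, zero_mul, add_zero, Int.cast_one, one_mul] at this
  exact this

/-- The postsingular set meets all annuli of a fixed large modulus close to the Baker
domain. -/
theorem exists_postsingular (h : IsBakerFrame F W q a x₀ K V r)
    {S : Set (OnePoint ℂ)} (hS : MeroSingularSet F univ S) :
    ∃ C : ℝ, 1 < C ∧ ∀ ε > 0, ∃ R₀ : ℝ, ∀ R ≥ R₀, ∃ p : ℂ,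
      (p : OnePoint ℂ) ∈ MeroPostsingular F univ S ∧ R ≤ ‖p - a‖ ∧ ‖p - a‖ ≤ C * R ∧
        infDist p W ≤ ε * ‖p - a‖ := by
  obtain ⟨c₀, hc₀, R₁, hR₁⟩ := h.exists_notMem_or_mem_postsingular hS
  refine ⟨Real.exp (2 * c₀ + 2), Real.one_lt_exp_iff.2 (by linarith), fun ε hε => ?_⟩
  set δ := min (1 / 2) (ε / 4) with hδ
  have hδ0 : 0 < δ := lt_min (by norm_num) (by linarith)
  have hδ1 : δ ≤ 1 / 2 := min_le_left _ _
  have hδε : 4 * δ ≤ ε := by linarith [min_le_right (1 / 2) (ε / 4)]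
  obtain ⟨R₂, hR₂⟩ := h.exists_postsingular_of_norm_eq hS hδ0 hδ1
  refine ⟨max (max R₁ R₂) 1, fun R hR => ?_⟩
  have hRR₁ : R₁ ≤ R := (le_max_left _ _).trans ((le_max_left _ _).trans hR)
  have hRR₂ : R₂ ≤ R := (le_max_right _ _).trans ((le_max_left _ _).trans hR)
  have hR0 : 0 < R := by linarith [(le_max_right (max R₁ R₂) 1).trans hR]
  have hle : R ≤ R * Real.exp (c₀ + 1) := le_mul_of_one_le_right hR0.le
    (Real.one_le_exp (by linarith))
  obtain ⟨z, hz1, hz2, hz⟩ := hR₁ (R * Real.exp (c₀ + 1)) (hRR₁.trans hle)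
  rw [mul_assoc, ← Real.exp_add] at hz1 hz2
  have hlow : R * Real.exp δ ≤ ‖z - a‖ :=
    (mul_le_mul_of_nonneg_left (Real.exp_le_exp.2 (by linarith)) hR0.le).trans hz1.le
  have hRz : R ≤ ‖z - a‖ :=
    (le_mul_of_one_le_right hR0.le (Real.one_le_exp hδ0.le)).trans hlow
  have hup : ‖z - a‖ * Real.exp δ ≤ Real.exp (2 * c₀ + 2) * R := by
    calc ‖z - a‖ * Real.exp δ ≤ R * Real.exp (c₀ + 1 + c₀) * Real.exp δ := by gcongr
      _ = Real.exp (c₀ + 1 + c₀ + δ) * R := by rw [mul_assoc, ← Real.exp_add, mul_comm]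
      _ ≤ _ := mul_le_mul_of_nonneg_right (Real.exp_le_exp.2 (by linarith)) hR0.le
  by_cases hzW : z ∈ W
  · exact ⟨z, hz.resolve_left (not_not.2 hzW), hRz,
      (le_mul_of_one_le_right (norm_nonneg _) (Real.one_le_exp hδ0.le)).trans hup, by
        rw [infDist_zero_of_mem hzW]; positivity⟩
  · obtain ⟨p, hp, hp1, hp2, hp3⟩ := hR₂ ‖z - a‖ (hRR₂.trans hRz) z hzW rfl
    refine ⟨p, hp, le_trans ?_ hp1, hp2.trans hup,
      hp3.trans (mul_le_mul_of_nonneg_right hδε (norm_nonneg _))⟩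
    calc R = R * Real.exp δ * Real.exp (-δ) := by
          rw [mul_assoc, ← Real.exp_add, add_neg_cancel, Real.exp_zero, mul_one]
      _ ≤ _ := by gcongr

end IsBakerFrame

/-- Extraction of a sequence of geometric growth along which a nonnegative function tends
to `0`. -/
theorem exists_seq_of_forall_exists {P : ℂ → Prop} {d : ℂ → ℝ} (hd : ∀ p, 0 ≤ d p) {a : ℂ} {C : ℝ}
    (hC : 1 < C) (h : ∀ ε > 0, ∃ R₀ : ℝ, ∀ R ≥ R₀, ∃ p, P p ∧ R ≤ ‖p - a‖ ∧ ‖p - a‖ ≤ C * R ∧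
      d p ≤ ε * ‖p - a‖) :
    ∃ s : ℕ → ℂ, (∀ n, P (s n)) ∧ Tendsto (fun n => ‖s n‖) atTop atTop ∧
      (∃ C : ℝ, ∀ n, ‖s (n + 1)‖ / ‖s n‖ ≤ C) ∧
      Tendsto (fun n => d (s n) / ‖s n‖) atTop (𝓝 0) := by
  obtain ⟨R₁, hR₁⟩ := h 1 one_pos
  set T := max R₁ (2 * ‖a‖ + 1) with hT
  have hTa : 2 * ‖a‖ + 1 ≤ T := le_max_right _ _
  have hT0 : 0 < T := by linarith [norm_nonneg a]
  have hCn : ∀ n : ℕ, T ≤ T * C ^ n := fun n => le_mul_of_one_le_right hT0.le (one_le_pow₀ hC.le)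
  have hex : ∀ n : ℕ, ∃ p, P p ∧ (T * C ^ n ≤ ‖p - a‖ ∧ ‖p - a‖ ≤ C * (T * C ^ n)) ∧
      ∀ p', P p' → T * C ^ n ≤ ‖p' - a‖ → ‖p' - a‖ ≤ C * (T * C ^ n) →
        d p / ‖p - a‖ < d p' / ‖p' - a‖ + 1 / ((n : ℝ) + 1) := by
    intro n
    obtain ⟨p₀, hp₀, hp₁, hp₂, -⟩ := hR₁ (T * C ^ n) ((le_max_left _ _).trans (hCn n))
    set Z := {p | P p ∧ T * C ^ n ≤ ‖p - a‖ ∧ ‖p - a‖ ≤ C * (T * C ^ n)}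
    have hbdd : BddBelow ((fun p => d p / ‖p - a‖) '' Z) := ⟨0, by
      rintro _ ⟨p, -, rfl⟩
      exact div_nonneg (hd p) (norm_nonneg _)⟩
    obtain ⟨_, ⟨p, hp, rfl⟩, hlt⟩ := exists_lt_of_csInf_lt
      (s := (fun p => d p / ‖p - a‖) '' Z) ⟨_, mem_image_of_mem _ ⟨hp₀, hp₁, hp₂⟩⟩
      (lt_add_of_pos_right _ (by positivity : 0 < 1 / ((n : ℝ) + 1)))
    refine ⟨p, hp.1, hp.2, fun p' h1 h2 h3 => hlt.trans_le ?_⟩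
    gcongr
    exact csInf_le hbdd (mem_image_of_mem _ ⟨h1, h2, h3⟩)
  choose s hsP hs hsmin using hex
  have hlow : ∀ n, ‖s n - a‖ ≤ 2 * ‖s n‖ := fun n => by
    have := norm_sub_le (s n) a
    linarith [hCn n, (hs n).1, norm_nonneg a]
  have hup : ∀ n, ‖s n‖ ≤ 2 * ‖s n - a‖ := fun n => by
    have := norm_le_norm_add_norm_sub' (s n) a
    linarith [hCn n, (hs n).1, norm_nonneg a]
  have hpos : ∀ n, 0 < ‖s n - a‖ := fun n => hT0.trans_le ((hCn n).trans (hs n).1)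
  have hpos' : ∀ n, 0 < ‖s n‖ := fun n => by linarith [hlow n, hpos n]
  have hCT : Tendsto (fun n : ℕ => T * C ^ n) atTop atTop :=
    (tendsto_pow_atTop_atTop_of_one_lt hC).const_mul_atTop hT0
  refine ⟨s, hsP, ?_, ⟨4 * C ^ 2, fun n => ?_⟩, ?_⟩
  · refine tendsto_atTop_mono (fun n => ?_) (hCT.atTop_div_const two_pos)
    linarith [hlow n, (hs n).1]
  · rw [div_le_iff₀ (hpos' n)]
    calc ‖s (n + 1)‖ ≤ 2 * (C * (T * C ^ (n + 1))) :=
          (hup _).trans (mul_le_mul_of_nonneg_left (hs _).2 two_pos.le)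
      _ = 2 * C ^ 2 * (T * C ^ n) := by ring
      _ ≤ 2 * C ^ 2 * (2 * ‖s n‖) := 
          mul_le_mul_of_nonneg_left ((hs n).1.trans (hlow n)) (by positivity)
      _ = _ := by ring
  · have hmain : Tendsto (fun n => d (s n) / ‖s n - a‖) atTop (𝓝 0) := by
      rw [Metric.tendsto_nhds]
      intro ε hε
      obtain ⟨R₀, hR₀⟩ := h (ε / 2) (by linarith)
      have h1 := tendsto_one_div_add_atTop_nhds_zero_nat.eventually
        (gt_mem_nhds (by linarith : 0 < ε / 2))
      filter_upwards [hCT.eventually_ge_atTop R₀, h1] with n hn hn'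
      obtain ⟨p, hp, hp1, hp2, hp3⟩ := hR₀ _ hn
      have h2 := hsmin n p hp hp1 hp2
      have h3 : d p / ‖p - a‖ ≤ ε / 2 := div_le_of_le_mul₀ (norm_nonneg _) (by linarith) hp3
      rw [Real.dist_eq, sub_zero, abs_of_nonneg (div_nonneg (hd _) (norm_nonneg _))]
      linarith
    refine squeeze_zero (fun n => div_nonneg (hd _) (norm_nonneg _)) (fun n => ?_)
      (by simpa using hmain.const_mul 2)
    rw [div_le_iff₀ (hpos' n)]
    calc d (s n) = d (s n) / ‖s n - a‖ * ‖s n - a‖ := by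
          rw [div_mul_cancel₀ _ (hpos n).ne']
      _ ≤ d (s n) / ‖s n - a‖ * (2 * ‖s n‖) := by
          gcongr
          exacts [div_nonneg (hd _) (norm_nonneg _), hlow n]
      _ = _ := by ring

theorem IsBakerDomain.exists_seq_postsingular {F : ℂ → OnePoint ℂ} {W : Set ℂ} {q : ℕ}
    (h : IsBakerDomain F W q) {S : Set (OnePoint ℂ)} (hS : MeroSingularSet F univ S) :
    ∃ s : ℕ → ℂ, (∀ n, (s n : OnePoint ℂ) ∈ MeroPostsingular F univ S) ∧
      Tendsto (fun n => ‖s n‖) atTop atTop ∧ (∃ C : ℝ, ∀ n, ‖s (n + 1)‖ / ‖s n‖ ≤ C) ∧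
      Tendsto (fun n => infDist (s n) W / ‖s n‖) atTop (𝓝 0) := by
  obtain ⟨a, ha⟩ := (ne_univ_iff_exists_notMem _).1 h.ne_univ
  obtain ⟨x₀, K, V, r, hf⟩ := h.exists_frame ha
  obtain ⟨C, hC, hCp⟩ := hf.exists_postsingular hS
  exact exists_seq_of_forall_exists (P := fun p => (p : OnePoint ℂ) ∈ MeroPostsingular F univ S)
    (d := fun p => infDist p W) (fun _ => infDist_nonneg) hC hCp

theorem chordalDist_coe_infty (z : ℂ) :
    chordalDist z OnePoint.infty = 2 / Real.sqrt (1 + ‖z‖ ^ 2) := rfl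

theorem lt_norm_of_chordalDist_lt {z : ℂ} {R : ℝ}
    (h : chordalDist z OnePoint.infty < 2 / (1 + |R|)) : R < ‖z‖ := by
  by_contra! hcon
  refine h.not_ge ?_
  have hR := hcon.trans (le_abs_self R)
  rw [chordalDist_coe_infty]
  gcongr
  rw [Real.sqrt_le_left (by positivity)]
  nlinarith [norm_nonneg z]

theorem isBakerDomain_of_connectedComponentIn {F : ℂ → OnePoint ℂ}
    (hmero : ∀ z : ℂ, SphereMeroAt F z)
    (htrans : ¬∃ g : OnePoint ℂ → OnePoint ℂ, SphereAnalyticAt g OnePoint.infty ∧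
      ∃ r : ℝ, ∀ z : ℂ, r < ‖z‖ → g ((z : OnePoint ℂ)) = F z)
    {W : Set ℂ}
    (hWcomp : ∃ z ∈ MeroFatou F univ, W = connectedComponentIn (MeroFatou F univ) z)
    {p : ℕ} (hp : 1 ≤ p)
    (hper : ∀ z ∈ W, (totalize F)^[p] ((z : OnePoint ℂ)) ∈ (fun t : ℂ => (t : OnePoint ℂ)) '' W)
    {k : ℕ} (hk : 1 ≤ k)
    (hBaker : ∀ K : Set ℂ, K ⊆ W → IsCompact K → ∀ ε > (0 : ℝ), ∃ N : ℕ, ∀ m ≥ N, ∀ z ∈ K,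
      chordalDist ((totalize F)^[m * k] ((z : OnePoint ℂ))) OnePoint.infty < ε) :
    IsBakerDomain F W (p * k) := by
  obtain ⟨z₀, hz₀, rfl⟩ := hWcomp
  have hsub := connectedComponentIn_subset (MeroFatou F univ) z₀
  have hiter : ∀ z ∈ connectedComponentIn (MeroFatou F univ) z₀, ∀ n,
      (totalize F)^[n] z = ((finMap F)^[n] z : ℂ) := fun z hz n =>
    totalize_iterate_coe (iterate_ne_infty_of_mem_meroFatou (hsub hz) n)
  refine
    { mero := hmero
      trans := htrans
      one_le := Nat.mul_pos hp hk
      nonempty := ⟨z₀, mem_connectedComponentIn hz₀⟩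
      isOpen := (isOpen_meroFatou F).connectedComponentIn
      isPreconnected := isPreconnected_connectedComponentIn
      subset_fatou := hsub
      subset_of_isPreconnected := ?_
      mapsTo := ?_
      escapes := ?_ }
  · rintro N hN hNF ⟨x, hxN, hxW⟩
    rw [connectedComponentIn_eq hxW]
    exact hN.subset_connectedComponentIn hxN hNF
  · rw [Function.iterate_mul]
    refine MapsTo.iterate (fun z hz => ?_) k
    obtain ⟨t, ht, e⟩ := hper z hz
    rw [hiter z hz] at e
    rwa [← OnePoint.coe_injective e]
  · intro K hK hKc R
    obtain ⟨N, hN⟩ := hBaker K hK hKc (2 / (1 + |R|)) (by positivity)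
    refine ⟨N, fun n hn z hz => ?_⟩
    have := hN (n * p) (hn.le.trans (Nat.le_mul_of_pos_right n hp)) z hz
    rw [hiter z (hK hz)] at this
    rw [← mul_assoc]
    exact lt_norm_of_chordalDist_lt this

/-- **Theorem (Statement 3, Baker domains of meromorphic functions).** Let `f : ℂ → Ĉ` be a
transcendental meromorphic function and let `W` be a Baker domain of `f` on which
`f^{nk}|_W → ∞` locally uniformly for some `k ≥ 1`. Then there is a sequence `(p_n)` in
`P(f) ∩ ℂ` with `|p_n| → ∞`, `sup_n |p_{n+1}|/|p_n| < ∞`, and `dist(p_n, W)/|p_n| → 0`. -/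
theorem baker_domain_postsingular
    (F : ℂ → OnePoint ℂ)
    (hmero : ∀ z : ℂ, SphereMeroAt F z)
    (htrans : ¬∃ g : OnePoint ℂ → OnePoint ℂ, SphereAnalyticAt g (∞ : OnePoint ℂ) ∧
      ∃ r : ℝ, ∀ z : ℂ, r < ‖z‖ → g ((z : OnePoint ℂ)) = F z)
    (S : Set (OnePoint ℂ)) (hS : MeroSingularSet F Set.univ S)
    (W : Set ℂ)
    (hWcomp : ∃ z ∈ MeroFatou F Set.univ,
      W = connectedComponentIn (MeroFatou F Set.univ) z)
    (p : ℕ) (hp : 1 ≤ p)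
    (hper : ∀ z ∈ W, (totalize F)^[p] ((z : OnePoint ℂ)) ∈
      (fun t : ℂ => (t : OnePoint ℂ)) '' W)
    (k : ℕ) (hk : 1 ≤ k)
    (hBaker : ∀ K : Set ℂ, K ⊆ W → IsCompact K → ∀ ε > (0 : ℝ), ∃ N : ℕ, ∀ m ≥ N, ∀ z ∈ K,
      chordalDist ((totalize F)^[m * k] ((z : OnePoint ℂ))) (∞ : OnePoint ℂ) < ε) :
    ∃ q : ℕ → ℂ,
      (∀ n : ℕ, ((q n : OnePoint ℂ)) ∈ MeroPostsingular F Set.univ S) ∧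
      Tendsto (fun n => ‖q n‖) atTop atTop ∧
      (∃ C : ℝ, ∀ n : ℕ, ‖q (n + 1)‖ / ‖q n‖ ≤ C) ∧
      Tendsto (fun n => infDist (q n) W / ‖q n‖) atTop (𝓝 0) := by
  exact (isBakerDomain_of_connectedComponentIn hmero htrans hWcomp hp hper hk
    hBaker).exists_seq_postsingular hS
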